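/- Let H : T*𝕋² → ℝ be a Tonelli Hamiltonian that has a C¹ weak K.A.M. solution u : 𝕋² → ℝ such that all critical points of H contained in the graph of du are hyperbolic fixed points of the Hamiltonian flow. Then u is upper Green regular. -/

import Mathlib

/-!
Throughout, the closed manifold `M = 𝕋^d = ℝ^d/ℤ^d` is modelled by `ℤ^d`-periodic
functions on `ℝ^d` (with the Euclidean structure), and its (co)tangent bundle
`T^*𝕋^d = 𝕋^d × ℝ^d` by `ℤ^d`-periodic (in the base variable) data on `ℝ^d × ℝ^d`.
-/

open scoped RealInnerProductSpace
open Filter MeasureTheory Metric Set Asymptotics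

noncomputable section

/-- The universal cover `ℝ^d` of the torus `𝕋^d`. -/
abbrev Euc (d : ℕ) : Type := EuclideanSpace ℝ (Fin d)

/-- The phase space `T^*𝕋^d`, modelled as `ℝ^d × ℝ^d` with `ℤ^d`-periodic data. -/
abbrev Phase (d : ℕ) : Type := Euc d × Euc d

/-- An integer vector, viewed in `ℝ^d`. -/
def intVec {d : ℕ} (k : Fin d → ℤ) : Euc d := WithLp.toLp 2 fun i => (k i : ℝ)

/-- `f` descends to the torus `𝕋^d = ℝ^d/ℤ^d`. -/
def PerFun {d : ℕ} {α : Type*} (f : Euc d → α) : Prop :=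
  ∀ (k : Fin d → ℤ) (x : Euc d), f (x + intVec k) = f x

/-- `H` descends to `T^*𝕋^d = 𝕋^d × ℝ^d`. -/
def PerPhase {d : ℕ} {α : Type*} (H : Phase d → α) : Prop :=
  ∀ (k : Fin d → ℤ) (q p : Euc d), H (q + intVec k, p) = H (q, p)

/-- Positive definiteness of the fiberwise Hessian. -/
def ConvexInFiber {d : ℕ} (H : Phase d → ℝ) : Prop :=
  ∀ q p v, v ≠ 0 → 0 < iteratedFDeriv ℝ 2 (fun p' => H (q, p')) p ![v, v]

/-- A `C²` Tonelli Hamiltonian on `T^*𝕋^d`. -/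
structure TonelliHam {d : ℕ} (H : Phase d → ℝ) : Prop where
  periodic : PerPhase H
  smooth : ContDiff ℝ 2 H
  convex : ConvexInFiber H
  superlinear : ∀ A : ℝ, ∃ B : ℝ, ∀ q p, A * ‖p‖ + B ≤ H (q, p)

/-- A `C²` Tonelli Lagrangian on `T𝕋^d`. -/
structure TonelliLag {d : ℕ} (L : Phase d → ℝ) : Prop where
  periodic : PerPhase L
  smooth : ContDiff ℝ 2 L
  convex : ConvexInFiber L
  superlinear : ∀ A : ℝ, ∃ B : ℝ, ∀ q v, A * ‖v‖ + B ≤ L (q, v)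

/-- The Lagrangian associated to `H` by Legendre duality. -/
def LegendreL {d : ℕ} (H : Phase d → ℝ) (x : Phase d) : ℝ :=
  sSup {r | ∃ p : Euc d, r = ⟪p, x.2⟫ - H (x.1, p)}

/-- The Mañé critical value `α(H)`. -/
def maneCritical {d : ℕ} (H : Phase d → ℝ) : ℝ :=
  sInf {c | ∃ u : Euc d → ℝ, ContDiff ℝ (⊤ : ℕ∞) u ∧ PerFun u ∧ ∀ q, H (q, gradient u q) ≤ c}

/-- The Mañé critical value `α(c)` of the cohomology class of the constant form `cf`. -/
def maneCriticalOf {d : ℕ} (H : Phase d → ℝ) (cf : Euc d) : ℝ :=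
  maneCritical fun x : Phase d => H (x.1, cf + x.2)

/-- `γ` is absolutely continuous on `[a,b]` with a.e. derivative `γ'`. -/
def ACOn {d : ℕ} (γ γ' : ℝ → Euc d) (a b : ℝ) : Prop :=
  IntervalIntegrable γ' volume a b ∧ ∀ t ∈ Icc a b, γ t = γ a + ∫ s in a..t, γ' s

/-- Values entering the (discounted, cohomologically twisted) Lax–Oleinik infimum. -/
def LOvals {d : ℕ} (L : Phase d → ℝ) (cf : Euc d) (av lam : ℝ) (u : Euc d → ℝ) (t : ℝ)
    (q : Euc d) : Set ℝ :=
  {r | ∃ γ γ' : ℝ → Euc d, ACOn γ γ' (-t) 0 ∧ γ 0 = q ∧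
     IntervalIntegrable (fun s => Real.exp (lam * s) * (L (γ s, γ' s) - ⟪cf, γ' s⟫ + av))
       volume (-t) 0 ∧
     r = Real.exp (-(lam * t)) * u (γ (-t)) +
         ∫ s in (-t)..0, Real.exp (lam * s) * (L (γ s, γ' s) - ⟪cf, γ' s⟫ + av)}

/-- The (discounted, twisted) Lax–Oleinik semigroup `T^{cf,λ}_t u (q)`. -/
def LaxOleinik {d : ℕ} (L : Phase d → ℝ) (cf : Euc d) (av lam : ℝ) (u : Euc d → ℝ) (t : ℝ)
    (q : Euc d) : ℝ :=
  sInf (LOvals L cf av lam u t q)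

/-- A weak K.A.M. solution: a fixed point of the Lax–Oleinik semigroup. -/
def IsWeakKAM {d : ℕ} (H : Phase d → ℝ) (u : Euc d → ℝ) : Prop :=
  Continuous u ∧ PerFun u ∧
    ∀ t > (0:ℝ), ∀ q, LaxOleinik (LegendreL H) 0 (maneCritical H) 0 u t q = u q

/-- A fixed point of the modified Lax–Oleinik semigroup `T^c_t` for the class `cf`. -/
def IsFixedPtModified {d : ℕ} (H : Phase d → ℝ) (cf : Euc d) (u : Euc d → ℝ) : Prop :=
  Continuous u ∧ PerFun u ∧
    ∀ t > (0:ℝ), ∀ q, LaxOleinik (LegendreL H) cf (maneCriticalOf H cf) 0 u t q = u q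

/-- The discounted solution `u_λ` of `λu + H(x,du) = α(H)`, via its variational formula. -/
def IsDiscountedSol {d : ℕ} (H : Phase d → ℝ) (lam : ℝ) (u : Euc d → ℝ) : Prop :=
  Continuous u ∧ PerFun u ∧
    ∀ q, u q = sInf {r | ∃ γ γ' : ℝ → Euc d, (∀ a ≤ (0:ℝ), ACOn γ γ' a 0) ∧ γ 0 = q ∧
      IntegrableOn (fun s => Real.exp (lam * s) * (LegendreL H (γ s, γ' s) + maneCritical H))
        (Iic 0) volume ∧
      r = ∫ s in Iic (0:ℝ), Real.exp (lam * s) * (LegendreL H (γ s, γ' s) + maneCritical H)}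

/-- The `λ`-discounted Hamiltonian vector field `(∂H/∂p, -∂H/∂q - λp)`. -/
def hamVF {d : ℕ} (H : Phase d → ℝ) (lam : ℝ) (x : Phase d) : Phase d :=
  (gradient (fun p => H (x.1, p)) x.2, -gradient (fun q => H (q, x.2)) x.1 - lam • x.2)

/-- `φ` is the (conformally) Hamiltonian flow of equation (1) for `(H, λ)`. -/
def IsConformalFlow {d : ℕ} (H : Phase d → ℝ) (lam : ℝ) (φ : ℝ → Phase d → Phase d) : Prop :=
  (∀ x, φ 0 x = x) ∧ (∀ s t x, φ s (φ t x) = φ (s + t) x) ∧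
    ∀ x t, HasDerivAt (fun τ => φ τ x) (hamVF H lam (φ t x)) t

/-- The vertical subspace `V = ker Dπ`. -/
def Vert (d : ℕ) : Submodule ℝ (Phase d) :=
  Submodule.prod (⊥ : Submodule ℝ (Euc d)) (⊤ : Submodule ℝ (Euc d))

/-- The image `Dφ_t(y) V(y)` of the vertical at `y` by the linearized flow. -/
def pushV {d : ℕ} (φ : ℝ → Phase d → Phase d) (t : ℝ) (y : Phase d) : Submodule ℝ (Phase d) :=
  Submodule.map (fderiv ℝ (φ t) y).toLinearMap (Vert d)

/-- `G_t(x) = Dφ_t V(φ_{-t} x)`. -/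
def GreenT {d : ℕ} (φ : ℝ → Phase d → Phase d) (t : ℝ) (x : Phase d) : Submodule ℝ (Phase d) :=
  pushV φ t (φ (-t) x)

/-- The piece of orbit `(φ_t x)_{t ∈ I}` has no conjugate points. -/
def NoConjPts {d : ℕ} (φ : ℝ → Phase d → Phase d) (x : Phase d) (I : Set ℝ) : Prop :=
  ∀ s ∈ I, ∀ t ∈ I, s ≠ t → pushV φ (t - s) (φ s x) ⊓ Vert d = ⊥

/-- `S` is the height `ℋ(G)` of the Lagrangian subspace `G`:
`G` is the graph `{(δθ, S δθ)}` of the symmetric map `S`. -/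
def IsHeight {d : ℕ} (G : Submodule ℝ (Phase d)) (S : Euc d →L[ℝ] Euc d) : Prop :=
  (∀ v w, ⟪S v, w⟫ = ⟪v, S w⟫) ∧ G = LinearMap.graph (S : Euc d →ₗ[ℝ] Euc d)

open Classical in
/-- The height of a subspace transverse to the vertical (junk value `0` otherwise). -/
def heightOf {d : ℕ} (G : Submodule ℝ (Phase d)) : Euc d →L[ℝ] Euc d :=
  if h : ∃ S, IsHeight G S then h.choose else 0

/-- Order of symmetric operators as quadratic forms. -/
def SymLE {d : ℕ} (S T : Euc d →L[ℝ] Euc d) : Prop := ∀ v, ⟪S v, v⟫ ≤ ⟪T v, v⟫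

/-- Strict order of symmetric operators as quadratic forms (positive definite difference). -/
def SymLT {d : ℕ} (S T : Euc d →L[ℝ] Euc d) : Prop := ∀ v, v ≠ 0 → ⟪S v, v⟫ < ⟪T v, v⟫

/-- `u` has (Alexandrov) derivative `p` and second derivative `S` at `θ`. -/
def HasAlexandrovAt {d : ℕ} (u : Euc d → ℝ) (p : Euc d) (S : Euc d →L[ℝ] Euc d)
    (θ : Euc d) : Prop :=
  HasGradientAt u p θ ∧
    (fun y => u y - u θ - ⟪p, y - θ⟫ - (1/2) * ⟪S (y - θ), y - θ⟫)
      =o[nhds θ] fun y => ‖y - θ‖ ^ 2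

open Classical in
/-- The Alexandrov second derivative `D²u(θ)` (junk value `0` where it does not exist). -/
def D2 {d : ℕ} (u : Euc d → ℝ) (θ : Euc d) : Euc d →L[ℝ] Euc d :=
  if h : ∃ pS : Euc d × (Euc d →L[ℝ] Euc d), HasAlexandrovAt u pS.1 pS.2 θ then h.choose.2 else 0

/-- `‖S‖ = sup_{‖v‖=1} |S(v,v)|`. -/
def qNorm {d : ℕ} (S : Euc d →L[ℝ] Euc d) : ℝ :=
  ⨆ v : (sphere (0 : Euc d) 1 : Set (Euc d)), |⟪S v.1, v.1⟫|

/-- A fundamental domain of `𝕋^d` in `ℝ^d`. -/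
def fundCube (d : ℕ) : Set (Euc d) := {x | ∀ i, x i ∈ Ico (0:ℝ) 1}

/-- The distance `d_{2,1}(u,v) = ∫_{𝕋^d} ‖D²u - D²v‖`. -/
def d21 {d : ℕ} (u v : Euc d → ℝ) : ℝ := ∫ θ in fundCube d, qNorm (D2 u θ - D2 v θ)

/-- Semi-concavity. -/
def SemiConcave {d : ℕ} (u : Euc d → ℝ) : Prop :=
  ∃ K : ℝ, ∀ x, ∃ p, ∀ y, u y ≤ u x + ⟪p, y - x⟫ + K * ‖y - x‖ ^ 2

/-- `u` is upper Green regular: at Lebesgue-a.e. `θ`, `ℋ(G₊(θ, du(θ))) = D²u(θ)`. -/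
def UpperGreenRegular {d : ℕ} (φ : ℝ → Phase d → Phase d) (u : Euc d → ℝ) : Prop :=
  ∀ᵐ θ ∂(volume : Measure (Euc d)), ∃ p S, HasGradientAt u p θ ∧
    (∀ t > (0:ℝ), ∃ S', IsHeight (GreenT φ t (θ, p)) S') ∧
    Tendsto (fun t : ℝ => heightOf (GreenT φ t (θ, p))) atTop (nhds S) ∧
    HasAlexandrovAt u p S θ

/-- The graph `𝒢(du) ⊂ T^*𝕋^d` of the differential of `u`. -/
def gradGraph {d : ℕ} (u : Euc d → ℝ) : Set (Phase d) := {x | HasGradientAt u x.2 x.1}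

/-- The graph `𝒢(η_c + du)` where `η_c` is the constant form `cf`. -/
def gradGraphShift {d : ℕ} (cf : Euc d) (u : Euc d → ℝ) : Set (Phase d) :=
  {x | ∃ p, HasGradientAt u p x.1 ∧ x.2 = cf + p}

/-- `x` is a hyperbolic fixed point of the flow `φ`. -/
def IsHyperbolicFixedPt {d : ℕ} (φ : ℝ → Phase d → Phase d) (x : Phase d) : Prop :=
  (∀ t : ℝ, φ t x = x) ∧
  ∃ (Es Eu : Submodule ℝ (Phase d)), IsCompl Es Eu ∧
    ∃ (Cc μ : ℝ), 0 < Cc ∧ 0 < μ ∧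
      (∀ v ∈ Es, ∀ t : ℝ, 0 ≤ t →
        ‖fderiv ℝ (φ t) x v‖ ≤ Cc * Real.exp (-μ * t) * ‖v‖) ∧
      (∀ v ∈ Eu, ∀ t : ℝ, 0 ≤ t →
        ‖fderiv ℝ (φ (-t)) x v‖ ≤ Cc * Real.exp (-μ * t) * ‖v‖)

namespace KAM

/-- symplectic form -/
def om {d : ℕ} (z z' : Phase d) : ℝ := ⟪z.1, z'.2⟫ - ⟪z.2, z'.1⟫

section calculus
variable {d : ℕ} {H : Phase d → ℝ}

lemma inner_gradient {g : Euc d → ℝ} {x : Euc d} (hg : DifferentiableAt ℝ g x) (v : Euc d) :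
    ⟪gradient g x, v⟫ = fderiv ℝ g x v := by
  have := hg.hasGradientAt.hasFDerivAt.fderiv
  rw [this]; simp

lemma ham_fst (hs : ContDiff ℝ 2 H) (x : Phase d) (b : Euc d) :
    ⟪(hamVF H 0 x).1, b⟫ = fderiv ℝ H x (0, b) := by
  have hd : DifferentiableAt ℝ H x := (hs.differentiable (by norm_num)) x
  have h1 : HasFDerivAt (fun p => H (x.1, p)) ((fderiv ℝ H x).comp (ContinuousLinearMap.inr ℝ _ _)) x.2 := by
    have := hd.hasFDerivAt
    exact HasFDerivAt.comp (f := fun p : Euc d => (x.1, p)) x.2 this (hasFDerivAt_prodMk_right x.1 x.2)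
  simp only [hamVF]
  rw [inner_gradient h1.differentiableAt, h1.fderiv]; simp

lemma ham_snd (hs : ContDiff ℝ 2 H) (x : Phase d) (a : Euc d) :
    ⟪(hamVF H 0 x).2, a⟫ = - fderiv ℝ H x (a, 0) := by
  have hd : DifferentiableAt ℝ H x := (hs.differentiable (by norm_num)) x
  have h1 : HasFDerivAt (fun q => H (q, x.2)) ((fderiv ℝ H x).comp (ContinuousLinearMap.inl ℝ _ _)) x.1 := by
    have := hd.hasFDerivAt
    exact HasFDerivAt.comp (f := fun q : Euc d => (q, x.2)) x.1 this (hasFDerivAt_prodMk_left x.1 x.2)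
  simp only [hamVF, zero_smul, sub_zero, inner_neg_left]
  rw [inner_gradient h1.differentiableAt, h1.fderiv]; simp

lemma fderiv_H_eq (hs : ContDiff ℝ 2 H) (x z : Phase d) :
    fderiv ℝ H x z = om (hamVF H 0 x) z := by
  have : z = (0, z.2) + (z.1, 0) := by simp
  rw [om, ham_fst hs, ham_snd hs, sub_neg_eq_add, ← map_add, ← this]

lemma ham_contDiff (hs : ContDiff ℝ 2 H) : ContDiff ℝ 1 (hamVF H 0) := by
  have h1 : ContDiff ℝ 1 (fderiv ℝ H) := hs.fderiv_right (by norm_num)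
  apply ContDiff.prodMk
  · rw [contDiff_euclidean]
    intro i
    have : (fun x : Phase d => (hamVF H 0 x).1 i) =
        fun x => fderiv ℝ H x (0, EuclideanSpace.single i (1:ℝ)) := by
      ext x; rw [← ham_fst hs, EuclideanSpace.inner_single_right]; simp
    change ContDiff ℝ 1 (fun x : Phase d => (hamVF H 0 x).1 i)
    rw [this]; exact h1.clm_apply contDiff_const
  · rw [contDiff_euclidean]
    intro i
    have : (fun x : Phase d => (hamVF H 0 x).2 i) =
        fun x => -fderiv ℝ H x (EuclideanSpace.single i (1:ℝ), 0) := by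
      ext x; rw [← ham_snd hs, EuclideanSpace.inner_single_right]; simp
    change ContDiff ℝ 1 (fun x : Phase d => (hamVF H 0 x).2 i)
    rw [this]; exact (h1.clm_apply contDiff_const).neg

lemma om_add_left (a b c : Phase d) : om (a + b) c = om a c + om b c := by
  simp [om, inner_add_left]; ring
lemma om_smul_left (r : ℝ) (a c : Phase d) : om (r • a) c = r * om a c := by
  simp [om, inner_smul_left]; ring
lemma om_swap (a c : Phase d) : om a c = - om c a := by
  simp only [om]; rw [real_inner_comm, real_inner_comm c.1 a.2]; ring

lemma om_hasFDerivAt {F : Type*} [NormedAddCommGroup F] [NormedSpace ℝ F]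
    {f : F → Phase d} {f' : F →L[ℝ] Phase d} {x : F}
    (hf : HasFDerivAt f f' x) (z : Phase d) :
    ∃ L : F →L[ℝ] ℝ, HasFDerivAt (fun y => om (f y) z) L x ∧ ∀ w, L w = om (f' w) z := by
  have h1 := hf.fst.inner ℝ (hasFDerivAt_const z.2 x)
  have h2 := hf.snd.inner ℝ (hasFDerivAt_const z.1 x)
  refine ⟨_, h1.sub h2, fun w => ?_⟩
  simp [om]

lemma fderiv2_eq (hs : ContDiff ℝ 2 H) (x w z : Phase d) :
    fderiv ℝ (fderiv ℝ H) x w z = om (fderiv ℝ (hamVF H 0) x w) z := by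
  have h1 : ContDiff ℝ 1 (fderiv ℝ H) := hs.fderiv_right (by norm_num)
  have h2 := ((h1.differentiable (by norm_num)) x).hasFDerivAt
  have h3 := (((ham_contDiff hs).differentiable (by norm_num)) x).hasFDerivAt
  obtain ⟨L, hL, hL'⟩ := om_hasFDerivAt h3 z
  have h4 : HasFDerivAt (fun y => fderiv ℝ H y z) ((fderiv ℝ (fderiv ℝ H) x).flip z) x := by
    have := h2.clm_apply (hasFDerivAt_const z x)
    rwa [ContinuousLinearMap.comp_zero, zero_add] at this
  have h5 : (fun y => fderiv ℝ H y z) = fun y => om (hamVF H 0 y) z := by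
    ext y; exact fderiv_H_eq hs y z
  rw [h5] at h4
  rw [← hL', h4.unique hL |>.symm]; simp

lemma om_symm (hs : ContDiff ℝ 2 H) (x w z : Phase d) :
    om (fderiv ℝ (hamVF H 0) x w) z = om (fderiv ℝ (hamVF H 0) x z) w := by
  rw [← fderiv2_eq hs, ← fderiv2_eq hs]
  have := (hs.contDiffAt (x := x)).isSymmSndFDerivAt (by simp)
  exact this w z

/-- `D²_{pp}H (b,b) > 0` -/
lemma ham_pp_pos (hs : ContDiff ℝ 2 H) (hc : ConvexInFiber H) (x : Phase d) (b : Euc d) (hb : b ≠ 0) :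
    0 < fderiv ℝ (fderiv ℝ H) x (0, b) (0, b) := by
  have h := hc x.1 x.2 b hb
  rw [iteratedFDeriv_two_apply] at h
  have hd : ∀ y, DifferentiableAt ℝ H y := fun y => (hs.differentiable (by norm_num)) y
  have h1 : ContDiff ℝ 1 (fderiv ℝ H) := hs.fderiv_right (by norm_num)
  have e : fderiv ℝ (fun p' => H (x.1, p')) = fun p => (fderiv ℝ H (x.1, p)).comp (ContinuousLinearMap.inr ℝ _ _) := by
    ext1 p
    exact (HasFDerivAt.comp (f := fun p : Euc d => (x.1, p)) p (hd (x.1, p)).hasFDerivAt (hasFDerivAt_prodMk_right x.1 p)).fderiv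
  rw [e] at h
  have h2 := ((h1.differentiable (by norm_num)) (x.1, x.2)).hasFDerivAt
  have h3 : HasFDerivAt (fun p => fderiv ℝ H (x.1, p)) ((fderiv ℝ (fderiv ℝ H) (x.1, x.2)).comp (ContinuousLinearMap.inr ℝ _ _)) x.2 :=
    HasFDerivAt.comp (f := fun p : Euc d => (x.1, p)) x.2 h2 (hasFDerivAt_prodMk_right x.1 x.2)
  have h4 := h3.clm_comp (hasFDerivAt_const (ContinuousLinearMap.inr ℝ (Euc d) (Euc d)) x.2)
  rw [h4.fderiv] at h
  simpa using h

end calculus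
end KAM

namespace KAM
section dyson
variable {𝔸 : Type*} [NormedRing 𝔸] [NormOneClass 𝔸] [NormedAlgebra ℝ 𝔸] [CompleteSpace 𝔸]

def dys (A : ℝ → 𝔸) : ℕ → ℝ → 𝔸
  | 0 => fun _ => 1
  | n + 1 => fun t => ∫ s in (0:ℝ)..t, A s * dys A n s

lemma dys_cont {A : ℝ → 𝔸} (hA : Continuous A) (n : ℕ) : Continuous (dys A n) := by
  induction n with
  | zero => exact continuous_const
  | succ n ih =>
    rw [continuous_iff_continuousAt]
    intro t
    exact ((hA.mul ih).integral_hasStrictDerivAt 0 t).hasDerivAt.continuousAt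

lemma dys_deriv {A : ℝ → 𝔸} (hA : Continuous A) (n : ℕ) (t : ℝ) :
    HasDerivAt (dys A (n+1)) (A t * dys A n t) t :=
  ((hA.mul (dys_cont hA n)).integral_hasStrictDerivAt 0 t).hasDerivAt

lemma dys_bound {A : ℝ → 𝔸} (hA : Continuous A) {K T : ℝ} (hK : 0 ≤ K)
    (hb : ∀ s, |s| ≤ T → ‖A s‖ ≤ K) (n : ℕ) (t : ℝ) (ht : |t| ≤ T) :
    ‖dys A n t‖ ≤ (K * |t|) ^ n / n.factorial := by
  induction n generalizing t with
  | zero => simp [dys]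
  | succ n ih =>
    have h1 := intervalIntegral.norm_integral_le_integral_norm_uIoc (μ := volume) (a := 0) (b := t)
      (f := fun s => A s * dys A n s)
    refine h1.trans ?_
    have h2 := integral_pow_abs_sub_uIoc (a := 0) (b := t) n
    simp only [sub_zero] at h2
    have h3 : ∫ s in uIoc 0 t, ‖A s * dys A n s‖ ≤
        ∫ s in uIoc 0 t, K ^ (n+1) / n.factorial * |s| ^ n := by
      have hi : ∀ g : ℝ → ℝ, Continuous g → IntegrableOn g (uIoc 0 t) :=
        fun g hg => intervalIntegrable_iff.1 (hg.intervalIntegrable 0 t)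
      apply setIntegral_mono_on
      · exact hi _ (hA.mul (dys_cont hA n)).norm
      · exact hi _ (by fun_prop)
      · exact measurableSet_uIoc
      · intro s hs
        have hs' : |s| ≤ T := by
          refine le_trans ?_ ht
          have := uIoc_subset_uIcc hs
          have := abs_sub_left_of_mem_uIcc this
          simpa using this
        calc ‖A s * dys A n s‖ ≤ ‖A s‖ * ‖dys A n s‖ := norm_mul_le _ _
          _ ≤ K * ((K * |s|) ^ n / n.factorial) := by
            gcongr
            · exact hb s hs'
            · exact ih s hs'
          _ = _ := by rw [mul_pow]; ring
    refine h3.trans (le_of_eq ?_)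
    rw [integral_const_mul, h2, Nat.factorial_succ]
    push_cast
    rw [mul_pow]
    field_simp

lemma exists_linear_sol {A : ℝ → 𝔸} (hA : Continuous A) :
    ∃ R : ℝ → 𝔸, R 0 = 1 ∧ ∀ t, HasDerivAt R (A t * R t) t := by
  refine ⟨fun t => 1 + ∑' n, dys A (n+1) t, by simp [dys], fun t => ?_⟩
  set T := |t| + 1
  obtain ⟨K, hK⟩ := (isCompact_Icc (a := -T) (b := T)).exists_bound_of_continuousOn hA.continuousOn
  have hb : ∀ s, |s| ≤ T → ‖A s‖ ≤ max K 0 := fun s hs =>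
    (hK s (abs_le.1 hs)).trans (le_max_left _ _)
  have hK0 : (0:ℝ) ≤ max K 0 := le_max_right _ _
  set K' := max K 0
  have hT : 0 < T := by positivity
  have hbd : ∀ n s, |s| ≤ T → ‖dys A n s‖ ≤ (K' * T) ^ n / n.factorial := fun n s hs =>
    (dys_bound hA hK0 hb n s hs).trans (by gcongr)
  have hsum : Summable fun n : ℕ => K' * ((K' * T) ^ n / n.factorial) :=
    (Real.summable_pow_div_factorial _).mul_left _
  have key := hasDerivAt_tsum_of_isPreconnected (g := fun n s => dys A (n+1) s)
    (g' := fun n s => A s * dys A n s) (t := Ioo (-T) T) (y₀ := 0) (y := t) hsum isOpen_Ioo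
    isPreconnected_Ioo (fun n y _ => dys_deriv hA n y)
    (fun n y hy => by
      have hy' : |y| ≤ T := abs_le.2 ⟨hy.1.le, hy.2.le⟩
      refine (norm_mul_le _ _).trans ?_
      gcongr
      · exact hb y hy'
      · exact hbd n y hy')
    (by simp [hT]) (by simp [dys, summable_zero]) (by
      have := abs_lt.1 (show |t| < T by simp [T])
      exact this)
  have hst : Summable fun n => dys A n t := by
    refine Summable.of_norm_bounded (Real.summable_pow_div_factorial (K' * T)) fun n => hbd n t (by simp [T])
  have e : ∑' n, A t * dys A n t = A t * (1 + ∑' n, dys A (n+1) t) := by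
    rw [hst.tsum_mul_left, hst.tsum_eq_zero_add]; simp [dys]
  rw [← e]
  exact key.const_add 1
end dyson

section flow
variable {E : Type*} [NormedAddCommGroup E] [NormedSpace ℝ E] [FiniteDimensional ℝ E]

lemma flow_strict {f : E → E} (hf : ContDiff ℝ 1 f) {φ : ℝ → E → E} (h0 : ∀ x, φ 0 x = x)
    (hd : ∀ x t, HasDerivAt (fun τ => φ τ x) (f (φ t x)) t) (x : E) {R : ℝ → E →L[ℝ] E}
    (hR0 : R 0 = 1) (hR : ∀ t, HasDerivAt R (fderiv ℝ f (φ t x) * R t) t) {T : ℝ} (hT : 0 ≤ T) :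
    HasStrictFDerivAt (φ T) (R T) x := by
  have : ProperSpace E := FiniteDimensional.proper ℝ E
  have hc : ∀ y, Continuous fun t => φ t y := fun y =>
    continuous_iff_continuousAt.2 fun t => (hd y t).continuousAt
  have hdf : ∀ y, DifferentiableAt ℝ f y := fun y => hf.differentiable (by norm_num) y
  have hfc : Continuous (fderiv ℝ f) := hf.continuous_fderiv (by norm_num)
  set C : Set E := cthickening 1 ((fun t => φ t x) '' Icc 0 T) with hC
  have hCc : IsCompact C := (isCompact_Icc.image (hc x)).cthickening
  have hball : ∀ t ∈ Icc 0 T, closedBall (φ t x) 1 ⊆ C := fun t ht =>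
    closedBall_subset_cthickening (mem_image_of_mem (fun t => φ t x) ht) 1
  obtain ⟨K0, hK0⟩ := hCc.exists_bound_of_continuousOn hfc.continuousOn
  set K : NNReal := ⟨max K0 1, le_trans zero_le_one (le_max_right _ _)⟩ with hKdef
  have hK1 : (1:ℝ) ≤ K := le_max_right _ _
  have hK : ∀ y ∈ C, ‖fderiv ℝ f y‖ ≤ K := fun y hy => (hK0 y hy).trans (le_max_left _ _)
  have hlip : ∀ t ∈ Icc 0 T, LipschitzOnWith K f (closedBall (φ t x) 1) := fun t ht =>
    Convex.lipschitzOnWith_of_nnnorm_fderiv_le (𝕜 := ℝ) (fun y _ => hdf y)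
      (fun y hy => hK y (hball t ht hy)) (convex_closedBall _ _)
  set M := Real.exp (K * T) with hM
  have hM1 : 1 ≤ M := Real.one_le_exp (by positivity)
  -- Gronwall for pairs staying in the tube
  have gr : ∀ y z, ∀ S, S ≤ T → (∀ t ∈ Ico 0 S, φ t y ∈ closedBall (φ t x) 1) →
      (∀ t ∈ Ico 0 S, φ t z ∈ closedBall (φ t x) 1) → ∀ t ∈ Icc 0 S,
      dist (φ t y) (φ t z) ≤ dist y z * M := by
    intro y z S hS hy hz t ht
    have := dist_le_of_trajectories_ODE_of_mem (v := fun _ => f) (s := fun t => closedBall (φ t x) 1)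
      (K := K) (f := fun t => φ t y) (g := fun t => φ t z) (a := 0) (b := S) (δ := dist y z)
      (fun t ht => hlip t ⟨ht.1, ht.2.le.trans hS⟩) (hc y).continuousOn
      (fun t _ => (hd y t).hasDerivWithinAt) hy (hc z).continuousOn
      (fun t _ => (hd z t).hasDerivWithinAt) hz (by simp [h0]) t ht
    refine this.trans ?_
    gcongr
    rw [sub_zero, hM]
    exact Real.exp_le_exp.2 (mul_le_mul_of_nonneg_left (ht.2.trans hS) K.2)
  have tube : ∀ y, dist y x * M < 1 → ∀ t ∈ Icc 0 T, dist (φ t y) (φ t x) < 1 := by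
    intro y hy
    by_contra! hcon
    obtain ⟨t1, ht1, ht1'⟩ := hcon
    have hcl : IsCompact (Icc 0 T ∩ {t | 1 ≤ dist (φ t y) (φ t x)}) :=
      isCompact_Icc.inter_right (isClosed_le continuous_const ((hc y).dist (hc x)))
    obtain ⟨s, hs⟩ := hcl.exists_isLeast ⟨t1, ht1, ht1'⟩
    have hlt : ∀ t ∈ Ico 0 s, φ t y ∈ closedBall (φ t x) 1 := by
      intro t ht
      by_contra hn
      have : s ≤ t := hs.2 ⟨⟨ht.1, ht.2.le.trans hs.1.1.2⟩, by
        rw [mem_closedBall, not_le] at hn; exact hn.le⟩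
      exact absurd ht.2 (not_lt.2 this)
    have := gr y x s hs.1.1.2 hlt (fun t _ => mem_closedBall_self zero_le_one) s ⟨hs.1.1.1, le_rfl⟩
    exact absurd hs.1.2 (not_le.2 (this.trans_lt hy))
  have gr2 : ∀ y z, dist y x * M < 1 → dist z x * M < 1 → ∀ t ∈ Icc 0 T,
      dist (φ t y) (φ t z) ≤ dist y z * M := fun y z hy hz =>
    gr y z T le_rfl (fun t ht => (tube y hy t ⟨ht.1, ht.2.le⟩).le)
      (fun t ht => (tube z hz t ⟨ht.1, ht.2.le⟩).le)
  rw [hasStrictFDerivAt_iff_isLittleO, isLittleO_iff]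
  intro c hcpos
  have huc := Metric.uniformContinuousOn_iff.1 (hCc.uniformContinuousOn_of_continuous hfc.continuousOn)
  obtain ⟨ρ, hρ, hρ'⟩ := huc (c / (M * M)) (by positivity)
  set r := min ρ 1 / (2 * M) with hr
  have hrpos : 0 < r := by positivity
  have hrM : r * M < min ρ 1 := by
    rw [hr]; field_simp; have : 0 < min ρ 1 := by positivity
    linarith
  have hnb : ball x r ×ˢ ball x r ∈ nhds (x, x) := prod_mem_nhds (ball_mem_nhds _ hrpos) (ball_mem_nhds _ hrpos)
  filter_upwards [hnb]
  rintro ⟨y, z⟩ ⟨hy, hz⟩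
  simp only [mem_ball] at hy hz
  have hyM : dist y x * M < min ρ 1 := lt_of_le_of_lt (by gcongr) hrM
  have hzM : dist z x * M < min ρ 1 := lt_of_le_of_lt (by gcongr) hrM
  have hy1 := hyM.trans_le (min_le_right _ _)
  have hz1 := hzM.trans_le (min_le_right _ _)
  have hx1 : dist x x * M < 1 := by simp
  have est : ∀ t ∈ Icc 0 T, ‖f (φ t y) - f (φ t z) - fderiv ℝ f (φ t x) (φ t y - φ t z)‖ ≤
      c / (M * M) * ‖φ t y - φ t z‖ := by
    intro t ht
    refine Convex.norm_image_sub_le_of_norm_fderiv_le' (𝕜 := ℝ) (s := ball (φ t x) (min ρ 1)) (fun y _ => hdf y) ?_ (convex_ball _ _) ?_ ?_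
    · intro a ha
      have ha' := mem_ball.1 ha
      rw [← dist_eq_norm]
      refine (hρ' a (hball t ht (ha'.le.trans (min_le_right _ _))) _ (hball t ht (mem_closedBall_self zero_le_one)) (ha'.trans_le (min_le_left _ _))).le
    · exact (gr2 z x hz1 hx1 t ht).trans_lt hzM
    · exact (gr2 y x hy1 hx1 t ht).trans_lt hyM
  have hw : ∀ t, HasDerivAt (fun t => φ t y - φ t z - R t (y - z))
      (f (φ t y) - f (φ t z) - fderiv ℝ f (φ t x) (R t (y - z))) t := by
    intro t
    have h1 := (hR t).clm_apply (hasDerivAt_const t (y - z))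
    have h2 := ((hd y t).fun_sub (hd z t)).fun_sub h1
    simpa only [map_zero, add_zero, ContinuousLinearMap.mul_apply] using h2
  have := norm_le_gronwallBound_of_norm_deriv_right_le (δ := 0) (K := K) (ε := c / M * ‖y - z‖) (a := 0) (b := T)
    (f := fun t => φ t y - φ t z - R t (y - z)) (continuous_iff_continuousAt.2 fun t => (hw t).continuousAt).continuousOn
    (fun t _ => (hw t).hasDerivWithinAt) (by simp [h0, hR0]) (by
      intro t ht
      have ht' : t ∈ Icc 0 T := ⟨ht.1, ht.2.le⟩
      have e : f (φ t y) - f (φ t z) - fderiv ℝ f (φ t x) (R t (y - z)) =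
        (f (φ t y) - f (φ t z) - fderiv ℝ f (φ t x) (φ t y - φ t z)) +
        fderiv ℝ f (φ t x) (φ t y - φ t z - R t (y - z)) := by
          rw [map_sub _ (φ t y - φ t z)]; abel
      rw [e, add_comm]
      refine (norm_add_le _ _).trans (add_le_add ?_ ?_)
      · exact ((fderiv ℝ f (φ t x)).le_opNorm _).trans (by
          gcongr; exact hK _ (hball t ht' (mem_closedBall_self zero_le_one)))
      · refine (est t ht').trans ?_
        have := gr2 y z hy1 hz1 t ht'
        rw [dist_eq_norm, dist_eq_norm] at this
        calc c / (M * M) * ‖φ t y - φ t z‖ ≤ c / (M*M) * (‖y - z‖ * M) := by gcongr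
          _ = _ := by field_simp) T ⟨hT, le_rfl⟩
  simp only at this ⊢
  refine this.trans ?_
  rw [gronwallBound_of_K_ne_0 (by positivity)]
  simp only [zero_mul, zero_add, sub_zero]
  rw [← hM]
  have h1 : c / M * ‖y - z‖ / K ≤ c / M * ‖y - z‖ := div_le_self (by positivity) hK1
  calc c / M * ‖y - z‖ / K * (M - 1) ≤ c / M * ‖y - z‖ * M := by
        apply mul_le_mul h1 (by linarith) (by linarith) (by positivity)
    _ = c * ‖y - z‖ := by field_simp

/-- Differentiability of a flow with respect to the initial condition. -/
theorem flow_deriv {f : E → E} (hf : ContDiff ℝ 1 f) {φ : ℝ → E → E} (h0 : ∀ x, φ 0 x = x)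
    (hd : ∀ x t, HasDerivAt (fun τ => φ τ x) (f (φ t x)) t) (x : E) :
    ∃ R : ℝ → E →L[ℝ] E, R 0 = 1 ∧ (∀ t, HasDerivAt R (fderiv ℝ f (φ t x) * R t) t) ∧
      ∀ t, HasStrictFDerivAt (φ t) (R t) x := by
  have hc : Continuous fun t => φ t x :=
    continuous_iff_continuousAt.2 fun t => (hd x t).continuousAt
  have hfc : Continuous (fderiv ℝ f) := hf.continuous_fderiv (by norm_num)
  rcases subsingleton_or_nontrivial E with hE | hE
  · refine ⟨fun _ => 1, rfl, fun t => ?_, fun t => ?_⟩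
    · have : fderiv ℝ f (φ t x) * 1 = 0 := Subsingleton.elim _ _
      rw [this]; exact hasDerivAt_const _ _
    · have : φ t = id := by ext y; exact Subsingleton.elim _ _
      rw [this]; exact hasStrictFDerivAt_id x
  obtain ⟨R, hR0, hR⟩ := exists_linear_sol (A := fun t => fderiv ℝ f (φ t x)) (hfc.comp hc)
  refine ⟨R, hR0, hR, fun t => ?_⟩
  rcases le_total 0 t with ht | ht
  · exact flow_strict hf h0 hd x hR0 hR ht
  · have := flow_strict (f := fun y => - f y) hf.neg (φ := fun t => φ (-t)) (by simpa using h0)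
      (fun x t => by
        simpa [Function.comp_def] using (hd x (-t)).scomp t (hasDerivAt_neg t)) x (R := fun t => R (-t)) (by simpa using hR0)
      (fun t => by
        have h1 := (hR (-t)).scomp t (hasDerivAt_neg t)
        have h2 : fderiv ℝ (fun y => - f y) (φ (-t) x) = - fderiv ℝ f (φ (-t) x) := fderiv_fun_neg
        rw [h2]
        simpa [Function.comp_def] using h1) (T := -t) (by linarith)
    simpa using this
end flow
end KAM

namespace KAM
variable {d : ℕ} {H : Phase d → ℝ}

lemma per_reduce (q : Euc d) : ∃ k : Fin d → ℤ, ‖q + intVec k‖ ≤ d := by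
  refine ⟨fun i => -⌊q i⌋, ?_⟩
  have h : ∀ i, |(q + intVec fun i => -⌊q i⌋ : Euc d) i| ≤ 1 := by
    intro i
    simp only [intVec, PiLp.add_apply, Int.cast_neg]
    rw [abs_le]
    have h1 := Int.floor_le (q i)
    have h2 := Int.lt_floor_add_one (q i)
    constructor <;> linarith
  rw [EuclideanSpace.norm_eq]
  apply Real.sqrt_le_iff.2 ⟨by positivity, ?_⟩
  calc ∑ i, ‖(q + intVec fun i => -⌊q i⌋ : Euc d) i‖ ^ 2 ≤ ∑ i : Fin d, (1:ℝ) := by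
        apply Finset.sum_le_sum
        intro i _
        have := h i
        rw [Real.norm_eq_abs]
        exact pow_le_one₀ (abs_nonneg _) this
    _ = (d:ℝ) := by simp
    _ ≤ (d:ℝ)^2 := by
        rcases Nat.eq_zero_or_pos d with h | h
        · simp [h]
        · have : (1:ℝ) ≤ d := by exact_mod_cast h
          nlinarith

lemma per_phase_bound {F : Type*} [SeminormedAddCommGroup F] {g : Phase d → F} (hg : Continuous g)
    (hp : PerPhase g) (P : ℝ) : ∃ C : ℝ, 0 ≤ C ∧ ∀ q p, ‖p‖ ≤ P → ‖g (q, p)‖ ≤ C := by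
  obtain ⟨C, hC⟩ := ((isCompact_closedBall (0 : Euc d) d).prod
    (isCompact_closedBall (0 : Euc d) P)).exists_bound_of_continuousOn hg.continuousOn
  refine ⟨max C 0, le_max_right _ _, fun q p hpP => ?_⟩
  obtain ⟨k, hk⟩ := per_reduce q
  rw [← hp k q p]
  exact (hC _ ⟨by simpa using hk, by simpa using hpP⟩).trans (le_max_left _ _)

lemma per_bound {F : Type*} [SeminormedAddCommGroup F] {g : Euc d → F} (hg : Continuous g)
    (hp : PerFun g) : ∃ C : ℝ, 0 ≤ C ∧ ∀ q, ‖g q‖ ≤ C := by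
  obtain ⟨C, h0, hC⟩ := per_phase_bound (g := fun x : Phase d => g x.1) (by fun_prop)
    (fun k q _ => hp k q) 0
  exact ⟨C, h0, fun q => hC q 0 (by simp)⟩

lemma per_fderiv {F : Type*} [NormedAddCommGroup F] [NormedSpace ℝ F] {g : Phase d → F}
    (hp : PerPhase g) : PerPhase (fderiv ℝ g) := by
  intro k q p
  have : g = fun x => g (x + (intVec k, 0)) := by
    ext ⟨a, b⟩; simp [hp k a b]
  conv_rhs => rw [this]
  rw [fderiv_comp_add_right]; simp

lemma per_fderiv' {F : Type*} [NormedAddCommGroup F] [NormedSpace ℝ F] {g : Euc d → F}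
    (hp : PerFun g) : PerFun (fderiv ℝ g) := by
  intro k q
  have : g = fun x => g (x + intVec k) := by
    ext a; simp [hp k a]
  conv_rhs => rw [this]
  rw [fderiv_comp_add_right]

lemma per_ham (hp : PerPhase H) : PerPhase (hamVF H 0) := by
  intro k q p
  simp only [hamVF, hp k q, gradient]
  have h := per_fderiv' (g := fun q => H (q, p)) (fun k a => hp k a p) k q
  rw [h]

lemma leg_bdd (hH : TonelliHam H) (q v : Euc d) :
    BddAbove {r | ∃ p : Euc d, r = ⟪p, v⟫ - H (q, p)} := by
  obtain ⟨B, hB⟩ := hH.superlinear ‖v‖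
  refine ⟨-B, ?_⟩
  rintro r ⟨p, rfl⟩
  have := hB q p
  have := real_inner_le_norm p v
  linarith

lemma fenchel (hH : TonelliHam H) (q v p : Euc d) : ⟪p, v⟫ - H (q, p) ≤ LegendreL H (q, v) :=
  le_csSup (leg_bdd hH q v) ⟨p, rfl⟩

lemma leg_le (x : Phase d) (a : ℝ)
    (h : ∀ p, ⟪p, x.2⟫ - H (x.1, p) ≤ a) : LegendreL H x ≤ a := by
  apply csSup_le (show Set.Nonempty {r | ∃ p : Euc d, r = ⟪p, x.2⟫ - H (x.1, p)} from ⟨_, 0, rfl⟩)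
  rintro r ⟨p, rfl⟩
  exact h p

lemma leg_lsc (hH : TonelliHam H) : LowerSemicontinuous (LegendreL H) := by
  intro x y hy
  obtain ⟨_, ⟨p, rfl⟩, hp⟩ := exists_lt_of_lt_csSup
    (show Set.Nonempty {r | ∃ p : Euc d, r = ⟪p, x.2⟫ - H (x.1, p)} from ⟨_, 0, rfl⟩) hy
  have hc : Continuous fun x : Phase d => ⟪p, x.2⟫ - H (x.1, p) := by
    have := hH.smooth.continuous
    fun_prop
  filter_upwards [hc.continuousAt.eventually (lt_mem_nhds hp)] with z hz
  exact hz.trans_le (fenchel hH z.1 z.2 p)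

lemma taylor1d {g g' g'' : ℝ → ℝ} (h1 : ∀ t, HasDerivAt g (g' t) t)
    (h2 : ∀ t, HasDerivAt g' (g'' t) t) (a : ℝ) (h : ∀ t ∈ Icc (0:ℝ) 1, a ≤ g'' t) :
    g 0 + g' 0 + a / 2 ≤ g 1 := by
  have k1 : ∀ t, HasDerivAt (fun t => g' t - a * t) (g'' t - a) t := fun t => by
    simpa using (h2 t).fun_sub ((hasDerivAt_id' t).const_mul a)
  have m1 : MonotoneOn (fun t => g' t - a * t) (Icc 0 1) := by
    apply monotoneOn_of_hasDerivWithinAt_nonneg (convex_Icc 0 1) (f' := fun t => g'' t - a)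
    · exact fun t _ => (k1 t).continuousAt.continuousWithinAt
    · exact fun t _ => (k1 t).hasDerivWithinAt
    · intro t ht
      rw [interior_Icc] at ht
      linarith [h t ⟨ht.1.le, ht.2.le⟩]
  have k2 : ∀ t, HasDerivAt (fun t => g t - (g' 0 * t + a / 2 * t ^ 2)) (g' t - (g' 0 + a * t)) t := by
    intro t
    have := (h1 t).fun_sub (((hasDerivAt_id' t).const_mul (g' 0)).fun_add
      ((hasDerivAt_pow 2 t).const_mul (a / 2)))
    have e : g' t - (g' 0 + a * t) = g' t - (g' 0 * 1 + a / 2 * ((2:ℕ) * t ^ (2 - 1))) := by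
      norm_num; ring
    rw [e]; exact this
  have m2 : MonotoneOn (fun t => g t - (g' 0 * t + a / 2 * t ^ 2)) (Icc 0 1) := by
    apply monotoneOn_of_hasDerivWithinAt_nonneg (convex_Icc 0 1) (f' := fun t => g' t - (g' 0 + a * t))
    · exact fun t _ => (k2 t).continuousAt.continuousWithinAt
    · exact fun t _ => (k2 t).hasDerivWithinAt
    · intro t ht
      rw [interior_Icc] at ht
      have := m1 (left_mem_Icc.2 zero_le_one) ⟨ht.1.le, ht.2.le⟩ ht.1.le
      simp only [mul_zero, sub_zero] at this
      linarith
  have := m2 (left_mem_Icc.2 zero_le_one) (right_mem_Icc.2 zero_le_one) zero_le_one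
  norm_num at this
  linarith

lemma taylor2 (hs : ContDiff ℝ 2 H) (x z : Phase d) (a : ℝ)
    (h : ∀ t ∈ Icc (0:ℝ) 1, a ≤ fderiv ℝ (fderiv ℝ H) (x + t • z) z z) :
    H x + fderiv ℝ H x z + a / 2 ≤ H (x + z) := by
  have hl : ∀ t : ℝ, HasDerivAt (fun t : ℝ => x + t • z) z t := fun t => by
    have := ((hasDerivAt_id' t).smul_const z).const_add x
    rwa [one_smul] at this
  have h1 : ∀ t : ℝ, HasDerivAt (fun t : ℝ => H (x + t • z)) (fderiv ℝ H (x + t • z) z) t := fun t =>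
    ((hs.differentiable (by norm_num) (x + t • z)).hasFDerivAt).comp_hasDerivAt t (hl t)
  have h2 : ∀ t : ℝ, HasDerivAt (fun t : ℝ => fderiv ℝ H (x + t • z) z)
      (fderiv ℝ (fderiv ℝ H) (x + t • z) z z) t := fun t => by
    have hd : DifferentiableAt ℝ (fderiv ℝ H) (x + t • z) :=
      (hs.fderiv_right (m := 1) (by norm_num)).differentiable (by norm_num) _
    have h3 : HasDerivAt (fun t : ℝ => fderiv ℝ H (x + t • z)) _ t :=
      hd.hasFDerivAt.comp_hasDerivAt t (hl t)
    have := h3.clm_apply (hasDerivAt_const t z)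
    simpa only [map_zero, add_zero] using this
  have := taylor1d h1 h2 a h
  simpa only [zero_smul, add_zero, one_smul] using this

lemma pp_lower (hH : TonelliHam H) (P : ℝ) : ∃ m > 0, ∀ q p b : Euc d, ‖p‖ ≤ P →
    m * ‖b‖ ^ 2 ≤ fderiv ℝ (fderiv ℝ H) (q, p) (0, b) (0, b) := by
  have hc2 : Continuous (fderiv ℝ (fderiv ℝ H)) :=
    (hH.smooth.fderiv_right (m := 1) (by norm_num)).continuous_fderiv (by norm_num)
  set S : Set (Phase d × Euc d) := (closedBall (0 : Euc d) d ×ˢ closedBall (0 : Euc d) P) ×ˢ sphere 0 1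
  have hS : IsCompact S := ((isCompact_closedBall (0 : Euc d) d).prod
    (isCompact_closedBall (0 : Euc d) P)).prod (isCompact_sphere _ _)
  have hF : Continuous fun y : Phase d × Euc d => fderiv ℝ (fderiv ℝ H) y.1 (0, y.2) (0, y.2) := by
    fun_prop
  obtain ⟨m, hm, hmS⟩ : ∃ m > 0, ∀ y ∈ S, m ≤ fderiv ℝ (fderiv ℝ H) y.1 (0, y.2) (0, y.2) := by
    rcases S.eq_empty_or_nonempty with h | h
    · exact ⟨1, one_pos, by simp [h]⟩
    · obtain ⟨y, hy, hy'⟩ := hS.exists_isMinOn h hF.continuousOn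
      refine ⟨_, ham_pp_pos hH.smooth hH.convex y.1 y.2 ?_, fun z hz => hy' hz⟩
      intro h0
      have := hy.2
      simp [h0] at this
  refine ⟨m, hm, fun q p b hp => ?_⟩
  obtain ⟨k, hk⟩ := per_reduce q
  rw [← per_fderiv (per_fderiv hH.periodic) k q p]
  rcases eq_or_ne b 0 with rfl | hb
  · have e : ((0 : Euc d), (0 : Euc d)) = 0 := rfl
    simp [e]
  have hb' : ‖b‖ ≠ 0 := by simpa using hb
  have := hmS ((q + intVec k, p), ‖b‖⁻¹ • b) ⟨⟨by simpa using hk, by simpa using hp⟩, by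
    simp [norm_smul, hb']⟩
  simp only at this
  have e : ((0 : Euc d), ‖b‖⁻¹ • b) = ‖b‖⁻¹ • ((0 : Euc d), b) := by simp
  rw [e] at this
  simp only [map_smul, smul_apply, smul_eq_mul] at this
  calc m * ‖b‖ ^ 2 ≤ _ * ‖b‖ ^ 2 := mul_le_mul_of_nonneg_right this (by positivity)
    _ = _ := by field_simp

/-- The quadratic upper bound for the Lagrangian around a Legendre pair. -/
lemma leg_upper (hH : TonelliHam H) (P : ℝ) : ∃ K : ℝ, 0 ≤ K ∧ ∀ q p δ η : Euc d, ‖p‖ ≤ P →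
    ‖δ‖ ≤ 1 → ‖η‖ ≤ 1 →
    LegendreL H (q + δ, (hamVF H 0 (q, p)).1 + η) ≤
      ⟪p, (hamVF H 0 (q, p)).1 + η⟫ - H (q, p) + ⟪(hamVF H 0 (q, p)).2, δ⟫ +
        K * (‖δ‖ ^ 2 + ‖η‖ ^ 2) := by
  have hs := hH.smooth
  have hc1 : Continuous (fderiv ℝ H) := hs.continuous_fderiv (by norm_num)
  have hc2 : Continuous (fderiv ℝ (fderiv ℝ H)) :=
    (hs.fderiv_right (m := 1) (by norm_num)).continuous_fderiv (by norm_num)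
  obtain ⟨C0, hC0, hC0'⟩ := per_phase_bound hs.continuous hH.periodic P
  obtain ⟨C1, hC1, hC1'⟩ := per_phase_bound hc1 (per_fderiv hH.periodic) P
  obtain ⟨B, hB⟩ := hH.superlinear (C1 + 2)
  set P1 := |P| + (C0 + C1 + (C1 + 2) * |P| + |B|) with hP1
  obtain ⟨C, hC, hC'⟩ := per_phase_bound hc2 (per_fderiv (per_fderiv hH.periodic)) P1
  obtain ⟨m, hm, hm'⟩ := pp_lower hH P1
  refine ⟨2 * C ^ 2 / m + C + 2 / m, by positivity, fun q p δ η hp hδ hη => ?_⟩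
  apply leg_le
  intro p'
  simp only
  obtain ⟨Δ, rfl⟩ : ∃ Δ, p' = p + Δ := ⟨p' - p, by abel⟩
  have e1 := ham_fst hs (q, p) Δ
  have e2 := ham_snd hs (q, p) δ
  rw [e2]
  have eD : fderiv ℝ H (q, p) (δ, Δ) = fderiv ℝ H (q, p) (δ, 0) + fderiv ℝ H (q, p) (0, Δ) := by
    rw [← map_add]; simp
  rw [inner_add_left, inner_add_right Δ, real_inner_comm _ Δ, e1]
  have key : H (q, p) + fderiv ℝ H (q, p) (δ, Δ) + ⟪Δ, η⟫ -
      (2 * C ^ 2 / m + C + 2 / m) * (‖δ‖ ^ 2 + ‖η‖ ^ 2) ≤ H (q + δ, p + Δ) := by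
    have hin : ⟪Δ, η⟫ ≤ ‖Δ‖ * ‖η‖ := real_inner_le_norm _ _
    rcases le_total ‖Δ‖ (C0 + C1 + (C1 + 2) * |P| + |B|) with hΔ | hΔ
    · have t2 := taylor2 hs (q, p) (δ, Δ) (m * ‖Δ‖ ^ 2 - 2 * C * ‖δ‖ * ‖Δ‖ - C * ‖δ‖ ^ 2) (by
        intro t ht
        have hb : ‖p + t • Δ‖ ≤ P1 := by
          refine (norm_add_le _ _).trans ?_
          rw [norm_smul, Real.norm_eq_abs, abs_of_nonneg ht.1]
          have : t * ‖Δ‖ ≤ 1 * ‖Δ‖ := mul_le_mul_of_nonneg_right ht.2 (norm_nonneg _)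
          have := le_abs_self P
          linarith
        have hex : (q, p) + t • (δ, Δ) = (q + t • δ, p + t • Δ) := by simp
        rw [hex]
        have hCx := hC' (q + t • δ) (p + t • Δ) hb
        have hmx := hm' (q + t • δ) (p + t • Δ) Δ hb
        set Q := fderiv ℝ (fderiv ℝ H) (q + t • δ, p + t • Δ)
        have hz : (δ, Δ) = (δ, 0) + (0, Δ) := by simp
        have hbd : ∀ a b : Phase d, -(C * ‖a‖ * ‖b‖) ≤ Q a b := by
          intro a b
          have := (Q a).le_opNorm b
          have h3 := Q.le_opNorm a
          have h4 : ‖Q a b‖ ≤ C * ‖a‖ * ‖b‖ := this.trans (by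
            gcongr; exact h3.trans (by gcongr))
          exact (abs_le.1 h4).1
        rw [hz]
        simp only [map_add, add_apply]
        have b1 := hbd (δ, 0) (δ, 0)
        have b2 := hbd (δ, 0) (0, Δ)
        have b3 := hbd (0, Δ) (δ, 0)
        have n1 : ‖((δ, 0) : Phase d)‖ = ‖δ‖ := by simp [Prod.norm_def]
        have n2 : ‖((0, Δ) : Phase d)‖ = ‖Δ‖ := by simp [Prod.norm_def]
        rw [n1] at b1 b2 b3
        rw [n2] at b2 b3
        nlinarith)
      have hx : (q, p) + (δ, Δ) = (q + δ, p + Δ) := by simp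
      rw [hx] at t2
      refine le_trans ?_ t2
      set x := ‖Δ‖
      set y := ‖δ‖
      set w := ‖η‖
      have hx0 : 0 ≤ x := norm_nonneg _
      have hy0 : 0 ≤ y := norm_nonneg _
      have hw0 : 0 ≤ w := norm_nonneg _
      have i1 : C * y * x ≤ m / 8 * x ^ 2 + 2 * C ^ 2 / m * y ^ 2 := by
        have : m / 8 * x ^ 2 + 2 * C ^ 2 / m * y ^ 2 - C * y * x = (m * x - 4 * C * y) ^ 2 / (8 * m) := by
          field_simp; ring
        have : 0 ≤ (m * x - 4 * C * y) ^ 2 / (8 * m) := by positivity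
        linarith
      have i2 : x * w ≤ m / 8 * x ^ 2 + 2 / m * w ^ 2 := by
        have : m / 8 * x ^ 2 + 2 / m * w ^ 2 - x * w = (m * x - 4 * w) ^ 2 / (8 * m) := by
          field_simp; ring
        have : 0 ≤ (m * x - 4 * w) ^ 2 / (8 * m) := by positivity
        linarith
      have j1 : 0 ≤ 2 * C ^ 2 / m * w ^ 2 := by positivity
      have j2 : 0 ≤ 2 / m * y ^ 2 := by positivity
      have j3 : 0 ≤ C * w ^ 2 := by positivity
      have j4 : 0 ≤ C * y ^ 2 := by positivity
      have j5 : 0 ≤ m * x ^ 2 := by positivity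
      nlinarith
    · have hb := hB (q + δ) (p + Δ)
      have h1 : ‖Δ‖ - |P| ≤ ‖p + Δ‖ := by
        have := norm_sub_le (p + Δ) p
        simp at this
        have := le_abs_self P
        linarith
      have h2 := (abs_le.1 (hC0' q p hp)).2
      have h3 : fderiv ℝ H (q, p) (δ, Δ) ≤ C1 + C1 * ‖Δ‖ := by
        rw [eD]
        have a1 := (le_abs_self _).trans ((fderiv ℝ H (q, p)).le_of_opNorm_le (hC1' q p hp) (δ, 0))
        have a2 := (le_abs_self _).trans ((fderiv ℝ H (q, p)).le_of_opNorm_le (hC1' q p hp) (0, Δ))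
        have n1 : ‖((δ, 0) : Phase d)‖ = ‖δ‖ := by simp [Prod.norm_def]
        have n2 : ‖((0, Δ) : Phase d)‖ = ‖Δ‖ := by simp [Prod.norm_def]
        rw [n1] at a1
        rw [n2] at a2
        have : C1 * ‖δ‖ ≤ C1 * 1 := by gcongr
        linarith
      have h4 : ‖Δ‖ * ‖η‖ ≤ ‖Δ‖ * 1 := by gcongr
      have h5 : (C1 + 2) * (‖Δ‖ - |P|) ≤ (C1 + 2) * ‖p + Δ‖ := by gcongr
      have h6 := neg_abs_le B
      have h7 : 0 ≤ (2 * C ^ 2 / m + C + 2 / m) * (‖δ‖ ^ 2 + ‖η‖ ^ 2) := by positivity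
      nlinarith
  rw [eD] at key
  simp only [inner_add_right]
  linarith
end KAM

namespace KAM
variable {d : ℕ} {H : Phase d → ℝ} {u : Euc d → ℝ}

lemma lo_mem {L : Phase d → ℝ} {c t r : ℝ} {q : Euc d} : r ∈ LOvals L 0 c 0 u t q ↔
    ∃ γ γ' : ℝ → Euc d, ACOn γ γ' (-t) 0 ∧ γ 0 = q ∧
      IntervalIntegrable (fun s => L (γ s, γ' s) + c) volume (-t) 0 ∧
      r = u (γ (-t)) + ∫ s in (-t)..0, (L (γ s, γ' s) + c) := by
  simp [LOvals]

lemma leg_ge (hH : TonelliHam H) : ∃ C : ℝ, ∀ x, -C ≤ LegendreL H x := by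
  obtain ⟨C, _, hC⟩ := per_phase_bound hH.smooth.continuous hH.periodic 0
  refine ⟨C, fun x => le_trans ?_ (fenchel hH x.1 x.2 0)⟩
  have := (abs_le.1 (hC x.1 0 (by simp))).2
  simpa using this

lemma lo_bdd (hH : TonelliHam H) (hu : Continuous u) (hp : PerFun u) (c t : ℝ) (ht : 0 < t)
    (q : Euc d) : BddBelow (LOvals (LegendreL H) 0 c 0 u t q) := by
  obtain ⟨C, hC⟩ := leg_ge hH
  obtain ⟨U, _, hU⟩ := per_bound hu hp
  refine ⟨-U + ∫ s in (-t)..0, (-C + c), ?_⟩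
  intro r hr
  obtain ⟨γ, γ', _, _, hi, rfl⟩ := lo_mem.1 hr
  have h1 := (abs_le.1 (hU (γ (-t)))).1
  have h2 : ∫ s in (-t)..0, (-C + c) ≤ ∫ s in (-t)..0, (LegendreL H (γ s, γ' s) + c) :=
    intervalIntegral.integral_mono_on (by linarith) (by simp) hi
      (fun s _ => by linarith [hC (γ s, γ' s)])
  linarith

/-- Domination along `C¹` curves. -/
lemma dom (hH : TonelliHam H) (hK : IsWeakKAM H u) {a b : ℝ} (hab : a ≤ b) {γ γ' : ℝ → Euc d}
    (hd : ∀ s, HasDerivAt γ (γ' s) s) (hc : Continuous γ') {g : ℝ → ℝ} (hg : Continuous g)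
    (hL : ∀ s ∈ Icc a b, LegendreL H (γ s, γ' s) ≤ g s) :
    u (γ b) - u (γ a) ≤ ∫ s in a..b, (g s + maneCritical H) := by
  rcases hab.eq_or_lt with rfl | hab
  · simp
  obtain ⟨hu, hup, hfix⟩ := hK
  set c := maneCritical H
  have ht : 0 < b - a := by linarith
  obtain ⟨C, hC⟩ := leg_ge hH
  have hγ : Continuous γ := continuous_iff_continuousAt.2 fun s => (hd s).continuousAt
  have hm : Measurable fun s => LegendreL H (γ s, γ' s) :=
    (leg_lsc hH).measurable.comp (hγ.prodMk hc).measurable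
  have hgb : Continuous fun s => |g s| + |C| := by fun_prop
  have hi : IntervalIntegrable (fun s => LegendreL H (γ s, γ' s)) volume a b := by
    rw [intervalIntegrable_iff_integrableOn_Icc_of_le hab.le]
    refine Integrable.mono' (g := fun s => |g s| + |C|)
      (hgb.continuousOn.integrableOn_Icc) hm.aestronglyMeasurable ?_
    refine (ae_restrict_iff' measurableSet_Icc).2 (Eventually.of_forall fun s hs => ?_)
    have h1 := hL s hs
    have h2 := hC (γ s, γ' s)
    rw [Real.norm_eq_abs, abs_le]
    have := le_abs_self (g s)
    have := le_abs_self C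
    have := abs_nonneg (g s)
    have := abs_nonneg C
    constructor <;> linarith
  have hi2 : IntervalIntegrable (fun s => LegendreL H (γ s, γ' s) + c) volume a b :=
    hi.add (by simp)
  have hmem : u (γ a) + ∫ s in a..b, (LegendreL H (γ s, γ' s) + c) ∈
      LOvals (LegendreL H) 0 c 0 u (b - a) (γ b) := by
    rw [lo_mem]
    refine ⟨fun s => γ (s + b), fun s => γ' (s + b), ⟨?_, ?_⟩, by simp, ?_, ?_⟩
    · exact (hc.comp (continuous_add_const b)).intervalIntegrable _ _
    · intro t _
      have := intervalIntegral.integral_eq_sub_of_hasDerivAt (a := -(b-a)) (b := t)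
        (f := fun s => γ (s + b)) (f' := fun s => γ' (s + b))
        (fun s _ => (hd (s + b)).comp_add_const s b)
        ((hc.comp (continuous_add_const b)).intervalIntegrable _ _)
      rw [this]; simp
    · have := hi2.comp_add_right b
      simpa using this
    · have := intervalIntegral.integral_comp_add_right (a := -(b-a)) (b := 0)
        (fun s => LegendreL H (γ s, γ' s) + c) b
      rw [this]; simp
  have h1 : u (γ b) ≤ u (γ a) + ∫ s in a..b, (LegendreL H (γ s, γ' s) + c) := by
    rw [← hfix (b - a) ht (γ b)]
    exact csInf_le (lo_bdd hH hu hup c _ ht _) hmem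
  have h2 : ∫ s in a..b, (LegendreL H (γ s, γ' s) + c) ≤ ∫ s in a..b, (g s + c) :=
    intervalIntegral.integral_mono_on hab.le hi2 ((hg.add continuous_const).intervalIntegrable _ _)
      (fun s hs => by linarith [hL s hs])
  linarith

lemma energy (hs : ContDiff ℝ 2 H) {φ : ℝ → Phase d → Phase d} (hφ : IsConformalFlow H 0 φ)
    (x : Phase d) (t : ℝ) : H (φ t x) = H x := by
  have hd : ∀ t, HasDerivAt (fun t => H (φ t x)) 0 t := by
    intro t
    have h1 : HasDerivAt (fun t => H (φ t x)) _ t :=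
      ((hs.differentiable (by norm_num) (φ t x)).hasFDerivAt).comp_hasDerivAt t (hφ.2.2 x t)
    have h2 : fderiv ℝ H (φ t x) (hamVF H 0 (φ t x)) = 0 := by
      rw [fderiv_H_eq hs]
      have := om_swap (hamVF H 0 (φ t x)) (hamVF H 0 (φ t x))
      linarith
    rwa [h2] at h1
  have := is_const_of_deriv_eq_zero (fun t => (hd t).differentiableAt) (fun t => (hd t).deriv) t 0
  simpa [hφ.1] using this

lemma grad_cont (hu1 : ContDiff ℝ 1 u) : Continuous (gradient u) :=
  (InnerProductSpace.toDual ℝ (Euc d)).symm.continuous.comp (hu1.continuous_fderiv (by norm_num))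

lemma grad_per (hup : PerFun u) : PerFun (gradient u) := by
  intro k q
  simp only [gradient, per_fderiv' hup k q]

lemma H_le (hH : TonelliHam H) {φ : ℝ → Phase d → Phase d} (hφ : IsConformalFlow H 0 φ)
    (hu1 : ContDiff ℝ 1 u) (hK : IsWeakKAM H u) (q : Euc d) :
    H (q, gradient u q) ≤ maneCritical H := by
  set x : Phase d := (q, gradient u q)
  have hfc : Continuous (hamVF H 0) := (ham_contDiff hH.smooth).continuous
  have hφc : Continuous fun t => φ t x := continuous_iff_continuousAt.2 fun t => (hφ.2.2 x t).continuousAt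
  have hd1 : ∀ s, HasDerivAt (fun s => (φ s x).1) (hamVF H 0 (φ s x)).1 s := fun s =>
    (hφ.2.2 x s).fst
  have hfφ : Continuous fun s => hamVF H 0 (φ s x) := hfc.comp hφc
  have hg : Continuous fun s => ⟪(φ s x).2, (hamVF H 0 (φ s x)).1⟫ - H (φ s x) :=
    (hφc.snd.inner hfφ.fst).sub (hH.smooth.continuous.comp hφc)
  have hle : ∀ s, LegendreL H ((φ s x).1, (hamVF H 0 (φ s x)).1) ≤
      ⟪(φ s x).2, (hamVF H 0 (φ s x)).1⟫ - H (φ s x) := by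
    intro s
    obtain ⟨K, _, hKK⟩ := leg_upper hH ‖(φ s x).2‖
    simpa using hKK (φ s x).1 (φ s x).2 0 0 le_rfl (by simp) (by simp)
  set g := fun s => ⟪(φ s x).2, (hamVF H 0 (φ s x)).1⟫ - H (φ s x) with hgdef
  have hdom : ∀ s ≤ 0, u (φ 0 x).1 - u (φ s x).1 ≤ ∫ r in s..0, (g r + maneCritical H) := fun s hs =>
    dom hH hK hs hd1 hfφ.fst hg (fun r _ => hle r)
  have hF : HasDerivAt (fun s => u (φ s x).1 - ∫ r in 0..s, (g r + maneCritical H))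
      (fderiv ℝ u q (hamVF H 0 x).1 - (g 0 + maneCritical H)) 0 := by
    have h1 : HasDerivAt (fun s => u (φ s x).1) (fderiv ℝ u (φ 0 x).1 (hamVF H 0 (φ 0 x)).1) 0 :=
      ((hu1.differentiable (by norm_num) _).hasFDerivAt).comp_hasDerivAt 0 (hd1 0)
    rw [hφ.1] at h1
    exact h1.fun_sub ((hg.add continuous_const).integral_hasStrictDerivAt 0 0).hasDerivAt
  have hle0 : fderiv ℝ u q (hamVF H 0 x).1 - (g 0 + maneCritical H) ≤ 0 := by
    have hF' := hF.hasDerivWithinAt (s := Iic 0)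
    by_contra! hpos
    have := hasDerivWithinAt_iff_tendsto_slope.1 hF'
    rw [show Iic (0:ℝ) \ {0} = Iio 0 by ext; simp [lt_iff_le_and_ne]] at this
    have hev := this.eventually (lt_mem_nhds hpos)
    obtain ⟨s, hs1, hs2⟩ := (hev.and self_mem_nhdsWithin).exists
    have hs2 : s < 0 := hs2
    have h3 := hdom s hs2.le
    rw [slope_def_field] at hs1
    simp only [intervalIntegral.integral_same, sub_zero, zero_sub] at hs1
    rw [intervalIntegral.integral_symm] at hs1
    have : 0 ≤ -s := by linarith
    have h4 : (u (φ s x).1 - -(∫ r in s..0, (g r + maneCritical H)) - u (φ 0 x).1) / s ≤ 0 :=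
      div_nonpos_of_nonneg_of_nonpos (by linarith) hs2.le
    linarith
  have e : fderiv ℝ u q (hamVF H 0 x).1 = ⟪gradient u q, (hamVF H 0 x).1⟫ :=
    (inner_gradient (hu1.differentiable (by norm_num) q) _).symm
  rw [e, hgdef] at hle0
  simp only [hφ.1] at hle0
  simp only [x] at hle0 ⊢
  linarith

lemma ac_chain {γ γ' : ℝ → Euc d} {a b : ℝ} (hab : a ≤ b) (hac : ACOn γ γ' a b)
    {F : Euc d × ℝ → ℝ} (hF : ContDiff ℝ 1 F) {g : ℝ → ℝ} (hg : IntervalIntegrable g volume a b)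
    (hle : ∀ s ∈ Icc a b, fderiv ℝ F (γ s, s) (γ' s, 1) ≤ g s) :
    F (γ b, b) - F (γ a, a) ≤ ∫ s in a..b, g s := by
  obtain ⟨hi, hγ⟩ := hac
  have hsub : ∀ {s t}, s ∈ Icc a b → t ∈ Icc a b → IntervalIntegrable γ' volume s t := fun hs ht =>
    hi.mono_set (by rw [uIcc_of_le hab]; exact uIcc_subset_Icc hs ht)
  have hdiff : ∀ s ∈ Icc a b, ∀ t ∈ Icc a b, γ t - γ s = ∫ r in s..t, γ' r := by
    intro s hs t ht
    rw [hγ s hs, hγ t ht, ← intervalIntegral.integral_interval_sub_left (hsub (left_mem_Icc.2 hab) ht) (hsub (left_mem_Icc.2 hab) hs)]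
    abel
  set G : ℝ → ℝ := fun t => ∫ r in a..t, (1 + ‖γ' r‖) with hG
  have hiG : IntervalIntegrable (fun r => 1 + ‖γ' r‖) volume a b := (by simp : IntervalIntegrable (fun _ => (1:ℝ)) volume a b).add hi.norm
  have hGd : ∀ s ∈ Icc a b, ∀ t ∈ Icc a b, s ≤ t → (t - s) + ‖γ t - γ s‖ ≤ G t - G s := by
    intro s hs t ht hst
    have hGi : ∀ {s t}, s ∈ Icc a b → t ∈ Icc a b → IntervalIntegrable (fun r => 1 + ‖γ' r‖) volume s t :=
      fun hs ht => hiG.mono_set (by rw [uIcc_of_le hab]; exact uIcc_subset_Icc hs ht)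
    simp only [hG]
    rw [intervalIntegral.integral_interval_sub_left (hGi (left_mem_Icc.2 hab) ht) (hGi (left_mem_Icc.2 hab) hs),
      intervalIntegral.integral_add (by simp) (hsub hs ht).norm, hdiff s hs t ht]
    have := intervalIntegral.norm_integral_le_integral_norm (μ := volume) (f := γ') hst
    simp only [intervalIntegral.integral_const, smul_eq_mul, mul_one]
    linarith
  have hbd : ∀ s ∈ Icc a b, γ s ∈ closedBall (γ a) (G b) := by
    intro s hs
    have h1 := hGd a (left_mem_Icc.2 hab) s hs hs.1
    have h2 := hGd s hs b (right_mem_Icc.2 hab) hs.2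
    have : G a = 0 := by simp [hG]
    have := norm_nonneg (γ b - γ s)
    rw [mem_closedBall, dist_eq_norm]
    linarith [hs.1, hs.2]
  set Q : Set (Euc d × ℝ) := closedBall (γ a) (G b) ×ˢ Icc a b
  have hQ : IsCompact Q := (isCompact_closedBall _ _).prod isCompact_Icc
  obtain ⟨K0, hK0⟩ := hQ.exists_bound_of_continuousOn (hF.continuous_fderiv (by norm_num)).continuousOn
  have hlip : ∀ x ∈ Q, ∀ y ∈ Q, ‖F y - F x‖ ≤ |K0| * ‖y - x‖ := fun x hx y hy =>
    Convex.norm_image_sub_le_of_norm_fderiv_le (𝕜 := ℝ)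
      (fun z _ => hF.differentiable (by norm_num) z) (fun z hz => (hK0 z hz).trans (le_abs_self _))
      ((convex_closedBall _ _).prod (convex_Icc _ _)) hx hy
  have hw : ∀ s ∈ Icc a b, ∀ t ∈ Icc a b, dist (F (γ s, s)) (F (γ t, t)) ≤ |K0| * dist (G s) (G t) := by
    have hw' : ∀ s ∈ Icc a b, ∀ t ∈ Icc a b, s ≤ t → dist (F (γ s, s)) (F (γ t, t)) ≤ |K0| * dist (G s) (G t) := by
      intro s hs t ht hst
      have h1 := hlip (γ s, s) ⟨hbd s hs, hs⟩ (γ t, t) ⟨hbd t ht, ht⟩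
      rw [dist_comm, dist_eq_norm]
      refine h1.trans ?_
      gcongr
      have h2 := hGd s hs t ht hst
      rw [dist_comm, Real.dist_eq]
      refine le_trans ?_ (le_abs_self _)
      refine le_trans ?_ h2
      rw [Prod.mk_sub_mk, Prod.norm_mk, Real.norm_eq_abs, abs_of_nonneg (by linarith : 0 ≤ t - s)]
      have := norm_nonneg (γ t - γ s)
      exact max_le (by linarith) (by linarith)
    intro s hs t ht
    rcases le_total s t with h | h
    · exact hw' s hs t ht h
    · rw [dist_comm, dist_comm (G s)]; exact hw' t ht s hs h
  have hGac : AbsolutelyContinuousOnInterval (fun t => |K0| * G t) a b :=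
    (hiG.absolutelyContinuousOnInterval_intervalIntegral left_mem_uIcc).const_mul _
  have hwac : AbsolutelyContinuousOnInterval (fun s => F (γ s, s)) a b := by
    rw [absolutelyContinuousOnInterval_iff] at hGac ⊢
    intro ε hε
    obtain ⟨δ, hδ, h⟩ := hGac ε hε
    refine ⟨δ, hδ, fun E hE hE' => lt_of_le_of_lt (Finset.sum_le_sum fun i hi => ?_) (h E hE hE')⟩
    have hm := hE.1 i hi
    rw [uIcc_of_le hab] at hm
    refine (hw _ hm.1 _ hm.2).trans (le_of_eq ?_)
    rw [Real.dist_eq, Real.dist_eq, ← mul_sub, abs_mul, abs_abs]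
  rw [← hwac.integral_deriv_eq_sub]
  refine intervalIntegral.integral_mono_ae_restrict hab hwac.intervalIntegrable_deriv hg ?_
  rw [EventuallyLE, ae_restrict_iff' measurableSet_Icc]
  have hna : ∀ᵐ x : ℝ, x ≠ a := by simp [ae_iff, measure_singleton]
  have hnb : ∀ᵐ x : ℝ, x ≠ b := by simp [ae_iff, measure_singleton]
  filter_upwards [hi.ae_hasDerivAt_integral, hna, hnb] with s hs h1 h2 hsI
  have hs' := hs (by rwa [uIcc_of_le hab]) a left_mem_uIcc
  have hγd : HasDerivAt γ (γ' s) s := by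
    have h3 := hs'.const_add (γ a)
    refine h3.congr_of_eventuallyEq ?_
    filter_upwards [Icc_mem_nhds (lt_of_le_of_ne hsI.1 (Ne.symm h1)) (lt_of_le_of_ne hsI.2 h2)] with t ht
    exact hγ t ht
  have h4 : HasDerivAt (fun s => F (γ s, s)) (fderiv ℝ F (γ s, s) (γ' s, 1)) s :=
    HasFDerivAt.comp_hasDerivAt (f := fun s => (γ s, s)) s
      (hF.differentiable (by norm_num) (γ s, s)).hasFDerivAt (hγd.prodMk (hasDerivAt_id' s))
  rw [h4.deriv]
  exact hle s hsI

lemma H_eq (hH : TonelliHam H) {φ : ℝ → Phase d → Phase d} (hφ : IsConformalFlow H 0 φ)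
    (hu1 : ContDiff ℝ 1 u) (hK : IsWeakKAM H u) (q0 : Euc d) :
    H (q0, gradient u q0) = maneCritical H := by
  apply le_antisymm (H_le hH hφ hu1 hK q0)
  by_contra! hlt
  set c := maneCritical H
  have hHc := hH.smooth.continuous
  have hgc := grad_cont hu1
  have hcont : Continuous fun q => H (q, gradient u q) := by fun_prop
  obtain ⟨r, hr, hball⟩ := Metric.nhds_basis_closedBall.eventually_iff.1
    (hcont.continuousAt.eventually (gt_mem_nhds hlt))
  let b : ContDiffBump q0 := ⟨r / 2, r, by positivity, by linarith⟩
  have hb : ContDiff ℝ 1 b := b.contDiff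
  have hbc := grad_cont hb
  have hev : ∀ᶠ y : ℝ × ℝ in nhds (0, 0), ∀ q ∈ closedBall q0 r,
      H (q, gradient u q + y.1 • gradient b q) + y.2 < c := by
    apply (isCompact_closedBall q0 r).eventually_forall_of_forall_eventually
    intro q hq
    have hc2 : Continuous fun z : (ℝ × ℝ) × Euc d =>
        H (z.2, gradient u z.2 + z.1.1 • gradient b z.2) + z.1.2 := by fun_prop
    refine hc2.continuousAt.eventually (gt_mem_nhds ?_)
    simpa using hball hq
  obtain ⟨ρ, hρ, hρ'⟩ := Metric.eventually_nhds_iff_ball.1 hev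
  set ε := ρ / 2
  have hε : 0 < ε := by positivity
  have key : ∀ q, ∀ s ∈ Icc (-1:ℝ) 0, H (q, gradient u q + (ε * (1 + s)) • gradient b q) + ε * b q ≤ c := by
    intro q s hs
    by_cases hq : q ∈ closedBall q0 r
    · have hs1 : 0 ≤ 1 + s := by linarith [hs.1]
      have hs2 : 1 + s ≤ 1 := by linarith [hs.2]
      have h1 : 0 ≤ ε * (1 + s) := by positivity
      have h2 : ε * (1 + s) ≤ ε * 1 := by gcongr
      have h3 : 0 ≤ ε * b q := mul_nonneg hε.le b.nonneg
      have h4 : ε * b q ≤ ε * 1 := by gcongr; exact b.le_one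
      refine (hρ' (ε * (1 + s), ε * b q) ?_ q hq).le
      rw [mem_ball, Prod.dist_eq, Real.dist_eq, Real.dist_eq, sub_zero, sub_zero, abs_of_nonneg h1, abs_of_nonneg h3]
      apply max_lt <;> simp only [ε] at * <;> linarith
    · have hz : (b : Euc d → ℝ) =ᶠ[nhds q] fun _ => 0 := by
        filter_upwards [(isClosed_closedBall (x := q0) (ε := r)).isOpen_compl.mem_nhds hq] with y hy
        apply b.zero_of_le_dist
        simp only [mem_compl_iff, mem_closedBall, not_le] at hy
        exact hy.le
      have h1 : gradient b q = 0 := by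
        simp only [gradient, hz.fderiv_eq]; simp
      have h2 : b q = 0 := hz.self_of_nhds
      simp only [h1, h2, smul_zero, add_zero, mul_zero]
      exact H_le hH hφ hu1 hK q
  set F : Euc d × ℝ → ℝ := fun x => u x.1 + ε * (1 + x.2) * b x.1 with hFdef
  have hF : ContDiff ℝ 1 F := by
    have h1 : ContDiff ℝ 1 fun x : Euc d × ℝ => u x.1 := hu1.comp contDiff_fst
    have h2 : ContDiff ℝ 1 fun x : Euc d × ℝ => b x.1 := hb.comp contDiff_fst
    fun_prop
  have hFd : ∀ q s v, fderiv ℝ F (q, s) (v, 1) =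
      ⟪gradient u q + (ε * (1 + s)) • gradient b q, v⟫ + ε * b q := by
    intro q s v
    have h1 := ((hu1.differentiable (by norm_num) q).hasFDerivAt).comp (q, s)
      (hasFDerivAt_fst (𝕜 := ℝ) (p := (q, s)))
    have h2 := ((hb.differentiable (by norm_num) q).hasFDerivAt).comp (q, s)
      (hasFDerivAt_fst (𝕜 := ℝ) (p := (q, s)))
    have h3 := ((hasFDerivAt_snd (𝕜 := ℝ) (p := (q, s))).const_add 1).const_mul ε
    have h4 := h1.add (h3.mul h2)
    have h5 : HasFDerivAt F _ (q, s) := h4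
    rw [h5.fderiv, inner_add_left, inner_smul_left, inner_gradient (hu1.differentiable (by norm_num) q),
      inner_gradient (hb.differentiable (by norm_num) q)]
    simp
    ring
  have hlow : ∀ r' ∈ LOvals (LegendreL H) 0 c 0 u 1 q0, u q0 + ε ≤ r' := by
    intro r' hr'
    obtain ⟨γ, γ', hac, hγ0, hi, rfl⟩ := lo_mem.1 hr'
    have := ac_chain (by norm_num) hac hF hi (by
      intro s hs
      rw [hFd]
      have h1 := key (γ s) s hs
      have h2 := fenchel hH (γ s) (γ' s) (gradient u (γ s) + (ε * (1 + s)) • gradient b (γ s))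
      linarith)
    rw [hγ0] at this
    simp only [hFdef] at this
    have hb0 : b q0 = 1 := b.one_of_mem_closedBall (mem_closedBall_self (by positivity))
    rw [hb0] at this
    norm_num at this
    linarith
  have hne : (LOvals (LegendreL H) 0 c 0 u 1 q0).Nonempty := by
    refine ⟨_, lo_mem.2 ⟨fun _ => q0, fun _ => 0, ⟨by simp, by simp⟩, rfl, by simp, rfl⟩⟩
  have := le_csInf hne hlow
  have h2 := hK.2.2 1 one_pos q0
  unfold LaxOleinik at h2
  rw [h2] at this
  linarith
end KAM

namespace KAM
section peano
variable {E : Type*} [NormedAddCommGroup E] [NormedSpace ℝ E] [CompleteSpace E]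

def shrink (τ r : ℝ) : ℝ := r - max (-τ) (min τ r)

lemma shrink_cont (τ : ℝ) : Continuous (shrink τ) := by unfold shrink; fun_prop

lemma shrink_sub {τ : ℝ} (hτ : 0 ≤ τ) (r : ℝ) : |r - shrink τ r| ≤ τ := by
  unfold shrink
  rw [sub_sub_cancel, abs_le]
  exact ⟨le_max_left _ _, max_le (by linarith) (min_le_left _ _)⟩

lemma shrink_le {τ : ℝ} (hτ : 0 ≤ τ) (r a : ℝ) (ha : 0 ≤ a) (hr : |r| ≤ a + τ) : |shrink τ r| ≤ a := by
  unfold shrink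
  rw [abs_le] at *
  rcases max_cases (-τ) (min τ r) with h | h <;> rcases min_cases τ r with h' | h' <;>
    constructor <;> linarith

def peanoIt (X : E → E) (q : E) (τ : ℝ) : ℕ → ℝ → E
  | 0 => fun _ => q
  | n + 1 => fun s => q + ∫ r in (0:ℝ)..s, X (peanoIt X q τ n (shrink τ r))

lemma approx_peano {X : E → E} (hX : Continuous X) {V : ℝ} (hV : ∀ x, ‖X x‖ ≤ V)
    (hu : ∀ ε > 0, ∃ δ > 0, ∀ x y, dist x y < δ → dist (X x) (X y) < ε) {ε T : ℝ} (hε : 0 < ε)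
    (q : E) : ∃ γ γ' : ℝ → E, (∀ s, HasDerivAt γ (γ' s) s) ∧ Continuous γ' ∧ γ 0 = q ∧
      ∀ s, |s| ≤ T → ‖γ' s - X (γ s)‖ ≤ ε := by
  obtain ⟨δ, hδ, hδ'⟩ := hu ε hε
  have hV0 : 0 ≤ V := (norm_nonneg _).trans (hV 0)
  set τ := δ / (V + 1) with hτdef
  have hτ : 0 < τ := by positivity
  have hVτ : V * τ < δ := by
    rw [hτdef, mul_div_assoc', div_lt_iff₀ (by positivity)]; nlinarith
  have hc : ∀ n, Continuous (peanoIt X q τ n) := by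
    intro n
    induction n with
    | zero => exact continuous_const
    | succ n ih =>
      have : Continuous fun r => X (peanoIt X q τ n (shrink τ r)) := hX.comp (ih.comp (shrink_cont τ))
      refine continuous_const.add (continuous_iff_continuousAt.2 fun s => ?_)
      exact (this.integral_hasStrictDerivAt 0 s).hasDerivAt.continuousAt
  have hc' : ∀ n, Continuous fun r => X (peanoIt X q τ n (shrink τ r)) := fun n =>
    hX.comp ((hc n).comp (shrink_cont τ))
  have hd : ∀ n s, HasDerivAt (peanoIt X q τ (n+1)) (X (peanoIt X q τ n (shrink τ s))) s := fun n s =>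
    ((hc' n).integral_hasStrictDerivAt 0 s).hasDerivAt.const_add q
  have hst : ∀ n : ℕ, ∀ s, |s| ≤ n * τ → peanoIt X q τ (n+1) s = peanoIt X q τ n s := by
    intro n
    induction n with
    | zero =>
      intro s hs
      have : s = 0 := by simpa using hs
      simp [peanoIt, this]
    | succ n ih =>
      intro s hs
      change q + _ = q + _
      congr 1
      apply intervalIntegral.integral_congr
      intro r hr
      have h1 : |r| ≤ |s| := by
        have := abs_sub_left_of_mem_uIcc hr
        simpa using this
      simp only
      rw [ih]
      apply shrink_le hτ.le _ _ (by positivity)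
      push_cast at hs
      linarith
  obtain ⟨N, hN⟩ := exists_nat_ge (T / τ)
  have hN' : T ≤ N * τ := by rwa [div_le_iff₀ hτ] at hN
  refine ⟨peanoIt X q τ (N+1), _, hd N, hc' N, by simp [peanoIt], fun s hs => ?_⟩
  have h1 : |shrink τ s| ≤ N * τ := shrink_le hτ.le _ _ (by positivity) (by linarith)
  rw [← hst N _ h1, ← dist_eq_norm]
  refine (hδ' _ _ ?_).le
  have h2 : ‖peanoIt X q τ (N+1) (shrink τ s) - peanoIt X q τ (N+1) s‖ ≤ V * ‖shrink τ s - s‖ :=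
    Convex.norm_image_sub_le_of_norm_hasDerivWithin_le (s := univ)
      (fun x _ => (hd N x).hasDerivWithinAt) (fun x _ => hV _) convex_univ (mem_univ _) (mem_univ _)
  rw [dist_eq_norm]
  refine h2.trans_lt (lt_of_le_of_lt ?_ hVτ)
  gcongr
  rw [Real.norm_eq_abs, abs_sub_comm]
  exact shrink_sub hτ.le s

lemma two_sided {f : E → E} {S : Set E} {K : NNReal} (hK : 1 ≤ (K:ℝ)) (hf : LipschitzOnWith K f S)
    {Z Z' y : ℝ → E} {T ε : ℝ} (hZ : ∀ t, HasDerivAt Z (Z' t) t) (hy : ∀ t, HasDerivAt y (f (y t)) t)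
    (hZS : ∀ t, |t| ≤ T → Z t ∈ S) (hyS : ∀ t, |t| ≤ T → y t ∈ S)
    (hZf : ∀ t, |t| ≤ T → ‖Z' t - f (Z t)‖ ≤ ε) (h0 : Z 0 = y 0) (t : ℝ) (ht : |t| ≤ T) :
    dist (Z t) (y t) ≤ ε * Real.exp (K * T) := by
  have hT : 0 ≤ T := (abs_nonneg _).trans ht
  have hε : 0 ≤ ε := (norm_nonneg _).trans (hZf t ht)
  have main : ∀ (f : E → E) (Z Z' y : ℝ → E), LipschitzOnWith K f S → (∀ t, HasDerivAt Z (Z' t) t) →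
      (∀ t, HasDerivAt y (f (y t)) t) → (∀ t, |t| ≤ T → Z t ∈ S) → (∀ t, |t| ≤ T → y t ∈ S) →
      (∀ t, |t| ≤ T → ‖Z' t - f (Z t)‖ ≤ ε) → Z 0 = y 0 → ∀ t ∈ Icc 0 T,
      dist (Z t) (y t) ≤ ε * Real.exp (K * T) := by
    intro f Z Z' y hf hZ hy hZS hyS hZf h0 t ht
    have hab : ∀ t ∈ Ico 0 T, |t| ≤ T := fun t ht => by rw [abs_of_nonneg ht.1]; exact ht.2.le
    have := dist_le_of_approx_trajectories_ODE_of_mem (v := fun _ => f) (s := fun _ => S) (K := K)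
      (f := Z) (g := y) (f' := Z') (g' := fun t => f (y t)) (a := 0) (b := T) (εf := ε) (εg := 0) (δ := 0)
      (fun t _ => hf) (continuous_iff_continuousAt.2 fun t => (hZ t).continuousAt).continuousOn
      (fun t _ => (hZ t).hasDerivWithinAt) (fun t ht => by rw [dist_eq_norm]; exact hZf t (hab t ht))
      (fun t ht => hZS t (hab t ht)) (continuous_iff_continuousAt.2 fun t => (hy t).continuousAt).continuousOn
      (fun t _ => (hy t).hasDerivWithinAt) (fun t ht => by simp)
      (fun t ht => hyS t (hab t ht)) (by simp [h0]) t ht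
    refine this.trans ?_
    rw [gronwallBound_of_K_ne_0 (by positivity)]
    simp only [zero_mul, zero_add, sub_zero, add_zero]
    have h1 : ε / K ≤ ε := div_le_self hε hK
    have h2 : Real.exp (K * t) ≤ Real.exp (K * T) := Real.exp_le_exp.2 (by gcongr; exact ht.2)
    have h3 : 1 ≤ Real.exp (K * t) := Real.one_le_exp (mul_nonneg K.2 ht.1)
    exact mul_le_mul h1 (by linarith) (by linarith) hε
  rcases le_total 0 t with h | h
  · exact main f Z Z' y hf hZ hy hZS hyS hZf h0 t ⟨h, (le_abs_self _).trans ht⟩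
  · have := main (fun x => - f x) (fun t => Z (-t)) (fun t => - Z' (-t)) (fun t => y (-t))
      (by
        intro a ha b hb
        have := hf ha hb
        simpa [edist_neg_neg] using this)
      (fun t => by simpa [Function.comp_def] using (hZ (-t)).scomp t (hasDerivAt_neg t))
      (fun t => by simpa [Function.comp_def] using (hy (-t)).scomp t (hasDerivAt_neg t))
      (fun t ht => hZS _ (by simpa using ht)) (fun t ht => hyS _ (by simpa using ht))
      (fun t ht => by
        have := hZf (-t) (by simpa using ht)
        have e : -Z' (-t) - -f (Z (-t)) = -(Z' (-t) - f (Z (-t))) := by abel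
        change ‖-Z' (-t) - -f (Z (-t))‖ ≤ ε
        rw [e, norm_neg]
        exact this) (by simpa using h0) (-t) ⟨by linarith, by rwa [abs_of_nonpos h] at ht⟩
    simpa using this
end peano

variable {d : ℕ} {H : Phase d → ℝ} {u : Euc d → ℝ}

lemma per_unif {F : Type*} [PseudoMetricSpace F] {g : Euc d → F} (hg : Continuous g) (hp : PerFun g)
    (ε : ℝ) (hε : 0 < ε) : ∃ δ > 0, ∀ x y, dist x y < δ → dist (g x) (g y) < ε := by
  have huc := Metric.uniformContinuousOn_iff.1
    ((isCompact_closedBall (0 : Euc d) (d + 1)).uniformContinuousOn_of_continuous hg.continuousOn)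
  obtain ⟨δ, hδ, h⟩ := huc ε hε
  refine ⟨min δ 1, by positivity, fun x y hxy => ?_⟩
  obtain ⟨k, hk⟩ := per_reduce x
  rw [← hp k x, ← hp k y]
  have h1 : dist (x + intVec k) (y + intVec k) < min δ 1 := by simpa using hxy
  refine h _ ?_ _ ?_ (h1.trans_le (min_le_left _ _))
  · simp; linarith
  · have := norm_le_norm_add_norm_sub' (y + intVec k) (x + intVec k)
    rw [← dist_eq_norm, dist_comm] at this
    have h2 := h1.trans_le (min_le_right _ _)
    simp only [mem_closedBall, dist_zero_right]
    linarith

lemma grad_dist (x y : Euc d) : dist (gradient u x) (gradient u y) = dist (fderiv ℝ u x) (fderiv ℝ u y) := by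
  simp [gradient]

lemma u_lin (hu1 : ContDiff ℝ 1 u) {κ δ : ℝ} (h : ∀ x y, dist x y < δ → dist (gradient u x) (gradient u y) < κ)
    (x v : Euc d) (hv : ‖v‖ < δ) : |u (x + v) - u x - ⟪gradient u x, v⟫| ≤ κ * ‖v‖ := by
  have hd := hu1.differentiable (by norm_num)
  rw [inner_gradient (hd x)]
  have := Convex.norm_image_sub_le_of_norm_fderiv_le' (𝕜 := ℝ) (f := u) (s := ball x δ) (φ := fderiv ℝ u x)
    (x := x) (y := x + v) (C := κ) (fun y _ => hd y) (fun y hy => by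
      rw [← dist_eq_norm, ← grad_dist]
      exact (h y x hy).le) (convex_ball _ _) (mem_ball_self ((norm_nonneg _).trans_lt hv)) (by simpa using hv)
  simpa using this

/-- bundled standing assumptions -/
structure Std (H : Phase d → ℝ) (φ : ℝ → Phase d → Phase d) (u : Euc d → ℝ) : Prop where
  hH : TonelliHam H
  hφ : IsConformalFlow H 0 φ
  hu1 : ContDiff ℝ 1 u
  hup : PerFun u
  hK : IsWeakKAM H u

variable {φ : ℝ → Phase d → Phase d}

/-- point of the graph -/
def gp (u : Euc d → ℝ) (q : Euc d) : Phase d := (q, gradient u q)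

lemma gp_cont (hu1 : ContDiff ℝ 1 u) : Continuous (gp u) :=
  continuous_id.prodMk (grad_cont hu1)

lemma fgp_cont (h : Std H φ u) : Continuous fun q => hamVF H 0 (gp u q) :=
  (ham_contDiff h.hH.smooth).continuous.comp (gp_cont h.hu1)

lemma fgp_per (h : Std H φ u) : PerFun fun q => hamVF H 0 (gp u q) := by
  intro k q
  simp only [gp, grad_per h.hup k q, per_ham h.hH.periodic k q]

lemma u_curve (h : Std H φ u) {γ γ' : ℝ → Euc d} (hd : ∀ s, HasDerivAt γ (γ' s) s) (hc : Continuous γ')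
    (a b : ℝ) : ∫ s in a..b, ⟪gradient u (γ s), γ' s⟫ = u (γ b) - u (γ a) := by
  have hγc : Continuous γ := continuous_iff_continuousAt.2 fun s => (hd s).continuousAt
  apply intervalIntegral.integral_eq_sub_of_hasDerivAt
  · intro s _
    rw [inner_gradient (h.hu1.differentiable (by norm_num) _)]
    exact ((h.hu1.differentiable (by norm_num) _).hasFDerivAt).comp_hasDerivAt s (hd s)
  · exact (((grad_cont h.hu1).comp hγc).inner hc).intervalIntegrable _ _

/-- Comparison with a perturbed curve. -/
lemma pert (h : Std H φ u) : ∃ K : ℝ, 0 ≤ K ∧ ∀ (a b : ℝ), a ≤ b → ∀ (γ γ' δ δ' : ℝ → Euc d) (ε1 ε2 : ℝ),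
    (∀ s, HasDerivAt γ (γ' s) s) → Continuous γ' → (∀ s, HasDerivAt δ (δ' s) s) → Continuous δ' →
    ε1 ≤ 1 → ε2 ≤ 1 →
    (∀ s ∈ Icc a b, ‖δ s‖ ≤ ε1) →
    (∀ s ∈ Icc a b, ‖γ' s + δ' s - (hamVF H 0 (gp u (γ s))).1‖ ≤ ε2) →
    u (γ b + δ b) - u (γ a + δ a) ≤ u (γ b) - u (γ a) + (∫ s in a..b, (⟪gradient u (γ s), δ' s⟫ +
      ⟪(hamVF H 0 (gp u (γ s))).2, δ s⟫)) + K * (ε1 ^ 2 + ε2 ^ 2) * (b - a) := by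
  obtain ⟨P, _, hP⟩ := per_bound (grad_cont h.hu1) (grad_per h.hup)
  obtain ⟨K, hK0, hK⟩ := leg_upper h.hH P
  refine ⟨K, hK0, fun a b hab γ γ' δ δ' ε1 ε2 hd hc hdδ hcδ he1 he2 h1 h2 => ?_⟩
  have hγc : Continuous γ := continuous_iff_continuousAt.2 fun s => (hd s).continuousAt
  have hδc : Continuous δ := continuous_iff_continuousAt.2 fun s => (hdδ s).continuousAt
  have hgγ : Continuous fun s => gradient u (γ s) := (grad_cont h.hu1).comp hγc
  have hfγ : Continuous fun s => hamVF H 0 (gp u (γ s)) := (fgp_cont h).comp hγc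
  set c := maneCritical H
  have c1 : Continuous fun s => ⟪gradient u (γ s), γ' s⟫ := hgγ.inner hc
  have c2 : Continuous fun s => ⟪gradient u (γ s), δ' s⟫ + ⟪(hamVF H 0 (gp u (γ s))).2, δ s⟫ :=
    (hgγ.inner hcδ).add (hfγ.snd.inner hδc)
  have := dom h.hH h.hK hab (γ := fun s => γ s + δ s) (γ' := fun s => γ' s + δ' s)
    (fun s => (hd s).add (hdδ s)) (hc.add hcδ)
    (g := fun s => ⟪gradient u (γ s), γ' s⟫ +
      ((⟪gradient u (γ s), δ' s⟫ + ⟪(hamVF H 0 (gp u (γ s))).2, δ s⟫) + (K * (ε1 ^ 2 + ε2 ^ 2) - c)))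
    (c1.add (c2.add continuous_const)) (by
      intro s hs
      have n1 := h1 s hs
      have n2 := h2 s hs
      have := hK (γ s) (gradient u (γ s)) (δ s) (γ' s + δ' s - (hamVF H 0 (gp u (γ s))).1) (hP _)
        (n1.trans he1) (n2.trans he2)
      rw [show (γ s, gradient u (γ s)) = gp u (γ s) from rfl, add_sub_cancel] at this
      refine this.trans ?_
      have e : H (gp u (γ s)) = c := H_eq h.hH h.hφ h.hu1 h.hK (γ s)
      rw [e, inner_add_right]
      have m1 : ‖δ s‖ ^ 2 ≤ ε1 ^ 2 := by gcongr
      have m2 : ‖γ' s + δ' s - (hamVF H 0 (gp u (γ s))).1‖ ^ 2 ≤ ε2 ^ 2 := by gcongr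
      have : K * (‖δ s‖ ^ 2 + ‖γ' s + δ' s - (hamVF H 0 (gp u (γ s))).1‖ ^ 2) ≤ K * (ε1 ^ 2 + ε2 ^ 2) := by gcongr
      linarith)
  refine this.trans (le_of_eq ?_)
  have e2 : ∀ s, ⟪gradient u (γ s), γ' s⟫ +
      ((⟪gradient u (γ s), δ' s⟫ + ⟪(hamVF H 0 (gp u (γ s))).2, δ s⟫) + (K * (ε1 ^ 2 + ε2 ^ 2) - c)) + c =
      ⟪gradient u (γ s), γ' s⟫ + ((⟪gradient u (γ s), δ' s⟫ + ⟪(hamVF H 0 (gp u (γ s))).2, δ s⟫) +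
        K * (ε1 ^ 2 + ε2 ^ 2)) := fun s => by ring
  refine (intervalIntegral.integral_congr (g := fun s => ⟪gradient u (γ s), γ' s⟫ +
    ((⟪gradient u (γ s), δ' s⟫ + ⟪(hamVF H 0 (gp u (γ s))).2, δ s⟫) +
        K * (ε1 ^ 2 + ε2 ^ 2))) (fun s _ => e2 s)).trans ?_
  have c3 : Continuous fun s => (⟪gradient u (γ s), δ' s⟫ + ⟪(hamVF H 0 (gp u (γ s))).2, δ s⟫) +
      K * (ε1 ^ 2 + ε2 ^ 2) := c2.add continuous_const
  rw [intervalIntegral.integral_add (c1.intervalIntegrable _ _) (c3.intervalIntegrable _ _),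
    intervalIntegral.integral_add (c2.intervalIntegrable _ _) (by simp), u_curve h hd hc]
  simp
  ring
end KAM

namespace KAM
variable {d : ℕ} {H : Phase d → ℝ} {u : Euc d → ℝ} {φ : ℝ → Phase d → Phase d}

lemma norm_le_of_inner {w : Euc d} {C ρ : ℝ} (hρ : 0 < ρ) (hC : 0 ≤ C)
    (h : ∀ v, ‖v‖ = ρ → ⟪w, v⟫ ≤ C * ρ) : ‖w‖ ≤ C := by
  by_cases hw : w = 0
  · simpa [hw] using hC
  have hn : 0 < ‖w‖ := norm_pos_iff.2 hw
  have := h ((ρ / ‖w‖) • w) (by rw [norm_smul, norm_div, norm_norm, Real.norm_of_nonneg hρ.le]; field_simp)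
  rw [inner_smul_right, real_inner_self_eq_norm_sq] at this
  have e : ρ / ‖w‖ * ‖w‖ ^ 2 = ‖w‖ * ρ := by field_simp
  rw [e] at this
  exact le_of_mul_le_mul_right this hρ

lemma approx_orbit (h : Std H φ u) {T σ : ℝ} (hσ : 0 < σ) (hσ1 : σ ≤ 1) (hT : 0 ≤ T) (q : Euc d) :
    ∃ γ γ' : ℝ → Euc d, (∀ s, HasDerivAt γ (γ' s) s) ∧ Continuous γ' ∧ γ 0 = q ∧
      ∀ s, |s| ≤ T → ‖γ' s - (hamVF H 0 (gp u (γ s))).1‖ ≤ σ ∧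
        ‖gradient u (γ s) - gradient u q - ∫ r in (0:ℝ)..s, (hamVF H 0 (gp u (γ r))).2‖ ≤ σ := by
  obtain ⟨K, hK0, hK⟩ := pert h
  obtain ⟨δ, hδ, hδ'⟩ := per_unif (grad_cont h.hu1) (grad_per h.hup) (σ / 4) (by positivity)
  set ρ := min (min σ (δ / 2)) (σ / (4 * (K * T + 1)))
  have hKT : 0 ≤ K * T := by positivity
  have hρ : 0 < ρ := by positivity
  have hρσ : ρ ≤ σ := (min_le_left _ _).trans (min_le_left _ _)
  have hρδ : ρ < δ := ((min_le_left _ _).trans (min_le_right _ _)).trans_lt (by linarith)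
  have hρK : ρ * (4 * (K * T + 1)) ≤ σ := by
    rw [← le_div_iff₀ (by positivity)]; exact min_le_right _ _
  have hp1 : PerFun fun q => (hamVF H 0 (gp u q)).1 := fun k q => by
    simp only [show hamVF H 0 (gp u (q + intVec k)) = hamVF H 0 (gp u q) from fgp_per h k q]
  obtain ⟨V, _, hV⟩ := per_bound (fgp_cont h).fst hp1
  obtain ⟨γ, γ', h1, h2, h3, h4⟩ := approx_peano (T := T) (fgp_cont h).fst hV
    (per_unif (fgp_cont h).fst hp1) hρ q
  refine ⟨γ, γ', h1, h2, h3, fun s hs => ⟨(h4 s hs).trans hρσ, ?_⟩⟩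
  have hγc : Continuous γ := continuous_iff_continuousAt.2 fun s => (h1 s).continuousAt
  have hfγ : Continuous fun s => (hamVF H 0 (gp u (γ s))).2 := ((fgp_cont h).comp hγc).snd
  have main : ∀ a b, a ≤ b → |a| ≤ T → |b| ≤ T → b - a ≤ T →
      ‖gradient u (γ b) - gradient u (γ a) - ∫ r in a..b, (hamVF H 0 (gp u (γ r))).2‖ ≤ σ := by
    intro a b hab ha hb hba
    refine norm_le_of_inner hρ hσ.le fun v hv => ?_
    have k := hK a b hab γ γ' (fun _ => v) (fun _ => 0) ρ ρ h1 h2 (fun _ => hasDerivAt_const _ _)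
      continuous_const (hρσ.trans hσ1) (hρσ.trans hσ1) (fun _ _ => hv.le) (fun r hr => by
        rw [add_zero]
        refine h4 r (abs_le.2 ⟨?_, ?_⟩)
        · linarith [hr.1, (abs_le.1 ha).1]
        · linarith [hr.2, (abs_le.1 hb).2])
    have l1 := (abs_le.1 (u_lin h.hu1 hδ' (γ b) v (hv ▸ hρδ))).1
    have l2 := (abs_le.1 (u_lin h.hu1 hδ' (γ a) v (hv ▸ hρδ))).2
    simp only [inner_zero_right, zero_add] at k
    have e : ∫ r in a..b, ⟪(hamVF H 0 (gp u (γ r))).2, v⟫ = ⟪∫ r in a..b, (hamVF H 0 (gp u (γ r))).2, v⟫ := by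
      have := (innerSL ℝ v).intervalIntegral_comp_comm (hfγ.intervalIntegrable (μ := volume) a b)
      simp only [innerSL_apply_apply] at this
      rw [real_inner_comm, ← this]
      simp only [real_inner_comm]
    rw [e] at k
    rw [inner_sub_left, inner_sub_left]
    rw [hv] at l1 l2
    have m : K * (ρ ^ 2 + ρ ^ 2) * (b - a) ≤ K * (ρ ^ 2 + ρ ^ 2) * T := by gcongr
    have m2 : ρ * (ρ * (4 * (K * T + 1))) ≤ ρ * σ := by gcongr
    nlinarith [sq_nonneg ρ]
  rcases le_total 0 s with h0 | h0
  · have := main 0 s h0 (by simpa using hT) hs (by rw [abs_of_nonneg h0] at hs; linarith)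
    rwa [h3] at this
  · have := main s 0 h0 hs (by simpa using hT) (by rw [abs_of_nonpos h0] at hs; linarith)
    rw [h3, ← norm_neg, intervalIntegral.integral_symm] at this
    refine le_of_eq_of_le (congrArg _ ?_) this
    module

lemma ham_lip (hH : TonelliHam H) (P : ℝ) : ∃ L : NNReal, 1 ≤ (L : ℝ) ∧
    LipschitzOnWith L (hamVF H 0) ((univ : Set (Euc d)) ×ˢ closedBall (0 : Euc d) P) := by
  obtain ⟨C, hC0, hC⟩ := per_phase_bound ((ham_contDiff hH.smooth).continuous_fderiv (by norm_num))
    (per_fderiv (per_ham hH.periodic)) P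
  refine ⟨(C + 1).toNNReal, by rw [Real.coe_toNNReal _ (by positivity)]; linarith, ?_⟩
  apply (convex_univ.prod (convex_closedBall _ _)).lipschitzOnWith_of_nnnorm_fderiv_le (𝕜 := ℝ)
  · exact fun x _ => (ham_contDiff hH.smooth).differentiable (by norm_num) x
  · rintro ⟨x, y⟩ ⟨_, hy⟩
    have := hC x y (by simpa using hy)
    rw [← NNReal.coe_le_coe, Real.coe_toNNReal _ (by positivity), coe_nnnorm]
    linarith

lemma inv_graph (h : Std H φ u) (q : Euc d) (t : ℝ) :
    φ t (gp u q) = gp u (φ t (gp u q)).1 := by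
  set x := gp u q
  obtain ⟨P, hP0, hP⟩ := per_bound (grad_cont h.hu1) (grad_per h.hup)
  obtain ⟨B, hB⟩ := h.hH.superlinear 1
  set P1 := max (P + 1) (H x - B)
  obtain ⟨L, hL1, hL⟩ := ham_lip h.hH P1
  have hcl : IsClosed (range (gp u)) := by
    have : range (gp u) = {y : Phase d | y.2 = gradient u y.1} := by
      ext ⟨a, b⟩
      simp only [gp, mem_range, mem_ofPred_eq, Prod.mk.injEq]
      constructor
      · rintro ⟨y, rfl, rfl⟩; rfl
      · rintro rfl; exact ⟨a, rfl, rfl⟩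
    rw [this]
    exact isClosed_eq continuous_snd ((grad_cont h.hu1).comp continuous_fst)
  suffices φ t x ∈ range (gp u) by
    obtain ⟨y, hy⟩ := this
    rw [← hy]; rfl
  rw [← hcl.closure_eq, Metric.mem_closure_iff]
  intro ε hε
  set M := (L + 1) * Real.exp (L * |t|) + 1
  have hM : 0 < M := by positivity
  set σ := min 1 (ε / (2 * M))
  have hσ : 0 < σ := by positivity
  obtain ⟨γ, γ', h1, h2, h3, h4⟩ := approx_orbit h hσ (min_le_left _ _) (abs_nonneg t) q
  have hγc : Continuous γ := continuous_iff_continuousAt.2 fun s => (h1 s).continuousAt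
  have hfγ : Continuous fun s => (hamVF H 0 (gp u (γ s))).2 := ((fgp_cont h).comp hγc).snd
  set Z : ℝ → Phase d := fun s => (γ s, gradient u q + ∫ r in (0:ℝ)..s, (hamVF H 0 (gp u (γ r))).2)
  have hZ : ∀ s, HasDerivAt Z (γ' s, (hamVF H 0 (gp u (γ s))).2) s := fun s =>
    (h1 s).prodMk ((hfγ.integral_hasStrictDerivAt 0 s).hasDerivAt.const_add _)
  have hZg : ∀ s, |s| ≤ |t| → dist (Z s) (gp u (γ s)) ≤ σ := by
    intro s hs
    have := (h4 s hs).2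
    rw [Prod.dist_eq]
    simp only [Z, gp, dist_self]
    apply max_le hσ.le
    rw [dist_comm, dist_eq_norm, ← sub_sub]
    exact this
  have hgS : ∀ y, gp u y ∈ (univ : Set (Euc d)) ×ˢ closedBall (0 : Euc d) P1 := fun y =>
    ⟨trivial, by
      rw [mem_closedBall, dist_zero_right]
      exact (hP y).trans (le_trans (by linarith) (le_max_left _ _))⟩
  have hZS : ∀ s, |s| ≤ |t| → Z s ∈ (univ : Set (Euc d)) ×ˢ closedBall (0 : Euc d) P1 := fun s hs => by
    refine ⟨trivial, ?_⟩
    have h5 : dist (Z s).2 (gradient u (γ s)) ≤ σ := (le_max_right _ _).trans (hZg s hs)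
    rw [mem_closedBall]
    have h6 := dist_triangle (Z s).2 (gradient u (γ s)) 0
    have h7 := hP (γ s)
    rw [dist_zero_right (gradient u (γ s))] at h6
    have : σ ≤ 1 := min_le_left _ _
    refine le_trans ?_ (le_max_left _ _)
    linarith
  have hts := two_sided hL1 hL (Z := Z) (y := fun s => φ s x) (T := |t|) (ε := (L + 1) * σ) hZ
    (fun s => h.hφ.2.2 x s) hZS (fun s _ => ⟨trivial, by
      have e := energy h.hH.smooth h.hφ x s
      have b := hB (φ s x).1 (φ s x).2
      rw [mem_closedBall, dist_zero_right]
      refine le_trans ?_ (le_max_right _ _)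
      simp only [Prod.mk.eta] at b
      linarith⟩) (fun s hs => by
      have a1 : dist (hamVF H 0 (gp u (γ s))) (hamVF H 0 (Z s)) ≤ L * σ :=
        (hL.dist_le_mul _ (hgS _) _ (hZS s hs)).trans (by rw [dist_comm]; gcongr; exact hZg s hs)
      have a2 : dist ((γ' s, (hamVF H 0 (gp u (γ s))).2) : Phase d) (hamVF H 0 (gp u (γ s))) ≤ σ := by
        rw [Prod.dist_eq]
        simp only [dist_self]
        apply max_le _ hσ.le
        rw [dist_eq_norm]; exact (h4 s hs).1
      rw [← dist_eq_norm]
      refine (dist_triangle _ (hamVF H 0 (gp u (γ s))) _).trans ?_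
      linarith) (by simp [Z, h3, h.hφ.1, x, gp]) t le_rfl
  refine ⟨gp u (γ t), mem_range_self _, ?_⟩
  have h8 := dist_triangle (φ t x) (Z t) (gp u (γ t))
  have h9 := hZg t le_rfl
  rw [dist_comm (φ t x) (Z t)] at h8
  have : M * σ ≤ ε / 2 := by
    have : σ ≤ ε / (2 * M) := min_le_right _ _
    calc M * σ ≤ M * (ε / (2 * M)) := by gcongr
      _ = ε / 2 := by field_simp
  have e : M * σ = (L + 1) * σ * Real.exp (L * |t|) + σ := by simp only [M]; ring
  linarith

/-- projected flow -/
def psi (φ : ℝ → Phase d → Phase d) (u : Euc d → ℝ) (t : ℝ) (q : Euc d) : Euc d := (φ t (gp u q)).1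

/-- projected vector field -/
def vX (H : Phase d → ℝ) (u : Euc d → ℝ) (q : Euc d) : Euc d := (hamVF H 0 (gp u q)).1

lemma phi_gp (h : Std H φ u) (q : Euc d) (t : ℝ) : φ t (gp u q) = gp u (psi φ u t q) := inv_graph h q t

lemma psi_deriv (h : Std H φ u) (q : Euc d) (t : ℝ) :
    HasDerivAt (fun t => psi φ u t q) (vX H u (psi φ u t q)) t := by
  have := (hasFDerivAt_fst (𝕜 := ℝ) (p := φ t (gp u q))).comp_hasDerivAt t (h.hφ.2.2 (gp u q) t)
  rw [phi_gp h] at this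
  exact this

lemma grad_psi_deriv (h : Std H φ u) (q : Euc d) (t : ℝ) :
    HasDerivAt (fun t => gradient u (psi φ u t q)) (hamVF H 0 (gp u (psi φ u t q))).2 t := by
  have := (hasFDerivAt_snd (𝕜 := ℝ) (p := φ t (gp u q))).comp_hasDerivAt t (h.hφ.2.2 (gp u q) t)
  have e : (Prod.snd ∘ fun τ => φ τ (gp u q)) = fun t => gradient u (psi φ u t q) := by
    ext1 t; simp only [Function.comp]; rw [phi_gp h]; rfl
  rw [e, phi_gp h] at this
  exact this

lemma psi_zero (h : Std H φ u) (q : Euc d) : psi φ u 0 q = q := by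
  simp [psi, h.hφ.1, gp]

lemma psi_add (h : Std H φ u) (s t : ℝ) (q : Euc d) : psi φ u s (psi φ u t q) = psi φ u (s + t) q := by
  unfold psi
  rw [← h.hφ.2.1 s t, phi_gp h q t]
  rfl

lemma quad (h : Std H φ u) : ∃ K : ℝ, 0 ≤ K ∧ ∀ q v : Euc d, ‖v‖ ≤ 1 →
    |u (q + v) - u q - ⟪gradient u q, v⟫| ≤ K * ‖v‖ ^ 2 := by
  obtain ⟨K, hK0, hK⟩ := pert h
  refine ⟨2 * K, by positivity, fun q v hv => ?_⟩
  have hd := psi_deriv h q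
  have hγc : Continuous fun t => psi φ u t q := continuous_iff_continuousAt.2 fun s => (hd s).continuousAt
  have hX : Continuous fun t => vX H u (psi φ u t q) := ((fgp_cont h).comp hγc).fst
  have hf2 : Continuous fun t => (hamVF H 0 (gp u (psi φ u t q))).2 := ((fgp_cont h).comp hγc).snd
  have hgu : Continuous fun t => gradient u (psi φ u t q) := (grad_cont h.hu1).comp hγc
  have hI : ∀ a b c e : ℝ, ∫ s in a..b, (⟪gradient u (psi φ u s q), c • v⟫ +
      ⟪(hamVF H 0 (gp u (psi φ u s q))).2, (e + s * c) • v⟫) =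
      ⟪gradient u (psi φ u b q), (e + b * c) • v⟫ - ⟪gradient u (psi φ u a q), (e + a * c) • v⟫ := by
    intro a b c e
    apply intervalIntegral.integral_eq_sub_of_hasDerivAt
      (f := fun s => ⟪gradient u (psi φ u s q), (e + s * c) • v⟫)
    · intro s _
      have l : HasDerivAt (fun s : ℝ => (e + s * c) • v) (c • v) s := by
        have := (((hasDerivAt_id' s).mul_const c).const_add e).smul_const v
        simpa using this
      exact (grad_psi_deriv h q s).inner ℝ l
    · have c1 : Continuous fun s => ⟪gradient u (psi φ u s q), c • v⟫ := hgu.inner continuous_const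
      have c2 : Continuous fun s => ⟪(hamVF H 0 (gp u (psi φ u s q))).2, (e + s * c) • v⟫ :=
        hf2.inner (by fun_prop)
      exact (c1.add c2).intervalIntegrable _ _
  have key : ∀ (a b c e : ℝ), a ≤ b → |c| ≤ 1 → (∀ s ∈ Icc a b, |e + s * c| ≤ 1) →
      u (psi φ u b q + (e + b * c) • v) - u (psi φ u a q + (e + a * c) • v) ≤
      u (psi φ u b q) - u (psi φ u a q) + (⟪gradient u (psi φ u b q), (e + b * c) • v⟫
        - ⟪gradient u (psi φ u a q), (e + a * c) • v⟫) + K * (‖v‖ ^ 2 + ‖v‖ ^ 2) * (b - a) := by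
    intro a b c e hab hc he
    rw [← hI]
    refine hK a b hab _ _ (fun s => (e + s * c) • v) (fun s => c • v) ‖v‖ ‖v‖ hd hX (fun s => ?_)
      continuous_const hv hv (fun s hs => ?_) (fun s hs => ?_)
    · have := (((hasDerivAt_id' s).mul_const c).const_add e).smul_const v
      simpa using this
    · rw [norm_smul]
      exact mul_le_of_le_one_left (norm_nonneg _) (he s hs)
    · simp only [vX, add_sub_cancel_left]
      rw [norm_smul]
      exact mul_le_of_le_one_left (norm_nonneg _) hc
  have k1 := key (-1) 0 1 1 (by norm_num) (by norm_num) (fun s hs => by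
    rw [abs_le]; constructor <;> linarith [hs.1, hs.2])
  have k2 := key 0 1 (-1) 1 (by norm_num) (by norm_num) (fun s hs => by
    rw [abs_le]; constructor <;> linarith [hs.1, hs.2])
  norm_num [psi_zero h] at k1 k2
  rw [abs_le, inner_gradient (h.hu1.differentiable (by norm_num) q)]
  constructor <;> linarith

lemma grad_lip (h : Std H φ u) : ∃ L : NNReal, LipschitzWith L (gradient u) := by
  obtain ⟨K, hK0, hK⟩ := quad h
  obtain ⟨P, hP0, hP⟩ := per_bound (grad_cont h.hu1) (grad_per h.hup)
  refine ⟨(6 * K + 4 * P).toNNReal, LipschitzWith.of_dist_le_mul fun y x => ?_⟩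
  rw [Real.coe_toNNReal _ (by positivity)]
  rcases eq_or_ne y x with rfl | hne
  · simp
  have hρ : 0 < dist y x := dist_pos.2 hne
  set ρ := dist y x with hρd
  rcases le_or_gt ρ (1/2) with h1 | h1
  · rw [dist_eq_norm]
    have : ‖gradient u y - gradient u x‖ ≤ 6 * K * ρ := by
      refine norm_le_of_inner hρ (by positivity) fun v hv => ?_
      have hyx : ‖y - x‖ = ρ := by rw [hρd, dist_eq_norm]
      have n : ‖(y - x) + v‖ ≤ 2 * ρ := (norm_add_le _ _).trans (by linarith)
      have e1 := (abs_le.1 (hK x (y - x + v) (n.trans (by linarith)))).2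
      have e2 := (abs_le.1 (hK x (y - x) (by linarith))).1
      have e3 := (abs_le.1 (hK y v (by linarith))).1
      rw [show x + (y - x + v) = y + v by abel, inner_add_right] at e1
      rw [show x + (y - x) = y by abel] at e2
      rw [hyx] at e2
      rw [hv] at e3
      have : K * ‖y - x + v‖ ^ 2 ≤ K * (2 * ρ) ^ 2 := by gcongr
      rw [inner_sub_left]
      nlinarith
    nlinarith
  · have := dist_triangle (gradient u y) 0 (gradient u x)
    rw [dist_zero_right, dist_zero_left] at this
    have := hP x
    have := hP y
    nlinarith
end KAM

namespace KAM
variable {d : ℕ} {H : Phase d → ℝ} {u : Euc d → ℝ} {φ : ℝ → Phase d → Phase d}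

lemma vX_lip (h : Std H φ u) : ∃ L : NNReal, LipschitzWith L (vX H u) := by
  obtain ⟨P, hP0, hP⟩ := per_bound (grad_cont h.hu1) (grad_per h.hup)
  obtain ⟨L, _, hL⟩ := ham_lip h.hH P
  obtain ⟨L2, hL2⟩ := grad_lip h
  have h1 : LipschitzWith (max 1 L2) (gp u) := LipschitzWith.id.prodMk hL2
  have h2 : LipschitzOnWith L (hamVF H 0) (range (gp u)) := hL.mono (by
    rintro _ ⟨y, rfl⟩
    exact ⟨trivial, by rw [mem_closedBall, dist_zero_right]; exact hP y⟩)
  have h3 := h2.comp h1.lipschitzOnWith (s := univ) (fun y _ => mem_range_self y)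
  have h4 := LipschitzWith.prod_fst.comp (lipschitzOnWith_univ.1 h3)
  exact ⟨_, h4⟩

lemma vX_cont (h : Std H φ u) : Continuous (vX H u) := (fgp_cont h).fst

lemma vX_per (h : Std H φ u) : PerFun (vX H u) := fun k q => by
  simp only [vX, show hamVF H 0 (gp u (q + intVec k)) = hamVF H 0 (gp u q) from fgp_per h k q]

lemma gron {X : Euc d → Euc d} {K : NNReal} (hX : LipschitzWith K X) {f g : ℝ → Euc d}
    (hf : ∀ t, HasDerivAt f (X (f t)) t) (hg : ∀ t, HasDerivAt g (X (g t)) t) (t : ℝ) :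
    dist (f t) (g t) ≤ dist (f 0) (g 0) * Real.exp (K * |t|) := by
  have main : ∀ {X : Euc d → Euc d} {f g : ℝ → Euc d}, LipschitzWith K X →
    (∀ t, HasDerivAt f (X (f t)) t) → (∀ t, HasDerivAt g (X (g t)) t) → ∀ t, 0 ≤ t →
    dist (f t) (g t) ≤ dist (f 0) (g 0) * Real.exp (K * t) := by
    intro X f g hX hf hg t ht
    have := dist_le_of_trajectories_ODE (v := fun _ => X) (a := 0) (b := t) (fun _ => hX)
      (fun s _ => (hf s).continuousAt.continuousWithinAt) (fun s _ => (hf s).hasDerivWithinAt)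
      (fun s _ => (hg s).continuousAt.continuousWithinAt) (fun s _ => (hg s).hasDerivWithinAt) le_rfl
      t ⟨ht, le_rfl⟩
    simpa using this
  rcases le_total 0 t with h | h
  · rw [abs_of_nonneg h]; exact main hX hf hg t h
  · have hneg : ∀ {f : ℝ → Euc d}, (∀ t, HasDerivAt f (X (f t)) t) → ∀ t,
        HasDerivAt (fun s => f (-s)) ((fun y => -X y) (f (-t))) t := by
      intro f hf t
      have := (hf (-t)).scomp t (hasDerivAt_neg' t)
      simpa [Function.comp_def] using this
    have hX' : LipschitzWith K fun y => -X y := hX.neg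
    have := main hX' (hneg hf) (hneg hg) (-t) (by linarith)
    rw [abs_of_nonpos h]
    simpa using this

lemma psi_lip (h : Std H φ u) : ∃ K : NNReal, ∀ t, LipschitzWith (Real.exp (K * |t|)).toNNReal (psi φ u t) := by
  obtain ⟨K, hK⟩ := vX_lip h
  refine ⟨K, fun t => LipschitzWith.of_dist_le_mul fun x y => ?_⟩
  rw [Real.coe_toNNReal _ (Real.exp_pos _).le, mul_comm]
  have := gron hK (psi_deriv h x) (psi_deriv h y) t
  rwa [psi_zero h, psi_zero h] at this

lemma psi_per (h : Std H φ u) (t : ℝ) (q : Euc d) (k : Fin d → ℤ) :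
    psi φ u t (q + intVec k) = psi φ u t q + intVec k := by
  obtain ⟨K, hK⟩ := vX_lip h
  have := gron hK (psi_deriv h (q + intVec k)) (g := fun t => psi φ u t q + intVec k) (fun t => by
    rw [vX_per h]
    exact (psi_deriv h q t).add_const _) t
  simp only [psi_zero h, dist_self, zero_mul] at this
  exact dist_le_zero.1 this

lemma psi_inv (h : Std H φ u) (t : ℝ) (q : Euc d) : psi φ u (-t) (psi φ u t q) = q := by
  rw [psi_add h, neg_add_cancel, psi_zero h]

/-- derivative comparison through a Lipschitz map -/
lemma deriv_lip {g f1 f2 : Euc d → Euc d} {C : NNReal} (hg : LipschitzWith C g) {q : Euc d}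
    {D1 D2 : Euc d →L[ℝ] Euc d} (h1 : HasFDerivAt f1 D1 q) (h2 : HasFDerivAt f2 D2 q)
    (he : ∀ y, f2 y = g (f1 y)) (v : Euc d) : ‖D2 v‖ ≤ C * ‖D1 v‖ := by
  have l : HasDerivAt (fun t : ℝ => q + t • v) v 0 := by
    have := ((hasDerivAt_id' (0:ℝ)).smul_const v).const_add q
    simpa using this
  have q0 : q = q + (0:ℝ) • v := by simp
  rw [q0] at h1 h2
  have t1 := (hasDerivAt_iff_tendsto_slope.1 (h1.comp_hasDerivAt 0 l)).norm
  have t2 := (hasDerivAt_iff_tendsto_slope.1 (h2.comp_hasDerivAt 0 l)).norm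
  refine le_of_tendsto_of_tendsto t2 (t1.const_mul (C:ℝ)) (Eventually.of_forall fun t => ?_)
  simp only [slope, vsub_eq_sub, Function.comp, norm_smul, he]
  have := hg.dist_le_mul (f1 (q + t • v)) (f1 (q + (0:ℝ) • v))
  rw [dist_eq_norm, dist_eq_norm] at this
  calc _ ≤ ‖(t - 0)⁻¹‖ * (C * ‖f1 (q + t • v) - f1 (q + (0:ℝ) • v)‖) := by gcongr
    _ = _ := by ring

lemma grad_sym (hu1 : ContDiff ℝ 1 u) {q : Euc d} {A : Euc d →L[ℝ] Euc d}
    (hA : HasFDerivAt (gradient u) A q) (v w : Euc d) : ⟪A v, w⟫ = ⟪v, A w⟫ := by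
  have h1 : ∀ y, HasFDerivAt u (innerSL ℝ (gradient u y)) y := fun y => by
    have := (hu1.differentiable (by norm_num) y).hasFDerivAt
    refine this.congr_fderiv (ContinuousLinearMap.ext fun v => ?_)
    rw [innerSL_apply_apply, inner_gradient (hu1.differentiable (by norm_num) y)]
  have h2 : HasFDerivAt (fun y => innerSL ℝ (gradient u y)) ((innerSL ℝ).comp A) q :=
    (innerSL ℝ (E := Euc d)).hasFDerivAt.comp q hA
  have := second_derivative_symmetric h1 h2 v w
  simp only [ContinuousLinearMap.comp_apply, innerSL_apply_apply] at this
  rw [this, real_inner_comm]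

lemma alexandrov (hu1 : ContDiff ℝ 1 u) {q : Euc d} {A : Euc d →L[ℝ] Euc d}
    (hA : HasFDerivAt (gradient u) A q) : HasAlexandrovAt u (gradient u q) A q := by
  have hd := hu1.differentiable (by norm_num)
  refine ⟨(hd q).hasGradientAt, ?_⟩
  have hs := grad_sym hu1 hA
  rw [isLittleO_iff]
  intro c hc
  have ho := hA.isLittleO
  rw [isLittleO_iff] at ho
  obtain ⟨r, hr, hr'⟩ := Metric.eventually_nhds_iff_ball.1 (ho hc)
  filter_upwards [ball_mem_nhds q hr] with y hy
  have hgd : ∀ x, HasFDerivAt (fun y => u y - u q - ⟪gradient u q, y - q⟫ - (1/2) * ⟪A (y - q), y - q⟫)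
      (innerSL ℝ (gradient u x - gradient u q - A (x - q))) x := by
    intro x
    have e1 := (hd x).hasFDerivAt.sub_const (u q)
    have e2 := (hasFDerivAt_const (gradient u q) x).inner ℝ ((hasFDerivAt_id x).sub_const q)
    have e3 := ((A.hasFDerivAt.comp x ((hasFDerivAt_id x).sub_const q)).inner ℝ
      ((hasFDerivAt_id x).sub_const q)).const_mul (1/2)
    refine ((e1.sub e2).sub e3).congr_fderiv ?_
    ext v
    simp only [innerSL_apply_apply, inner_sub_left, inner_gradient (hd x)]
    simp [hs v]
    rw [real_inner_comm v]; ring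
  have := (convex_closedBall q (dist y q)).norm_image_sub_le_of_norm_hasFDerivWithin_le (𝕜 := ℝ)
    (C := c * dist y q) (fun x _ => (hgd x).hasFDerivWithinAt) (fun x hx => by
      rw [innerSL_apply_norm]
      refine (hr' x (mem_ball.2 (lt_of_le_of_lt hx hy))).trans ?_
      rw [← dist_eq_norm]
      gcongr
      exact hx) (mem_closedBall_self dist_nonneg) (mem_closedBall.2 le_rfl)
  simp only [sub_self, inner_zero_right, mul_zero, sub_zero] at this
  rw [← dist_eq_norm y q] at this
  refine this.trans (le_of_eq ?_)
  rw [dist_eq_norm, Real.norm_eq_abs, abs_of_nonneg (by positivity : 0 ≤ ‖y - q‖ ^ 2)]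
  ring
end KAM

namespace KAM
variable {d : ℕ} {H : Phase d → ℝ} {u : Euc d → ℝ} {φ : ℝ → Phase d → Phase d}

lemma om_flow (hs : ContDiff ℝ 2 H) {γ : ℝ → Phase d} {R : ℝ → Phase d →L[ℝ] Phase d} (hR0 : R 0 = 1)
    (hR : ∀ t, HasDerivAt R (fderiv ℝ (hamVF H 0) (γ t) * R t) t) (a b : Phase d) (t : ℝ) :
    om (R t a) (R t b) = om a b := by
  have hd : ∀ a t, HasDerivAt (fun t => R t a) (fderiv ℝ (hamVF H 0) (γ t) (R t a)) t := fun a t => by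
    have := (hR t).clm_apply (hasDerivAt_const t a)
    simpa using this
  have h1 : ∀ a t, HasDerivAt (fun t => (R t a).1) (fderiv ℝ (hamVF H 0) (γ t) (R t a)).1 t := fun a t =>
    (ContinuousLinearMap.fst ℝ (Euc d) (Euc d)).hasFDerivAt.comp_hasDerivAt t (hd a t)
  have h2 : ∀ a t, HasDerivAt (fun t => (R t a).2) (fderiv ℝ (hamVF H 0) (γ t) (R t a)).2 t := fun a t =>
    (ContinuousLinearMap.snd ℝ (Euc d) (Euc d)).hasFDerivAt.comp_hasDerivAt t (hd a t)
  have h3 : ∀ t, HasDerivAt (fun t => om (R t a) (R t b)) 0 t := fun t => by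
    have := ((h1 a t).inner ℝ (h2 b t)).sub ((h2 a t).inner ℝ (h1 b t))
    refine this.congr_deriv ?_
    have e := om_symm hs (γ t) (R t a) (R t b)
    rw [om_swap _ (R t a)] at e
    simp only [om] at e
    linarith
  have := is_const_of_deriv_eq_zero (fun t => (h3 t).differentiableAt) (fun t => (h3 t).deriv) t 0
  rw [this, hR0]; rfl

lemma isUnit_of_inj {Q : Euc d →L[ℝ] Euc d} (hQ : ∀ v, Q v = 0 → v = 0) : IsUnit Q := by
  rw [ContinuousLinearMap.isUnit_iff_bijective]
  have hi : Function.Injective (Q : Euc d →ₗ[ℝ] Euc d) := by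
    rw [← LinearMap.ker_eq_bot, LinearMap.ker_eq_bot']
    exact hQ
  exact ⟨hi, LinearMap.injective_iff_surjective.1 hi⟩

lemma inv_apply {Q : Euc d →L[ℝ] Euc d} (hQ : IsUnit Q) (v : Euc d) : Q (Ring.inverse Q v) = v := by
  have := congrArg (fun L : Euc d →L[ℝ] Euc d => L v) (Ring.mul_inverse_cancel Q hQ)
  simpa using this

lemma inv_apply' {Q : Euc d →L[ℝ] Euc d} (hQ : IsUnit Q) (v : Euc d) : Ring.inverse Q (Q v) = v := by
  have := congrArg (fun L : Euc d →L[ℝ] Euc d => L v) (Ring.inverse_mul_cancel Q hQ)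
  simpa using this

lemma psi_hasFDeriv (h : Std H φ u) {q : Euc d} (hA : DifferentiableAt ℝ (gradient u) q) (s : ℝ) :
    DifferentiableAt ℝ (psi φ u s) q := by
  obtain ⟨R, hR0, hR, hS⟩ := flow_deriv (ham_contDiff h.hH.smooth) h.hφ.1 h.hφ.2.2 (gp u q)
  have hg : DifferentiableAt ℝ (gp u) q := differentiableAt_id.prodMk hA
  exact ((hS s).hasFDerivAt.differentiableAt.comp q hg).fst

lemma psi_inj (h : Std H φ u) {q : Euc d} {s : ℝ} {D : Euc d →L[ℝ] Euc d} (hD : HasFDerivAt (psi φ u s) D q) :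
    IsUnit D := by
  obtain ⟨K, hK⟩ := psi_lip h
  refine isUnit_of_inj fun v hv => ?_
  have := deriv_lip (hK (-s)) hD (hasFDerivAt_id q) (fun y => (psi_inv h s y).symm) v
  rw [hv] at this
  simpa using this

lemma green_data (h : Std H φ u) {q : Euc d} {A : Euc d →L[ℝ] Euc d} (hA : HasFDerivAt (gradient u) A q) :
    ∃ (Ψ c y : ℝ → Euc d →L[ℝ] Euc d) (m : ℝ), 0 < m ∧ (∀ s, HasFDerivAt (psi φ u s) (Ψ s) q) ∧ c 0 = 0 ∧
      (∀ w s, ∃ g, m * ‖y s w‖ ^ 2 ≤ g ∧ HasDerivAt (fun s => ⟪c s w, w⟫) g s) ∧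
      (∀ s w v, ⟪y s w, Ψ s v⟫ = ⟪w, v⟫) ∧ (∀ s w v, ⟪c s w, v⟫ = ⟪w, c s v⟫) ∧
      ∀ T z, z ∈ GreenT φ T (gp u q) ↔ z.1 = - c (-T) (z.2 - A z.1) := by
  have hs := h.hH.smooth
  obtain ⟨R, hR0, hR, hS⟩ := flow_deriv (ham_contDiff hs) h.hφ.1 h.hφ.2.2 (gp u q)
  obtain ⟨P, _, hP⟩ := per_bound (grad_cont h.hu1) (grad_per h.hup)
  obtain ⟨m, hm, hpp⟩ := pp_lower h.hH P
  have hsym := grad_sym h.hu1 hA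
  set J : Euc d →L[ℝ] Phase d := (ContinuousLinearMap.id ℝ (Euc d)).prod A
  set I : Euc d →L[ℝ] Phase d := ContinuousLinearMap.inr ℝ (Euc d) (Euc d)
  set π : Phase d →L[ℝ] Euc d := ContinuousLinearMap.fst ℝ (Euc d) (Euc d)
  set Ψ : ℝ → Euc d →L[ℝ] Euc d := fun s => π.comp ((R s).comp J)
  set B : ℝ → Euc d →L[ℝ] Euc d := fun s => π.comp ((R s).comp I)
  have hΨ : ∀ s, HasFDerivAt (psi φ u s) (Ψ s) q := fun s => by
    have hg : HasFDerivAt (gp u) J q := (hasFDerivAt_id q).prodMk hA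
    exact (π.hasFDerivAt (x := φ s (gp u q))).comp q ((hS s).hasFDerivAt.comp q hg)
  have hU : ∀ s, IsUnit (Ψ s) := fun s => psi_inj h (hΨ s)
  set c : ℝ → Euc d →L[ℝ] Euc d := fun s => Ring.inverse (Ψ s) * B s
  set y : ℝ → Euc d →L[ℝ] Euc d := fun s =>
    (ContinuousLinearMap.snd ℝ (Euc d) (Euc d)).comp ((R s).comp (I - J.comp (c s)))
  have hΨc : ∀ s w, Ψ s (c s w) = B s w := fun s w => inv_apply (hU s) _
  have hy : ∀ s w, R s (I w) - R s (J (c s w)) = (0, y s w) := by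
    intro s w
    have h1 := hΨc s w
    ext1
    · simp only [Ψ, B, ContinuousLinearMap.comp_apply] at h1
      change π (R s (I w)) - π (R s (J (c s w))) = 0
      rw [h1, sub_self]
    · simp [y]
  have hom := om_flow hs hR0 hR
  have hyΨ : ∀ s w v, ⟪y s w, Ψ s v⟫ = ⟪w, v⟫ := by
    intro s w v
    have h1 : om (R s (I w) - R s (J (c s w))) (R s (J v)) = om (I w - J (c s w)) (J v) := by
      rw [← map_sub, hom]
    rw [hy] at h1
    simp only [om, I, J, ContinuousLinearMap.inr_apply, ContinuousLinearMap.prod_apply,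
      ContinuousLinearMap.id_apply, Prod.fst_sub, Prod.snd_sub, zero_sub, inner_zero_left,
      inner_neg_left, inner_sub_left, hsym] at h1
    change ⟪y s w, (R s (J v)).1⟫ = _
    simp only [J, ContinuousLinearMap.prod_apply, ContinuousLinearMap.id_apply]
    linarith
  have hcs : ∀ s w v, ⟪c s w, v⟫ = ⟪w, c s v⟫ := by
    intro s w v
    have h1 : om (R s (I w) - R s (J (c s w))) (R s (I v) - R s (J (c s v))) =
        om (I w - J (c s w)) (I v - J (c s v)) := by
      rw [← map_sub, ← map_sub, hom]
    rw [hy, hy] at h1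
    simp only [om, I, J, ContinuousLinearMap.inr_apply, ContinuousLinearMap.prod_apply,
      ContinuousLinearMap.id_apply, Prod.fst_sub, Prod.snd_sub, zero_sub, inner_zero_left, inner_zero_right,
      inner_neg_left, inner_neg_right, inner_sub_left, inner_sub_right, hsym] at h1
    linarith
  refine ⟨Ψ, c, y, m, hm, hΨ, ?_, ?_, hyΨ, hcs, ?_⟩
  · have : B 0 = 0 := by ext1 w; simp [B, hR0, π, I]
    simp [c, this]
  · intro w s
    have dΨ : HasDerivAt Ψ (π.comp ((fderiv ℝ (hamVF H 0) (φ s (gp u q)) * R s).comp J)) s :=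
      (hasDerivAt_const s π).clm_comp ((hR s).clm_comp (hasDerivAt_const s J)) |>.congr_deriv (by simp)
    have dB : HasDerivAt B (π.comp ((fderiv ℝ (hamVF H 0) (φ s (gp u q)) * R s).comp I)) s :=
      (hasDerivAt_const s π).clm_comp ((hR s).clm_comp (hasDerivAt_const s I)) |>.congr_deriv (by simp)
    obtain ⟨c', dc⟩ : ∃ c', HasDerivAt c c' s := by
      obtain ⟨U, hU'⟩ := hU s
      have e := hasFDerivAt_ringInverse (𝕜 := ℝ) U
      rw [hU'] at e
      exact ⟨_, (e.comp_hasDerivAt s dΨ).mul dB⟩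
    have dcw : HasDerivAt (fun s => c s w) (c' w) s := by
      simpa using dc.clm_apply (hasDerivAt_const s w)
    have e1 := dΨ.clm_apply dcw
    have e2 : HasDerivAt (fun s => B s w) _ s := dB.clm_apply (hasDerivAt_const s w)
    have e3 : (fun s => Ψ s (c s w)) = fun s => B s w := funext fun s => hΨc s w
    rw [e3] at e1
    have e4 := e1.unique e2
    have e5 : Ψ s (c' w) = (fderiv ℝ (hamVF H 0) (φ s (gp u q)) (0, y s w)).1 := by
      rw [← hy, map_sub]
      simp only [ContinuousLinearMap.comp_apply, map_zero, add_zero, ContinuousLinearMap.mul_apply'] at e4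
      exact eq_sub_of_add_eq' e4
    refine ⟨⟪c' w, w⟫, ?_, ?_⟩
    · rw [real_inner_comm, ← hyΨ s, e5]
      have k := hpp (psi φ u s q) (gradient u (psi φ u s q)) (y s w) (hP _)
      rw [fderiv2_eq hs] at k
      have e6 : φ s (gp u q) = (psi φ u s q, gradient u (psi φ u s q)) := phi_gp h q s
      rw [e6]
      simp only [om, inner_zero_right, sub_zero] at k
      rwa [real_inner_comm]
    · simpa using dcw.inner ℝ (hasDerivAt_const s w)
  · intro T z
    have hd : DifferentiableAt ℝ (φ T) (φ (-T) (gp u q)) := by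
      obtain ⟨R', -, -, hS'⟩ := flow_deriv (ham_contDiff hs) h.hφ.1 h.hφ.2.2 (φ (-T) (gp u q))
      exact (hS' T).hasFDerivAt.differentiableAt
    set M := fderiv ℝ (φ T) (φ (-T) (gp u q))
    have m1 : M.comp (R (-T)) = ContinuousLinearMap.id ℝ _ := by
      have k := hd.hasFDerivAt.comp (gp u q) (hS (-T)).hasFDerivAt
      have e : φ T ∘ φ (-T) = id := by
        ext1 x; simp [h.hφ.2.1, h.hφ.1]
      rw [e] at k
      exact k.unique (hasFDerivAt_id _)
    have m2 : (R (-T)).comp M = ContinuousLinearMap.id ℝ _ := by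
      have e0 : φ T (φ (-T) (gp u q)) = gp u q := by simp [h.hφ.2.1, h.hφ.1]
      have k := HasFDerivAt.comp (φ (-T) (gp u q)) (by rw [e0]; exact (hS (-T)).hasFDerivAt) hd.hasFDerivAt
      have e : φ (-T) ∘ φ T = id := by
        ext1 x; simp [h.hφ.2.1, h.hφ.1]
      rw [e] at k
      exact k.unique (hasFDerivAt_id _)
    have g1 : z ∈ GreenT φ T (gp u q) ↔ (R (-T) z).1 = 0 := by
      simp only [GreenT, pushV, Submodule.mem_map, Vert, Submodule.mem_prod, Submodule.mem_bot, Submodule.mem_top, and_true]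
      constructor
      · rintro ⟨x, hx, rfl⟩
        have := congrArg (fun L : Phase d →L[ℝ] Phase d => L x) m2
        simp only [ContinuousLinearMap.comp_apply, ContinuousLinearMap.id_apply] at this
        change (R (-T) (M x)).1 = 0
        rw [this, hx]
      · intro hz
        refine ⟨R (-T) z, hz, ?_⟩
        exact congrArg (fun L : Phase d →L[ℝ] Phase d => L z) m1
    rw [g1]
    have hz : z = J z.1 + I (z.2 - A z.1) := by
      ext1 <;> simp [J, I]
    have e : (R (-T) z).1 = Ψ (-T) z.1 + B (-T) (z.2 - A z.1) := by
      conv_lhs => rw [hz, map_add]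
      rfl
    rw [e, ← hΨc, ← map_add]
    constructor
    · intro k
      have := inv_apply' (hU (-T)) (z.1 + c (-T) (z.2 - A z.1))
      rw [k, map_zero] at this
      exact eq_neg_of_add_eq_zero_left this.symm
    · intro k
      rw [eq_neg_iff_add_eq_zero] at k
      rw [k, map_zero]

lemma height_unique {G : Submodule ℝ (Phase d)} {S : Euc d →L[ℝ] Euc d} (hS : IsHeight G S) :
    heightOf G = S := by
  have hex : ∃ S, IsHeight G S := ⟨S, hS⟩
  rw [heightOf, dif_pos hex]
  have h1 := hex.choose_spec.2
  ext1 v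
  have h2 : (v, S v) ∈ G := by rw [hS.2]; simp [LinearMap.mem_graph_iff]
  rw [h1, LinearMap.mem_graph_iff] at h2
  exact h2.symm

lemma green (h : Std H φ u) {q : Euc d} {A : Euc d →L[ℝ] Euc d} (hA : HasFDerivAt (gradient u) A q)
    (hgood : ∀ w ≠ 0, ∀ y : ℕ → Euc d, (∀ n v, ⟪y n, fderiv ℝ (psi φ u (-(n:ℝ))) q v⟫ = ⟪w, v⟫) →
      ¬ Tendsto y atTop (nhds 0)) :
    (∀ t > (0:ℝ), ∃ S', IsHeight (GreenT φ t (gp u q)) S') ∧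
    Tendsto (fun t : ℝ => heightOf (GreenT φ t (gp u q))) atTop (nhds A) := by
  obtain ⟨Ψ, c, y, m, hm, hΨ, hc0, hder, hyΨ, hcs, hG⟩ := green_data h hA
  have hsym := grad_sym h.hu1 hA
  obtain ⟨K, hK⟩ := psi_lip h
  set C := Real.exp K
  have hC : 0 < C := Real.exp_pos _
  have hy0 : ∀ s w, w ≠ 0 → y s w ≠ 0 := by
    intro s w hw h0
    have := hyΨ s w w
    rw [h0, inner_zero_left, real_inner_self_eq_norm_sq] at this
    exact hw (norm_eq_zero.1 (pow_eq_zero_iff (two_ne_zero)|>.1 this.symm))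
  have hyc : ∀ s r w, 0 ≤ r → r ≤ 1 → ‖y s w‖ ≤ C * ‖y (s - r) w‖ := by
    intro s r w hr0 hr1
    set v := Ring.inverse (Ψ s) (y s w)
    have hv : Ψ s v = y s w := inv_apply (psi_inj h (hΨ s)) _
    have h1 := deriv_lip (hK (-r)) (hΨ s) (hΨ (s - r)) (fun z => by rw [psi_add h]; ring_nf) v
    have h2 : ‖Ψ (s - r) v‖ ≤ C * ‖y s w‖ := by
      rw [hv] at h1
      refine h1.trans ?_
      gcongr
      rw [Real.coe_toNNReal _ (Real.exp_pos _).le, abs_neg, abs_of_nonneg hr0]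
      exact Real.exp_le_exp.2 (mul_le_of_le_one_right K.2 hr1)
    have h3 := hyΨ s w v
    rw [hv, real_inner_self_eq_norm_sq, ← hyΨ (s - r) w v] at h3
    have h4 := real_inner_le_norm (y (s - r) w) (Ψ (s - r) v)
    by_cases h0 : ‖y s w‖ = 0
    · rw [h0]; positivity
    have h0' : 0 < ‖y s w‖ := lt_of_le_of_ne (norm_nonneg _) (Ne.symm h0)
    have h5 : ‖y (s - r) w‖ * ‖Ψ (s - r) v‖ ≤ ‖y (s - r) w‖ * (C * ‖y s w‖) := by gcongr
    refine le_of_mul_le_mul_right ?_ h0'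
    nlinarith
  have hdd : ∀ w, Differentiable ℝ fun s => ⟪c s w, w⟫ := fun w s => by
    obtain ⟨g, _, hg⟩ := hder w s; exact hg.differentiableAt
  have hderiv : ∀ w s, m * ‖y s w‖ ^ 2 ≤ deriv (fun s => ⟪c s w, w⟫) s := fun w s => by
    obtain ⟨g, hg1, hg⟩ := hder w s; rwa [hg.deriv]
  have hsm : ∀ w, w ≠ 0 → StrictMono fun s => ⟪c s w, w⟫ := fun w hw =>
    strictMono_of_deriv_pos fun s => lt_of_lt_of_le
      (by have := norm_pos_iff.2 (hy0 s w hw); positivity) (hderiv w s)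
  have hmono : ∀ w, Monotone fun s => ⟪c s w, w⟫ := fun w =>
    monotone_of_deriv_nonneg (hdd w) fun s => le_trans (by positivity) (hderiv w s)
  have hpos : ∀ T > (0:ℝ), ∀ w ≠ 0, 0 < ⟪(-c (-T)) w, w⟫ := by
    intro T hT w hw
    have := hsm w hw (show -T < 0 by linarith)
    simp only [hc0] at this
    simpa using this
  have hKU : ∀ T > (0:ℝ), IsUnit (-c (-T)) := fun T hT => isUnit_of_inj fun v hv => by
    by_contra hne
    have := hpos T hT v hne
    rw [hv, inner_zero_left] at this
    exact lt_irrefl _ this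
  have hH : ∀ T > (0:ℝ), IsHeight (GreenT φ T (gp u q)) (A + Ring.inverse (-c (-T))) := by
    intro T hT
    have hu := hKU T hT
    set N := -c (-T)
    constructor
    · intro v w
      obtain ⟨v', rfl⟩ : ∃ v', v = N v' := ⟨_, (inv_apply hu v).symm⟩
      obtain ⟨w', rfl⟩ : ∃ w', w = N w' := ⟨_, (inv_apply hu w).symm⟩
      simp only [add_apply, inner_add_left, inner_add_right, hsym, inv_apply' hu]
      congr 1
      simp [N, hcs]
    · ext z
      rw [hG, LinearMap.mem_graph_iff]
      change z.1 = N (z.2 - A z.1) ↔ z.2 = A z.1 + Ring.inverse N z.1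
      constructor
      · intro k
        have := inv_apply' hu (z.2 - A z.1)
        rw [← k] at this
        rw [this]; abel
      · intro k
        have : z.2 - A z.1 = Ring.inverse N z.1 := by rw [k]; abel
        rw [this, inv_apply hu]
  refine ⟨fun t ht => ⟨_, hH t ht⟩, ?_⟩
  -- growth
  have hgrow : ∀ w ≠ 0, ∀ b : ℝ, ∃ n : ℕ, b < -⟪c (-(n:ℝ)) w, w⟫ := by
    intro w hw b
    have hnt := hgood w hw (fun n => y (-(n:ℝ)) w) (fun n v => by rw [(hΨ _).fderiv]; exact hyΨ _ _ _)
    rw [Metric.tendsto_atTop] at hnt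
    push Not at hnt
    obtain ⟨ε, hε, hfreq⟩ := hnt
    set η := m * (ε / C) ^ 2
    have hη : 0 < η := by positivity
    have step : ∀ N : ℕ, ∃ n : ℕ, -⟪c (-(N:ℝ)) w, w⟫ + η ≤ -⟪c (-(n:ℝ)) w, w⟫ := by
      intro N
      obtain ⟨k, hk, hkε⟩ := hfreq N
      refine ⟨k + 1, ?_⟩
      rw [dist_zero_right] at hkε
      have h1 := (convex_Icc (-((k:ℝ) + 1)) (-(k:ℝ))).mul_sub_le_image_sub_of_le_deriv
        (f := fun s => ⟪c s w, w⟫) (C := η) (hdd w).continuous.continuousOn (hdd w).differentiableOn (by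
          intro s hs
          rw [interior_Icc] at hs
          refine le_trans ?_ (hderiv w s)
          have := hyc (-(k:ℝ)) (-k - s) w (by linarith [hs.2]) (by linarith [hs.1])
          rw [sub_sub_cancel] at this
          have h2 : ε / C ≤ ‖y s w‖ := by rw [div_le_iff₀ hC]; linarith
          simp only [η]; gcongr)
        (-((k:ℝ) + 1)) ⟨le_rfl, by linarith⟩ (-(k:ℝ)) ⟨by linarith, le_rfl⟩ (by linarith)
      have h2 := hmono w (show -(k:ℝ) ≤ -(N:ℝ) by simpa using hk)
      simp only at h1 h2
      push_cast
      linarith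
    have iter : ∀ j : ℕ, ∃ n : ℕ, j * η ≤ -⟪c (-(n:ℝ)) w, w⟫ := by
      intro j
      induction j with
      | zero => exact ⟨0, by simp [hc0]⟩
      | succ j ih =>
        obtain ⟨N, hN⟩ := ih
        obtain ⟨n, hn⟩ := step N
        exact ⟨n, by push_cast; linarith⟩
    obtain ⟨j, hj⟩ := exists_nat_gt (b / η)
    obtain ⟨n, hn⟩ := iter j
    refine ⟨n, lt_of_lt_of_le ?_ hn⟩
    rwa [div_lt_iff₀ hη] at hj
  have hunif : ∀ b : ℝ, ∃ n : ℕ, ∀ w : Euc d, b * ‖w‖ ^ 2 ≤ -⟪c (-(n:ℝ)) w, w⟫ := by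
    intro b
    have hcont : ∀ n : ℕ, Continuous fun w => -⟪c (-(n:ℝ)) w, w⟫ := fun n => by fun_prop
    obtain ⟨t, ht⟩ := (isCompact_sphere (0 : Euc d) 1).elim_finite_subcover
      (fun n : ℕ => {w : Euc d | b < -⟪c (-(n:ℝ)) w, w⟫}) (fun n => isOpen_lt continuous_const (hcont n))
      (fun w hw => by
        obtain ⟨n, hn⟩ := hgrow w (by
          rintro rfl
          simp at hw) b
        exact mem_iUnion.2 ⟨n, hn⟩)
    refine ⟨t.sup id, fun w => ?_⟩
    by_cases hw : w = 0
    · simp [hw]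
    have hn : 0 < ‖w‖ := norm_pos_iff.2 hw
    have hmem : (‖w‖⁻¹ • w) ∈ sphere (0 : Euc d) 1 := by
      simp [norm_smul, hn.ne']
    obtain ⟨n, hnt, hn2⟩ := mem_iUnion₂.1 (ht hmem)
    have h3 : (n:ℝ) ≤ ((t.sup id : ℕ) : ℝ) := by exact_mod_cast Finset.le_sup (f := id) hnt
    have h4 := hmono w (show -((t.sup id : ℕ) : ℝ) ≤ -(n:ℝ) by linarith)
    simp only [mem_setOf_eq, map_smul, inner_smul_left, inner_smul_right] at hn2
    simp only at h4
    have h5 : b * ‖w‖ ^ 2 ≤ -⟪c (-(n:ℝ)) w, w⟫ := by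
      simp at hn2
      rw [← le_div_iff₀ (by positivity)]
      refine hn2.le.trans (le_of_eq ?_)
      field_simp
    linarith
  rw [Metric.tendsto_atTop]
  intro ε hε
  obtain ⟨n, hn⟩ := hunif (2 / ε)
  refine ⟨n + 1, fun T hT => ?_⟩
  have hT0 : 0 < T := by
    have : (0:ℝ) ≤ n := Nat.cast_nonneg _
    linarith
  rw [height_unique (hH T hT0), dist_eq_norm, add_sub_cancel_left]
  have hu := hKU T hT0
  refine lt_of_le_of_lt (ContinuousLinearMap.opNorm_le_bound _ (by positivity : 0 ≤ ε / 2) fun v => ?_)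
    (half_lt_self hε)
  set w := Ring.inverse (-c (-T)) v
  have hv : (-c (-T)) w = v := inv_apply hu v
  have h1 : 2 / ε * ‖w‖ ^ 2 ≤ ⟪v, w⟫ := by
    rw [← hv]
    have := hmono w (show -T ≤ -(n:ℝ) by linarith)
    simp only at this
    have := hn w
    simp only [neg_apply, inner_neg_left]
    linarith
  have h2 := real_inner_le_norm v w
  by_cases h0 : ‖w‖ = 0
  · rw [h0]; positivity
  have h0' : 0 < ‖w‖ := lt_of_le_of_ne (norm_nonneg _) (Ne.symm h0)
  have h3 : 2 / ε * ‖w‖ ≤ ‖v‖ := by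
    refine le_of_mul_le_mul_right ?_ h0'
    nlinarith
  calc ‖w‖ = ε / 2 * (2 / ε * ‖w‖) := by field_simp
    _ ≤ _ := by gcongr
end KAM

namespace KAM

lemma hyp_abs {E : Type*} [NormedAddCommGroup E] [NormedSpace ℝ E] {F : E → E} {A P : E →L[ℝ] E} {x0 : E}
    (hF : HasStrictFDerivAt F A x0) (hc : ∀ v, A (P v) = P (A v))
    (h1 : ∀ v, 4 * ‖P v‖ ≤ ‖A (P v)‖) (h2 : ∀ v, 4 * ‖A (v - P v)‖ ≤ ‖v - P v‖) :
    ∃ r > 0, ∃ C ≥ 0, ∀ x y : ℕ → E, (∀ k, x (k+1) = F (x k)) → (∀ k, y (k+1) = F (y k)) →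
      (∀ k, x k ∈ ball x0 r) → (∀ k, y k ∈ ball x0 r) → ∀ k, ‖x k - y k‖ ≤ C * (3/4)^k * ‖x 0 - y 0‖ := by
  set κ : ℝ := ‖P‖ + 1
  have hκ : 1 ≤ κ := by have := norm_nonneg P; simp only [κ]; linarith
  have hη : 0 < 1 / (4 * κ) := by positivity
  have hev := (isLittleO_iff.1 hF.isLittleO) hη
  rw [nhds_prod_eq] at hev
  obtain ⟨r, hr, hb⟩ := Metric.eventually_nhds_iff_ball.1 (by rwa [← nhds_prod_eq] at hev)
  refine ⟨r, hr, 2 * κ, by positivity, fun x y hx hy hxr hyr => ?_⟩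
  set a : ℕ → ℝ := fun k => ‖P (x k - y k)‖
  set b : ℕ → ℝ := fun k => ‖(x k - y k) - P (x k - y k)‖
  have hPle : ∀ v, ‖P v‖ ≤ κ * ‖v‖ := fun v => (P.le_opNorm v).trans (by gcongr; simp [κ])
  have hQle : ∀ v, ‖v - P v‖ ≤ κ * ‖v‖ := fun v => by
    refine (norm_sub_le _ _).trans ?_
    have := P.le_opNorm v
    simp only [κ]; linarith
  have hab : ∀ k, ‖x k - y k‖ ≤ a k + b k := fun k => by
    have : x k - y k = P (x k - y k) + ((x k - y k) - P (x k - y k)) := by abel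
    conv_lhs => rw [this]
    exact norm_add_le _ _
  have hrem : ∀ k, ‖(x (k+1) - y (k+1)) - A (x k - y k)‖ ≤ 1 / (4 * κ) * (a k + b k) := fun k => by
    have := hb (x k, y k) (by rw [← ball_prod_same]; exact ⟨hxr k, hyr k⟩)
    rw [hx, hy]
    refine this.trans ?_
    gcongr
    exact hab k
  have hka : ∀ s : ℝ, κ * (1 / (4 * κ) * s) = s / 4 := fun s => by field_simp
  have ha1 : ∀ k, 4 * a k - (a k + b k) / 4 ≤ a (k+1) := fun k => by
    have e1 := h1 (x k - y k)
    have e2 : P (x (k+1) - y (k+1)) = A (P (x k - y k)) + P ((x (k+1) - y (k+1)) - A (x k - y k)) := by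
      rw [hc, ← map_add]; congr 1; abel
    have e3 := (hPle ((x (k+1) - y (k+1)) - A (x k - y k))).trans (mul_le_mul_of_nonneg_left (hrem k) (by positivity))
    rw [hka] at e3
    have e4 := norm_sub_le_norm_add (A (P (x k - y k))) (P ((x (k+1) - y (k+1)) - A (x k - y k)))
    rw [← e2] at e4
    simp only [a] at *
    linarith
  have hb1 : ∀ k, b (k+1) ≤ b k / 4 + (a k + b k) / 4 := fun k => by
    have e1 := h2 (x k - y k)
    set e := (x (k+1) - y (k+1)) - A (x k - y k) with he
    have e2 : (x (k+1) - y (k+1)) - P (x (k+1) - y (k+1)) = A ((x k - y k) - P (x k - y k)) + (e - P e) := by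
      have : x (k+1) - y (k+1) = A (x k - y k) + e := by rw [he]; abel
      rw [this, map_add, map_sub A (x k - y k), hc]; abel
    have e3 := (hQle e).trans (mul_le_mul_of_nonneg_left (hrem k) (by positivity))
    rw [hka] at e3
    have e4 := norm_add_le (A ((x k - y k) - P (x k - y k))) (e - P e)
    rw [← e2] at e4
    simp only [a, b] at *
    linarith
  have ha0 : ∀ k, 0 ≤ a k := fun k => norm_nonneg _
  have hb0 : ∀ k, 0 ≤ b k := fun k => norm_nonneg _
  have hle : ∀ k, a k ≤ b k := by
    intro k
    by_contra! hlt
    have hgr : ∀ j, b (k+j) ≤ a (k+j) ∧ 3^j * a k ≤ a (k+j) := by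
      intro j
      induction j with
      | zero => simp [hlt.le]
      | succ j ih =>
        have q1 := ha1 (k+j)
        have q2 := hb1 (k+j)
        rw [← add_assoc]
        have := ha0 (k+j)
        refine ⟨by linarith [ih.1], ?_⟩
        rw [pow_succ]
        nlinarith [ih.1, ih.2]
    have hbd : ∀ j, a j ≤ κ * (2 * r) := fun j => by
      refine (hPle _).trans ?_
      gcongr
      have q1 := mem_ball.1 (hxr j); have q2 := mem_ball.1 (hyr j)
      rw [← dist_eq_norm]
      have := dist_triangle_right (x j) (y j) x0
      linarith
    have hpos : 0 < a k := lt_of_le_of_lt (hb0 k) hlt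
    obtain ⟨j, hj⟩ := pow_unbounded_of_one_lt (κ * (2 * r) / a k) (show (1:ℝ) < 3 by norm_num)
    rw [div_lt_iff₀ hpos] at hj
    linarith [(hgr j).2, hbd (k+j)]
  have hbk : ∀ k, b k ≤ (3/4)^k * b 0 := by
    intro k
    induction k with
    | zero => simp
    | succ k ih =>
      have := hb1 k; have := hle k
      rw [pow_succ]; linarith
  intro k
  calc ‖x k - y k‖ ≤ a k + b k := hab k
    _ ≤ 2 * b k := by linarith [hle k]
    _ ≤ 2 * ((3/4)^k * (κ * ‖x 0 - y 0‖)) := by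
        gcongr; exact (hbk k).trans (by gcongr; exact hQle _)
    _ = _ := by ring

variable {d : ℕ} {H : Phase d → ℝ} {u : Euc d → ℝ} {φ : ℝ → Phase d → Phase d}

lemma op_tendsto {W : Type*} [NormedAddCommGroup W] [NormedSpace ℝ W] [FiniteDimensional ℝ W]
    {E : Type*} [NormedAddCommGroup E] [NormedSpace ℝ E] {B : ℕ → W →L[ℝ] E}
    (hB : ∀ w, Tendsto (fun n => B n w) atTop (nhds 0)) : ∀ᶠ n in atTop, ‖B n‖ ≤ 1/2 := by
  set b := Module.finBasis ℝ W
  obtain ⟨C, hC, h⟩ := b.exists_opNorm_le (F := E)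
  have : ∀ᶠ n in atTop, ∀ i, ‖B n (b i)‖ ≤ 1 / (2 * C) := by
    rw [eventually_all]
    intro i
    have := (hB (b i)).norm
    rw [norm_zero] at this
    exact (this.eventually (gt_mem_nhds (show 0 < 1 / (2 * C) by positivity))).mono fun n hn => hn.le
  filter_upwards [this] with n hn
  refine (h (by positivity) hn).trans (le_of_eq ?_)
  field_simp

lemma hyp_inv {R : ℤ → Phase d →L[ℝ] Phase d} (h0 : R 0 = 1) (hadd : ∀ s t, R s * R t = R (s + t))
    {Es Eu : Submodule ℝ (Phase d)} (hE : IsCompl Es Eu)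
    (hs : ∀ v ∈ Es, Tendsto (fun n : ℕ => R n v) atTop (nhds 0))
    (hu : ∀ v ∈ Eu, Tendsto (fun n : ℕ => R (-n) v) atTop (nhds 0)) :
    (∀ v ∈ Es, ∀ n, R n v ∈ Es) ∧ ∀ v ∈ Eu, ∀ n, R n v ∈ Eu := by
  have hadd' : ∀ s t v, R s (R t v) = R (s + t) v := fun s t v => by rw [← hadd]; rfl
  have key : ∀ v, ∀ σ : ℤ, Tendsto (fun n : ℕ => R (σ * n) v) atTop (nhds 0) → ∀ m,
      Tendsto (fun n : ℕ => R (σ * n) (R m v)) atTop (nhds 0) := fun v σ hv m => by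
    have := ((R m).continuous.tendsto 0).comp hv
    rw [map_zero] at this
    refine this.congr fun n => ?_
    simp only [Function.comp_apply]
    rw [hadd', hadd', add_comm]
  let S : ℤ → Submodule ℝ (Phase d) := fun σ =>
    { carrier := {v | Tendsto (fun n : ℕ => R (σ * n) v) atTop (nhds 0)}
      add_mem' := fun {a b} ha hb => by simpa using Tendsto.add ha hb
      zero_mem' := by simp
      smul_mem' := fun c a ha => by simpa using Tendsto.const_smul ha c }
  have hS1 : Es ≤ S 1 := fun v hv => by simpa [S] using hs v hv
  have hS2 : Eu ≤ S (-1) := fun v hv => by simpa [S] using hu v hv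
  have hdis : ∀ v, v ∈ S 1 → v ∈ S (-1) → v = 0 := by
    set W := S 1 ⊓ S (-1)
    have ev : ∀ σ : ℤ, (∀ w ∈ W, w ∈ S σ) → ∀ᶠ n : ℕ in atTop, ∀ w ∈ W, ‖R (σ * n) w‖ ≤ 1/2 * ‖w‖ := by
      intro σ hσ
      have := op_tendsto (W := W) (B := fun n => (R (σ * n)).comp W.subtypeL) (fun w => hσ w w.2)
      filter_upwards [this] with n hn w hw
      have := ((R (σ * n)).comp W.subtypeL).le_opNorm ⟨w, hw⟩
      refine this.trans ?_
      gcongr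
      rfl
    obtain ⟨n, h1, h2⟩ := ((ev 1 fun w hw => hw.1).and (ev (-1) fun w hw => hw.2)).exists
    intro v hv1 hv2
    have hm : R (1 * n) v ∈ W := ⟨key v 1 hv1 _, key v (-1) hv2 _⟩
    have a1 := h1 v ⟨hv1, hv2⟩
    have a2 := h2 _ hm
    rw [hadd', show -1 * (n:ℤ) + 1 * n = 0 by ring, h0] at a2
    have : ‖v‖ ≤ 1/2 * (1/2 * ‖v‖) := a2.trans (by gcongr)
    exact norm_le_zero_iff.1 (by linarith)
  have hspl : ∀ v : Phase d, ∃ a ∈ Es, ∃ b ∈ Eu, a + b = v := fun v =>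
    Submodule.mem_sup.1 (hE.sup_eq_top ▸ Submodule.mem_top)
  have hE1 : ∀ v ∈ S 1, v ∈ Es := fun v hv => by
    obtain ⟨a, ha, b, hb, rfl⟩ := hspl v
    have : b ∈ S 1 := by simpa using (S 1).sub_mem hv (hS1 ha)
    rw [hdis b this (hS2 hb), add_zero]; exact ha
  have hE2 : ∀ v ∈ S (-1), v ∈ Eu := fun v hv => by
    obtain ⟨a, ha, b, hb, rfl⟩ := hspl v
    have : a ∈ S (-1) := by simpa using (S (-1)).sub_mem hv (hS2 hb)
    rw [hdis a (hS1 ha) this, zero_add]; exact hb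
  exact ⟨fun v hv n => hE1 _ (key v 1 (hS1 hv) n), fun v hv n => hE2 _ (key v (-1) (hS2 hv) n)⟩

end KAM

namespace KAM
variable {d : ℕ} {H : Phase d → ℝ} {u : Euc d → ℝ} {φ : ℝ → Phase d → Phase d}

lemma hyp_flow (hs : ContDiff ℝ 2 H) (hφ : IsConformalFlow H 0 φ) {x0 : Phase d} (hx : IsHyperbolicFixedPt φ x0) :
    ∃ N : ℕ, 0 < N ∧ ∃ r > 0, ∃ C ≥ 0, ∀ x y : Phase d,
      (∀ k : ℕ, φ (-((k * N : ℕ) : ℝ)) x ∈ ball x0 r) → (∀ k : ℕ, φ (-((k * N : ℕ) : ℝ)) y ∈ ball x0 r) →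
      ∀ k : ℕ, ‖φ (-((k * N : ℕ) : ℝ)) x - φ (-((k * N : ℕ) : ℝ)) y‖ ≤ C * (3/4)^k * ‖x - y‖ := by
  obtain ⟨hfix, Es, Eu, hE, Cc, μ, hCc, hμ, hs1, hu1⟩ := hx
  obtain ⟨R, -, -, hR⟩ := flow_deriv (ham_contDiff hs) hφ.1 hφ.2.2 x0
  have hRf : ∀ t, fderiv ℝ (φ t) x0 = R t := fun t => (hR t).hasFDerivAt.fderiv
  simp only [hRf] at hs1 hu1
  have hadd : ∀ s t, R s * R t = R (s + t) := fun s t => by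
    have h1 : HasFDerivAt (φ s) (R s) (φ t x0) := by rw [hfix]; exact (hR s).hasFDerivAt
    have h2 := h1.comp x0 (hR t).hasFDerivAt
    have h3 : φ s ∘ φ t = φ (s + t) := funext fun x => hφ.2.1 s t x
    rw [h3] at h2
    exact h2.unique (hR (s+t)).hasFDerivAt
  have h0 : R 0 = 1 := by
    have : φ 0 = id := funext hφ.1
    have h1 := (hR 0).hasFDerivAt
    rw [this] at h1
    exact h1.unique (hasFDerivAt_id x0)
  have hlim : Tendsto (fun n : ℕ => Cc * Real.exp (-μ * n)) atTop (nhds 0) := by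
    have : Tendsto (fun n : ℕ => Real.exp (-μ * n)) atTop (nhds 0) := by
      refine Real.tendsto_exp_atBot.comp ?_
      exact (tendsto_natCast_atTop_atTop).const_mul_atTop_of_neg (by linarith)
    simpa using this.const_mul Cc
  have hinv := hyp_inv (R := fun n => R (n:ℝ)) (by simp [h0]) (fun s t => by simp [hadd]) hE
    (fun v hv => by
      have := hlim.mul_const ‖v‖
      rw [zero_mul] at this
      exact squeeze_zero_norm (fun n => by simpa using hs1 v hv n (Nat.cast_nonneg n)) this)
    (fun v hv => by
      have := hlim.mul_const ‖v‖
      rw [zero_mul] at this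
      exact squeeze_zero_norm (fun n => by simpa using hu1 v hv n (Nat.cast_nonneg n)) this)
  obtain ⟨N, hN, hN0⟩ := ((hlim.eventually (gt_mem_nhds (show (0:ℝ) < 1/4 by norm_num))).and
    (eventually_gt_atTop 0)).exists
  have hinv1 : ∀ v ∈ Es, R (-N) v ∈ Es := fun v hv => by simpa using hinv.1 v hv (-N)
  have hinv2 : ∀ v ∈ Eu, R (-N) v ∈ Eu := fun v hv => by simpa using hinv.2 v hv (-N)
  set P : Phase d →L[ℝ] Phase d := LinearMap.toContinuousLinearMap (Es.projection Eu hE)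
  have hPm : ∀ v, P v ∈ Es := fun v => Submodule.projection_apply_mem hE v
  have hPs : ∀ v ∈ Es, P v = v := fun v hv => Submodule.projection_apply_of_mem_left hE hv
  have hPu : ∀ v ∈ Eu, P v = 0 := fun v hv => Submodule.projection_apply_of_mem_right hE hv
  have hQ : ∀ v, v - P v ∈ Eu := fun v => by
    rw [← Submodule.projection_apply_eq_zero_iff hE]
    change P (v - P v) = 0
    rw [map_sub, hPs _ (hPm v), sub_self]
  obtain ⟨r, hr, C, hC, hmain⟩ := hyp_abs (hR (-N)) (P := P)
    (fun v => by
      have e : R (-N) v = R (-N) (P v) + R (-N) (v - P v) := by rw [← map_add]; congr 1; abel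
      rw [e, map_add, hPu _ (hinv2 _ (hQ v)), add_zero, hPs _ (hinv1 _ (hPm v))])
    (fun v => by
      have e := hs1 _ (hinv1 _ (hPm v)) N (Nat.cast_nonneg N)
      have e2 : R N (R (-N) (P v)) = P v := by
        have := congrArg (fun L : Phase d →L[ℝ] Phase d => L (P v)) (hadd N (-N))
        simpa [h0] using this
      rw [e2] at e
      have := norm_nonneg (R (-N) (P v))
      nlinarith)
    (fun v => by
      have e := hu1 _ (hQ v) N (Nat.cast_nonneg N)
      have := norm_nonneg (v - P v)
      nlinarith)
  have hstep : ∀ x (k : ℕ), φ (-(((k+1) * N : ℕ) : ℝ)) x = φ (-(N:ℝ)) (φ (-((k * N : ℕ) : ℝ)) x) := fun x k => by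
    rw [hφ.2.1]; congr 1; push_cast; ring
  refine ⟨N, hN0, r, hr, C, hC, fun x y hxr hyr k => ?_⟩
  have := hmain (fun k => φ (-((k * N : ℕ) : ℝ)) x) (fun k => φ (-((k * N : ℕ) : ℝ)) y) (hstep x) (hstep y) hxr hyr k
  simpa [hφ.1] using this

lemma psi_fix (h : Std H φ u) {z : Euc d} (hz : vX H u z = 0) (t : ℝ) : psi φ u t z = z := by
  obtain ⟨K, hK⟩ := vX_lip h
  have := gron hK (psi_deriv h z) (g := fun _ => z) (fun t => by simpa [hz] using hasDerivAt_const t z) t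
  rw [psi_zero h] at this
  simpa using this

lemma ham_zero (h : Std H φ u) {z : Euc d} (hz : vX H u z = 0) : hamVF H 0 (gp u z) = 0 := by
  have h1 : ∀ t, φ t (gp u z) = gp u z := fun t => by rw [phi_gp h, psi_fix h hz]
  have h2 := h.hφ.2.2 (gp u z) 0
  simp only [h1] at h2
  exact h2.unique (hasDerivAt_const _ _)

lemma hyp_psi (h : Std H φ u) (hcrit : ∀ θ : Euc d, hamVF H 0 (θ, gradient u θ) = 0 →
      IsHyperbolicFixedPt φ (θ, gradient u θ)) {z : Euc d} (hz : vX H u z = 0) :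
    ∃ N : ℕ, 0 < N ∧ ∃ r > 0, ∃ C ≥ 0, ∀ x y : Euc d,
      (∀ k : ℕ, psi φ u (-((k * N : ℕ) : ℝ)) x ∈ ball z r) → (∀ k : ℕ, psi φ u (-((k * N : ℕ) : ℝ)) y ∈ ball z r) →
      ∀ k : ℕ, ‖psi φ u (-((k * N : ℕ) : ℝ)) x - psi φ u (-((k * N : ℕ) : ℝ)) y‖ ≤ C * (3/4)^k * ‖x - y‖ := by
  obtain ⟨N, hN, r, hr, C, hC, hm⟩ := hyp_flow h.hH.smooth h.hφ (hcrit z (ham_zero h hz))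
  obtain ⟨r', hr', hb⟩ := Metric.continuousAt_iff.1 ((gp_cont h.hu1).continuousAt (x := z)) r hr
  obtain ⟨L, hL⟩ := grad_lip h
  refine ⟨N, hN, r', hr', C * (1 + L), by positivity, fun x y hx hy k => ?_⟩
  have := hm (gp u x) (gp u y) (fun k => by rw [phi_gp h]; exact hb (hx k)) (fun k => by rw [phi_gp h]; exact hb (hy k)) k
  rw [phi_gp h, phi_gp h] at this
  refine (norm_fst_le (gp u (psi φ u (-((k * N : ℕ) : ℝ)) x) - gp u (psi φ u (-((k * N : ℕ) : ℝ)) y))).trans (this.trans ?_)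
  have e : ‖gp u x - gp u y‖ ≤ (1 + L) * ‖x - y‖ := by
    have := hL.dist_le_mul x y
    rw [dist_eq_norm, dist_eq_norm] at this
    rw [Prod.norm_def]
    have h0 : 0 ≤ L * ‖x - y‖ := by positivity
    apply max_le
    · change ‖x - y‖ ≤ _; linarith
    · change ‖gradient u x - gradient u y‖ ≤ _; linarith [norm_nonneg (x - y)]
  calc _ ≤ C * (3/4)^k * ((1 + L) * ‖x - y‖) := by gcongr
    _ = _ := by ring

lemma zero_isolated (h : Std H φ u) (hcrit : ∀ θ : Euc d, hamVF H 0 (θ, gradient u θ) = 0 →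
      IsHyperbolicFixedPt φ (θ, gradient u θ)) {z : Euc d} (hz : vX H u z = 0) :
    ∃ r > 0, ∀ y ∈ ball z r, vX H u y = 0 → y = z := by
  obtain ⟨N, hN, r, hr, C, hC, hm⟩ := hyp_psi h hcrit hz
  refine ⟨r, hr, fun y hy hy0 => ?_⟩
  have := hm y z (fun k => by rwa [psi_fix h hy0]) (fun k => by rw [psi_fix h hz]; exact mem_ball_self hr)
  simp only [psi_fix h hy0, psi_fix h hz] at this
  have hl : Tendsto (fun k : ℕ => C * (3/4:ℝ)^k * ‖y - z‖) atTop (nhds 0) := by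
    have := ((tendsto_pow_atTop_nhds_zero_of_lt_one (show (0:ℝ) ≤ 3/4 by norm_num) (by norm_num)).const_mul C).mul_const ‖y - z‖
    simpa using this
  have := ge_of_tendsto' hl this
  exact sub_eq_zero.1 (norm_le_zero_iff.1 this)

lemma zero_countable (h : Std H φ u) (hcrit : ∀ θ : Euc d, hamVF H 0 (θ, gradient u θ) = 0 →
      IsHyperbolicFixedPt φ (θ, gradient u θ)) : {z | vX H u z = 0}.Countable := by
  have : DiscreteTopology {z | vX H u z = 0} := by
    rw [discreteTopology_subtype_iff]
    intro z hz
    obtain ⟨r, hr, hb⟩ := zero_isolated h hcrit hz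
    rw [← disjoint_iff, Filter.disjoint_principal_right, mem_nhdsWithin]
    exact ⟨ball z r, isOpen_ball, mem_ball_self hr, fun y hy hy0 => hy.2 (hb y hy.1 hy0)⟩
  have h1 : Countable {z | vX H u z = 0} := TopologicalSpace.separableSpace_iff_countable.1 inferInstance
  exact h1

end KAM

namespace KAM
variable {d : ℕ} {H : Phase d → ℝ} {u : Euc d → ℝ} {φ : ℝ → Phase d → Phase d}

lemma psi_cont (h : Std H φ u) (t : ℝ) : Continuous (psi φ u t) := by
  obtain ⟨K, hK⟩ := psi_lip h
  exact (hK t).continuous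

lemma diff_ae (h : Std H φ u) : ∀ᵐ q, DifferentiableAt ℝ (gradient u) q := by
  obtain ⟨L, hL⟩ := grad_lip h
  exact hL.ae_differentiableAt

lemma lattice_vol (d : ℕ) : ∃ V : ENNReal, V < ⊤ ∧ ∀ s : Set (Euc d), MeasurableSet s →
    (∀ x ∈ s, ∀ y ∈ s, ∀ k, x = y + intVec k → intVec k = 0) → volume s ≤ V := by
  set b := (EuclideanSpace.basisFun (Fin d) ℝ).toBasis with hb
  refine ⟨volume (ZSpan.fundamentalDomain b), (ZSpan.fundamentalDomain_isBounded b).measure_lt_top, fun s hs hd => ?_⟩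
  by_contra! hlt
  have hL : ∀ x ∈ Submodule.span ℤ (Set.range b), ∃ k, x = intVec k := fun x hx => by
    obtain ⟨c, rfl⟩ := (Submodule.mem_span_range_iff_exists_fun ℤ).1 hx
    refine ⟨c, ?_⟩
    ext i
    simp [intVec, hb, Finset.sum_apply, Pi.single_apply]
  have : Countable (Submodule.span ℤ (Set.range b)).toAddSubgroup :=
    inferInstanceAs (Countable (Submodule.span ℤ (Set.range b)))
  have fund := ZSpan.isAddFundamentalDomain' b (volume : Measure (Euc d))
  obtain ⟨x, y, hne, hnd⟩ := exists_pair_mem_lattice_not_disjoint_vadd fund hs.nullMeasurableSet hlt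
  obtain ⟨w, hw1, hw2⟩ := Set.not_disjoint_iff.1 hnd
  obtain ⟨a, ha, rfl⟩ := hw1
  obtain ⟨c, hc, he⟩ := hw2
  have he' : (y : Euc d) + c = (x : Euc d) + a := he
  obtain ⟨k, hk⟩ := hL _ (sub_mem y.2 x.2)
  have := hd a ha c hc k (by rw [← hk, eq_comm, ← sub_eq_zero]; rw [← sub_eq_zero] at he'; rw [← he']; abel)
  rw [← hk, sub_eq_zero] at this
  exact hne (Subtype.ext this.symm)

lemma psi_image (h : Std H φ u) (t : ℝ) (s : Set (Euc d)) : psi φ u (-t) '' s = psi φ u t ⁻¹' s :=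
  congrFun (Set.image_eq_preimage_of_inverse (fun q => by simpa using psi_inv h (-t) q) (fun q => psi_inv h t q)) s

open Classical in
lemma count_meas (h : Std H φ u) {B : Set (Euc d)} (hB : MeasurableSet B) (m : ℕ) :
    Measurable fun q => Nat.count (fun j : ℕ => psi φ u (-(j:ℝ)) q ∈ B) m := by
  induction m with
  | zero => simp
  | succ m ih =>
    simp only [Nat.count_succ]
    exact ih.add (Measurable.ite ((psi_cont h _).measurable hB) measurable_const measurable_const)

open Classical in
def visit (φ : ℝ → Phase d → Phase d) (u : Euc d → ℝ) (B : Set (Euc d)) (c : Euc d) (k m : ℕ) : Set (Euc d) :=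
  {q | q ∈ ball c (1/3) ∧ DifferentiableAt ℝ (gradient u) q ∧ q ∈ B ∧ psi φ u (-(m:ℝ)) q ∈ B ∧
    Nat.count (fun j : ℕ => psi φ u (-(j:ℝ)) q ∈ B) m = k}

lemma visit_meas (h : Std H φ u) {B : Set (Euc d)} (hB : MeasurableSet B) (c : Euc d) (k m : ℕ) :
    MeasurableSet (visit φ u B c k m) := by
  refine measurableSet_ball.inter ((measurableSet_of_differentiableAt ℝ _).inter (hB.inter
    (((psi_cont h _).measurable hB).inter (count_meas h hB m (measurableSet_singleton k)))))

lemma intVec_small {x y c : Euc d} (hx : x ∈ ball c (1/3)) (hy : y ∈ ball c (1/3)) {k : Fin d → ℤ}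
    (he : x = y + intVec k) : intVec k = 0 := by
  have h1 : ‖intVec k‖ < 1 := by
    have : intVec k = x - y := by rw [he]; abel
    rw [this, ← dist_eq_norm]
    have := dist_triangle_right x y c
    have := mem_ball.1 hx; have := mem_ball.1 hy
    linarith
  ext i
  have h2 : ‖intVec k i‖ < 1 := (PiLp.norm_apply_le _ i).trans_lt h1
  have h3 : ‖((k i : ℤ) : ℝ)‖ < 1 := h2
  rw [Real.norm_eq_abs] at h3
  have h4 : |k i| < 1 := by exact_mod_cast h3
  have : k i = 0 := Int.abs_lt_one_iff.1 h4
  simp [intVec, this]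

open Classical in
lemma visit_disj (h : Std H φ u) {B : Set (Euc d)} (hper : ∀ k q, q + intVec k ∈ B ↔ q ∈ B) {c : Euc d} {k m m' : ℕ}
    {q q' : Euc d} (hq : q ∈ visit φ u B c k m) (hq' : q' ∈ visit φ u B c k m') {l : Fin d → ℤ}
    (he : psi φ u (-(m:ℝ)) q = psi φ u (-(m':ℝ)) q' + intVec l) (hle : m ≤ m') : m = m' ∧ intVec l = 0 := by
  obtain ⟨a, rfl⟩ := Nat.exists_eq_add_of_le' hle
  have e1 : q = psi φ u (-(a:ℝ)) q' + intVec l := by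
    have := congrArg (psi φ u m) he
    rw [psi_per h, psi_add h, psi_add h, add_neg_cancel, psi_zero h] at this
    rw [this]; congr 2; push_cast; ring
  have e2 : a = 0 := by
    by_contra ha
    have c1 := hq.2.2.2.2
    have c2 := hq'.2.2.2.2
    rw [Nat.count_add] at c2
    have c3 : (fun j : ℕ => psi φ u (-(((a + j : ℕ)):ℝ)) q' ∈ B) = fun j : ℕ => psi φ u (-(j:ℝ)) q ∈ B := by
      ext j
      rw [e1, psi_per h, hper, psi_add h]
      congr! 2
      push_cast; ring
    have c4 : Nat.count (fun j : ℕ => psi φ u (-(((a + j : ℕ)):ℝ)) q' ∈ B) m = k := by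
      rw [← c1]; congr 1
    have c5 : Nat.count (fun j : ℕ => psi φ u (-(j:ℝ)) q' ∈ B) a = 0 := by omega
    have c6 : 0 < Nat.count (fun j : ℕ => psi φ u (-(j:ℝ)) q' ∈ B) a := by
      refine lt_of_lt_of_le ?_ (Nat.count_monotone _ (Nat.one_le_iff_ne_zero.2 ha))
      rw [Nat.count_succ]
      simp [psi_zero h, hq'.2.2.1]
    omega
  subst e2
  refine ⟨by simp, ?_⟩
  simp only [Nat.cast_zero, neg_zero, psi_zero h] at e1
  exact intVec_small hq.1 hq'.1 e1

lemma visit_sum (h : Std H φ u) {B : Set (Euc d)} (hB : MeasurableSet B) (hper : ∀ k q, q + intVec k ∈ B ↔ q ∈ B) :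
    ∃ V : ENNReal, V < ⊤ ∧ ∀ c k, ∑' m : ℕ, ∫⁻ q in visit φ u B c k m,
      ENNReal.ofReal |(fderiv ℝ (psi φ u (-(m:ℝ))) q).det| ≤ V := by
  obtain ⟨V, hV, hVs⟩ := lattice_vol d
  refine ⟨V, hV, fun c k => ?_⟩
  have hne : ∀ l : Fin d → ℤ, ∀ m m', ∀ q ∈ visit φ u B c k m, ∀ q' ∈ visit φ u B c k m',
      psi φ u (-(m:ℝ)) q = psi φ u (-(m':ℝ)) q' + intVec l → m = m' ∧ intVec l = 0 := by
    intro l m m' q hq q' hq' he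
    rcases le_total m m' with hle | hle
    · exact visit_disj h hper hq hq' he hle
    · have hn : intVec (-l) = -intVec l := by ext i; simp [intVec]
      have := visit_disj h hper hq' hq (l := -l) (by rw [he, hn]; abel) hle
      rw [hn, neg_eq_zero] at this
      exact ⟨this.1.symm, this.2⟩
  have hz : intVec (0 : Fin d → ℤ) = 0 := by ext i; simp [intVec]
  have him : ∀ m : ℕ, MeasurableSet (psi φ u (-(m:ℝ)) '' visit φ u B c k m) := fun m => by
    rw [psi_image h]; exact (psi_cont h _).measurable (visit_meas h hB c k m)
  calc ∑' m : ℕ, ∫⁻ q in visit φ u B c k m, ENNReal.ofReal |(fderiv ℝ (psi φ u (-(m:ℝ))) q).det|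
      = ∑' m : ℕ, volume (psi φ u (-(m:ℝ)) '' visit φ u B c k m) := by
        congr 1; ext m
        refine lintegral_abs_det_fderiv_eq_addHaar_image _ (visit_meas h hB c k m)
          (fun q hq => (psi_hasFDeriv h hq.2.1 _).hasFDerivAt.hasFDerivWithinAt) ?_
        exact (Function.LeftInverse.injective (g := psi φ u m) fun q => by simpa using psi_inv h (-(m:ℝ)) q).injOn
    _ = volume (⋃ m : ℕ, psi φ u (-(m:ℝ)) '' visit φ u B c k m) := by
        refine (measure_iUnion (fun m m' hmm => ?_) him).symm
        refine Set.disjoint_left.2 ?_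
        rintro _ ⟨q, hq, rfl⟩ ⟨q', hq', he⟩
        exact hmm (hne 0 m m' q hq q' hq' (by rw [hz, add_zero]; exact he.symm)).1
    _ ≤ V := by
        refine hVs _ (MeasurableSet.iUnion him) fun x hx y hy l he => ?_
        obtain ⟨m, q, hq, rfl⟩ := Set.mem_iUnion.1 hx
        obtain ⟨m', q', hq', rfl⟩ := Set.mem_iUnion.1 hy
        exact (hne l m m' q hq q' hq' he).2

open Classical in
lemma visit_null (h : Std H φ u) {B : Set (Euc d)} (hB : MeasurableSet B) (hper : ∀ k q, q + intVec k ∈ B ↔ q ∈ B) :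
    ∀ᵐ q, DifferentiableAt ℝ (gradient u) q → q ∈ B → (∃ᶠ n : ℕ in atTop, psi φ u (-(n:ℝ)) q ∈ B) →
      ¬ ∀ M : NNReal, ∀ᶠ n : ℕ in atTop, psi φ u (-(n:ℝ)) q ∈ B → (M:ℝ) ≤ |(fderiv ℝ (psi φ u (-(n:ℝ))) q).det| := by
  obtain ⟨V, hV, hsum⟩ := visit_sum h hB hper
  have hJ : ∀ m : ℕ, Measurable fun q => ENNReal.ofReal |(fderiv ℝ (psi φ u (-(m:ℝ))) q).det| := fun m =>
    ENNReal.measurable_ofReal.comp (continuous_abs.measurable.comp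
      (ContinuousLinearMap.continuous_det.measurable.comp (measurable_fderiv ℝ _)))
  have hloc : ∀ c : Euc d, ∀ᵐ q, q ∈ ball c (1/3) → DifferentiableAt ℝ (gradient u) q → q ∈ B →
      (∃ᶠ n : ℕ in atTop, psi φ u (-(n:ℝ)) q ∈ B) →
      ¬ ∀ M : NNReal, ∀ᶠ n : ℕ in atTop, psi φ u (-(n:ℝ)) q ∈ B → (M:ℝ) ≤ |(fderiv ℝ (psi φ u (-(n:ℝ))) q).det| := by
    intro c
    set g : ℕ → Euc d → ENNReal := fun k q => ∑' m : ℕ, (visit φ u B c k m).indicator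
      (fun q => ENNReal.ofReal |(fderiv ℝ (psi φ u (-(m:ℝ))) q).det|) q
    have hgm : ∀ k, Measurable (g k) := fun k =>
      Measurable.ennreal_tsum fun m => (hJ m).indicator (visit_meas h hB c k m)
    have hgi : ∀ k, ∫⁻ q, g k q ≤ V := fun k => by
      rw [lintegral_tsum fun m => ((hJ m).indicator (visit_meas h hB c k m)).aemeasurable]
      simp only [lintegral_indicator (visit_meas h hB c k _)]
      exact hsum c k
    have hlim : ∫⁻ q, liminf (fun k => g k q) atTop ≤ V :=
      (lintegral_liminf_le hgm).trans (liminf_le_of_le (by isBoundedDefault) fun b hb => by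
        obtain ⟨k, hk⟩ := hb.exists
        exact hk.trans (hgi k))
    have hfin := ae_lt_top (Measurable.liminf hgm) (hlim.trans_lt hV).ne
    filter_upwards [hfin] with q hq hqc hqd hqB hfr hM
    refine absurd hq (not_lt.2 (top_le_iff.2 (ENNReal.eq_top_of_forall_nnreal_le fun M => ?_)))
    obtain ⟨n0, hn0⟩ := eventually_atTop.1 (hM M)
    refine le_liminf_of_le (by isBoundedDefault) ?_
    filter_upwards [eventually_ge_atTop n0] with k hk
    set p : ℕ → Prop := fun j => psi φ u (-(j:ℝ)) q ∈ B
    have hinf : (setOf p).Infinite := Nat.frequently_atTop_iff_infinite.1 hfr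
    set m := Nat.nth p k
    have hpm : p m := Nat.nth_mem_of_infinite hinf k
    have hcm : Nat.count p m = k := Nat.count_nth_of_infinite hinf k
    have hmk : n0 ≤ m := hk.trans (hcm ▸ Nat.count_le _)
    have hqv : q ∈ visit φ u B c k m := ⟨hqc, hqd, hqB, hpm, hcm⟩
    refine le_trans ?_ (ENNReal.le_tsum m)
    rw [indicator_of_mem hqv]
    rw [← ENNReal.ofReal_coe_nnreal]
    exact ENNReal.ofReal_le_ofReal (hn0 m hmk hpm)
  refine measure_null_of_locally_null _ fun c _ => ⟨_, ?_, hloc c⟩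
  have : ball c (1/3) ∈ nhds c := ball_mem_nhds _ (by norm_num)
  filter_upwards [mem_nhdsWithin_of_mem_nhds this, self_mem_nhdsWithin] with q hq1 hq2 hq3
  exact hq2 (hq3 hq1)

end KAM

namespace KAM

section
variable {d : ℕ} {H : Phase d → ℝ} {u : Euc d → ℝ} {φ : ℝ → Phase d → Phase d}

lemma annulus (h : Std H φ u) {z : Euc d} {ρ : ℝ} (hiso : ∀ y ∈ ball z ρ, vX H u y = 0 → y = z) {r1 r : ℝ}
    (h1 : r1 < ρ) (hr : 0 < r) : ∃ δ > 0, ∀ y ∈ closedBall z r1, ‖vX H u y‖ < δ → y ∈ ball z r := by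
  have hK : IsCompact (closedBall z r1 \ ball z r) := (isCompact_closedBall z r1).diff isOpen_ball
  rcases (closedBall z r1 \ ball z r).eq_empty_or_nonempty with he | hne
  · refine ⟨1, one_pos, fun y hy _ => ?_⟩
    by_contra hn
    exact (he ▸ (show y ∈ closedBall z r1 \ ball z r from ⟨hy, hn⟩) : y ∈ (∅ : Set (Euc d)))
  · obtain ⟨y0, hy0, hmin⟩ := hK.exists_isMinOn hne (vX_cont h).norm.continuousOn
    refine ⟨‖vX H u y0‖, norm_pos_iff.2 fun h0 => ?_, fun y hy hlt => ?_⟩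
    · have := hiso y0 (closedBall_subset_ball h1 hy0.1) h0
      exact hy0.2 (this ▸ mem_ball_self hr)
    · by_contra hn
      exact absurd (hmin (show y ∈ closedBall z r1 \ ball z r from ⟨hy, hn⟩)) (not_le.2 hlt)

lemma trap (h : Std H φ u) (hcrit : ∀ θ : Euc d, hamVF H 0 (θ, gradient u θ) = 0 →
      IsHyperbolicFixedPt φ (θ, gradient u θ)) {q : Euc d}
    (hq : Tendsto (fun n : ℕ => vX H u (psi φ u (-(n:ℝ)) q)) atTop (nhds 0)) :
    ∃ z, vX H u z = 0 ∧ ∀ r > 0, ∃ n0 : ℕ, ∀ n ≥ n0, psi φ u (-(n:ℝ)) q ∈ ball z r := by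
  choose k hk using fun n : ℕ => per_reduce (psi φ u (-(n:ℝ)) q)
  obtain ⟨z, -, σ, hσ, hz⟩ := (isCompact_closedBall (0 : Euc d) d).tendsto_subseq
    (x := fun n => psi φ u (-(n:ℝ)) q + intVec (k n)) fun n => by simpa using hk n
  have hz0 : vX H u z = 0 := by
    have h1 := ((vX_cont h).tendsto z).comp hz
    have h2 := hq.comp hσ.tendsto_atTop
    refine tendsto_nhds_unique h1 (h2.congr fun n => ?_)
    exact (vX_per h (k (σ n)) _).symm
  obtain ⟨ρ, hρ, hiso⟩ := zero_isolated h hcrit hz0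
  obtain ⟨r', hr', hb⟩ := Metric.continuousAt_iff.1 ((psi_cont h (-1)).continuousAt (x := z)) (ρ/2) (by linarith)
  rw [psi_fix h hz0] at hb
  obtain ⟨δ, hδ, hann⟩ := annulus h hiso (r1 := ρ/2) (by linarith) (lt_min hr' (show 0 < ρ/2 by linarith))
  have hsmall : ∀ δ > 0, ∀ᶠ n : ℕ in atTop, ‖vX H u (psi φ u (-(n:ℝ)) q)‖ < δ := fun δ hδ => by
    have := hq.norm; rw [norm_zero] at this
    exact this.eventually (gt_mem_nhds hδ)
  obtain ⟨n1, hn1⟩ := eventually_atTop.1 (hsmall δ hδ)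
  obtain ⟨j, hj, hj1⟩ := ((hz.eventually (ball_mem_nhds z (lt_min hr' (show 0 < ρ/2 by linarith)))).and
    (hσ.tendsto_atTop.eventually_ge_atTop n1)).exists
  set n2 := σ j
  set l := k n2
  set q' := q + intVec l
  have hq' : ∀ n : ℕ, psi φ u (-(n:ℝ)) q' = psi φ u (-(n:ℝ)) q + intVec l := fun n => psi_per h _ _ _
  have hX' : ∀ n : ℕ, vX H u (psi φ u (-(n:ℝ)) q') = vX H u (psi φ u (-(n:ℝ)) q) := fun n => by
    rw [hq']; exact vX_per h _ _
  have hstay : ∀ n ≥ n2, psi φ u (-(n:ℝ)) q' ∈ ball z (min r' (ρ/2)) := by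
    intro n hn
    induction n, hn using Nat.le_induction with
    | base => rw [hq']; exact hj
    | succ n hn ih =>
      apply hann
      · have e : psi φ u (-((n+1 : ℕ):ℝ)) q' = psi φ u (-1) (psi φ u (-(n:ℝ)) q') := by
          rw [psi_add h]; congr 1; push_cast; ring
        rw [e]
        exact (hb ((mem_ball.1 ih).trans_le (min_le_left _ _))).le
      · rw [hX']; exact hn1 _ (by omega)
  have hn : intVec (-l) = -intVec l := by ext i; simp [intVec]
  refine ⟨z + intVec (-l), by rw [← hz0]; exact vX_per h _ _, fun r hr => ?_⟩
  obtain ⟨δ', hδ', hann'⟩ := annulus h hiso (r1 := ρ/2) (by linarith) hr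
  obtain ⟨n3, hn3⟩ := eventually_atTop.1 (hsmall δ' hδ')
  refine ⟨max n2 n3, fun n hn' => ?_⟩
  have hm := hann' _ (ball_subset_closedBall (ball_subset_ball (min_le_right _ _) (hstay n (le_of_max_le_left hn'))))
    (by rw [hX']; exact hn3 n (le_of_max_le_right hn'))
  rw [hq', mem_ball, dist_eq_norm] at hm
  rw [mem_ball, dist_eq_norm, hn]
  convert hm using 2
  abel

lemma deriv_bdd (h : Std H φ u) (hcrit : ∀ θ : Euc d, hamVF H 0 (θ, gradient u θ) = 0 →
      IsHyperbolicFixedPt φ (θ, gradient u θ)) {z : Euc d} (hz : vX H u z = 0) :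
    ∃ r > 0, ∀ n0 : ℕ, ∀ᵐ q, DifferentiableAt ℝ (gradient u) q → (∀ n ≥ n0, psi φ u (-(n:ℝ)) q ∈ ball z r) →
      ∃ C : ℝ, ∃ᶠ n : ℕ in atTop, ‖fderiv ℝ (psi φ u (-(n:ℝ))) q‖ ≤ C := by
  obtain ⟨N, hN, r, hr, C, hC, hm⟩ := hyp_psi h hcrit hz
  refine ⟨r, hr, fun n0 => ?_⟩
  obtain ⟨K, hK⟩ := psi_lip h
  set K0 : NNReal := (Real.exp (K * |(-(n0:ℝ))|)).toNNReal
  set s : Set (Euc d) := {q | DifferentiableAt ℝ (gradient u) q} ∩ ⋂ n : ℕ, psi φ u (-((n0 + n : ℕ):ℝ)) ⁻¹' ball z r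
  have hs : MeasurableSet s := (measurableSet_of_differentiableAt ℝ _).inter
    (MeasurableSet.iInter fun n => (psi_cont h _).measurable measurableSet_ball)
  have hs2 : ∀ x ∈ s, ∀ k : ℕ, psi φ u (-((k * N : ℕ):ℝ)) (psi φ u (-(n0:ℝ)) x) ∈ ball z r := fun x hx k => by
    have := Set.mem_iInter.1 hx.2 (k * N)
    rw [psi_add h]
    convert (show psi φ u (-((n0 + k * N : ℕ):ℝ)) x ∈ ball z r from this) using 2
    push_cast; ring
  have hap : ∀ k : ℕ, ApproximatesLinearOn (psi φ u (-((n0 + k * N : ℕ):ℝ))) (0 : Euc d →L[ℝ] Euc d) s (C.toNNReal * K0) := by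
    intro k x hx y hy
    have e : ∀ x, psi φ u (-((n0 + k * N : ℕ):ℝ)) x = psi φ u (-((k * N : ℕ):ℝ)) (psi φ u (-(n0:ℝ)) x) := fun x => by
      rw [psi_add h]; congr 1; push_cast; ring
    rw [zero_apply, sub_zero, e, e]
    refine (hm _ _ (hs2 x hx) (hs2 y hy) k).trans ?_
    have h1 := (hK (-(n0:ℝ))).dist_le_mul x y
    rw [dist_eq_norm, dist_eq_norm] at h1
    have h2 : (3/4:ℝ)^k ≤ 1 := pow_le_one₀ (by norm_num) (by norm_num)
    rw [NNReal.coe_mul, Real.coe_toNNReal _ hC]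
    calc C * (3/4)^k * _ ≤ C * 1 * (K0 * ‖x - y‖) := by gcongr
      _ = _ := by ring
  have hae : ∀ᵐ q ∂(volume.restrict s), ∀ k : ℕ, ‖fderiv ℝ (psi φ u (-((n0 + k * N : ℕ):ℝ))) q - 0‖₊ ≤ C.toNNReal * K0 := by
    rw [ae_all_iff]
    intro k
    exact (hap k).norm_fderiv_sub_le volume hs _ fun x hx => (psi_hasFDeriv h hx.1 _).hasFDerivAt.hasFDerivWithinAt
  rw [ae_restrict_iff' hs] at hae
  filter_upwards [hae] with q hq hqd hqs
  have := hq ⟨hqd, Set.mem_iInter.2 fun n => hqs (n0 + n) (by omega)⟩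
  refine ⟨(C.toNNReal * K0 : NNReal), frequently_atTop.2 fun m => ⟨n0 + m * N, ?_, ?_⟩⟩
  · nlinarith
  · have := this m
    rw [sub_zero] at this
    exact_mod_cast this

lemma psi_vX (h : Std H φ u) {q : Euc d} {s : ℝ} (hd : DifferentiableAt ℝ (psi φ u s) q) :
    fderiv ℝ (psi φ u s) q (vX H u q) = vX H u (psi φ u s q) := by
  have h1 := psi_deriv h q 0
  rw [psi_zero h] at h1
  have h2 : HasFDerivAt (psi φ u s) (fderiv ℝ (psi φ u s) q) (psi φ u 0 q) := by
    rw [psi_zero h]; exact hd.hasFDerivAt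
  have h3 := h2.comp_hasDerivAt 0 h1
  have h4 := psi_deriv h (psi φ u s q) 0
  rw [psi_zero h] at h4
  refine h3.unique (h4.congr_of_eventuallyEq (Eventually.of_forall fun t => ?_))
  simp only [Function.comp_apply]
  rw [psi_add h, psi_add h, add_comm]

end

lemma planar {w x y : Euc 2} {Ψ : Euc 2 →L[ℝ] Euc 2} (hy : ∀ v, ⟪y, Ψ v⟫ = ⟪w, v⟫) (hx : ⟪w, x⟫ = 0) :
    ‖w‖ * ‖Ψ x‖ = ‖y‖ * ‖x‖ * |Ψ.det| := by
  set b := (EuclideanSpace.basisFun (Fin 2) ℝ).toBasis with hb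
  have hdet : Ψ.det = (Ψ (b 0)) 0 * (Ψ (b 1)) 1 - (Ψ (b 1)) 0 * (Ψ (b 0)) 1 := by
    rw [ContinuousLinearMap.det, ← LinearMap.det_toMatrix b, Matrix.det_fin_two]
    simp [LinearMap.toMatrix_apply, hb]
  have hxe : x = x 0 • b 0 + x 1 • b 1 := by
    have := b.sum_repr x
    rw [Fin.sum_univ_two] at this
    simpa [hb] using this.symm
  have hΨx : Ψ x = x 0 • Ψ (b 0) + x 1 • Ψ (b 1) := by
    conv_lhs => rw [hxe]
    simp
  have h0 := hy (b 0)
  have h1 := hy (b 1)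
  set p := Ψ (b 0)
  set r := Ψ (b 1)
  simp only [PiLp.inner_apply, Fin.sum_univ_two, hb] at h0 h1 hx
  simp at h0 h1 hx
  have hn : ∀ v : Euc 2, ‖v‖ ^ 2 = v 0 ^ 2 + v 1 ^ 2 := fun v => by
    rw [EuclideanSpace.norm_sq_eq, Fin.sum_univ_two]; simp
  have key : (‖w‖ * ‖Ψ x‖) ^ 2 = (‖y‖ * ‖x‖ * |Ψ.det|) ^ 2 := by
    rw [mul_pow, mul_pow, mul_pow, sq_abs, hn, hn, hn, hn, hdet, hΨx]
    simp only [PiLp.add_apply, PiLp.smul_apply, smul_eq_mul]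
    have f0 : y 0 * p 0 + y 1 * p 1 = w 0 := by linarith
    have f1 : y 0 * r 0 + y 1 * r 1 = w 1 := by linarith
    have f2 : w 0 * x 0 + w 1 * x 1 = 0 := by linarith
    set D := p 0 * r 1 - r 0 * p 1 with hD
    have g1 : w 0 * (x 0 * p 0 + x 1 * r 0) = -(x 1 * y 1 * D) := by
      rw [hD]; linear_combination p 0 * f2 - x 1 * r 0 * f0 + x 1 * p 0 * f1
    have g2 : w 1 * (x 0 * p 0 + x 1 * r 0) = x 0 * y 1 * D := by
      rw [hD]; linear_combination r 0 * f2 + x 0 * r 0 * f0 - x 0 * p 0 * f1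
    have g3 : w 0 * (x 0 * p 1 + x 1 * r 1) = x 1 * y 0 * D := by
      rw [hD]; linear_combination p 1 * f2 - x 1 * r 1 * f0 + x 1 * p 1 * f1
    have g4 : w 1 * (x 0 * p 1 + x 1 * r 1) = -(x 0 * y 0 * D) := by
      rw [hD]; linear_combination r 1 * f2 + x 0 * r 1 * f0 - x 0 * p 1 * f1
    calc _ = (w 0 * (x 0 * p 0 + x 1 * r 0))^2 + (w 1 * (x 0 * p 0 + x 1 * r 0))^2
          + (w 0 * (x 0 * p 1 + x 1 * r 1))^2 + (w 1 * (x 0 * p 1 + x 1 * r 1))^2 := by ring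
      _ = _ := by rw [g1, g2, g3, g4]; ring
  exact (pow_left_inj₀ (by positivity) (by positivity) two_ne_zero).1 key

end KAM

namespace KAM

lemma good_ae {H : Phase 2 → ℝ} {u : Euc 2 → ℝ} {φ : ℝ → Phase 2 → Phase 2} (h : Std H φ u)
    (hcrit : ∀ θ : Euc 2, hamVF H 0 (θ, gradient u θ) = 0 → IsHyperbolicFixedPt φ (θ, gradient u θ)) :
    ∀ᵐ q, DifferentiableAt ℝ (gradient u) q ∧ ∀ w ≠ 0, ∀ y : ℕ → Euc 2,
      (∀ n v, ⟪y n, fderiv ℝ (psi φ u (-(n:ℝ))) q v⟫ = ⟪w, v⟫) → ¬ Tendsto y atTop (nhds 0) := by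
  set B : ℕ → Set (Euc 2) := fun j => {q | 1 / ((j:ℝ) + 1) ≤ ‖vX H u q‖}
  have hB : ∀ j, MeasurableSet (B j) := fun j =>
    (isClosed_le continuous_const (vX_cont h).norm).measurableSet
  have hBp : ∀ j k q, q + intVec k ∈ B j ↔ q ∈ B j := fun j k q => by
    change 1 / ((j:ℝ) + 1) ≤ ‖vX H u (q + intVec k)‖ ↔ 1 / ((j:ℝ) + 1) ≤ ‖vX H u q‖
    rw [vX_per h]
  have hv := ae_all_iff.2 fun j => visit_null h (hB j) (hBp j)
  choose! r hr hrd using fun (z : Euc 2) (hz : vX H u z = 0) => deriv_bdd h hcrit hz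
  have hz := (ae_ball_iff (zero_countable h hcrit)).2 fun z hz => ae_all_iff.2 (hrd z hz)
  obtain ⟨Xm, hXm0, hXm⟩ := per_bound (vX_cont h) (vX_per h)
  filter_upwards [diff_ae h, hv, hz] with q hqd hqv hqz
  refine ⟨hqd, fun w hw y hy hy0 => ?_⟩
  have hyn : Tendsto (fun n => ‖y n‖) atTop (nhds 0) := by simpa using hy0.norm
  have hwp : 0 < ‖w‖ := norm_pos_iff.2 hw
  have hsm : ∀ c ≥ (0:ℝ), ∀ e > (0:ℝ), ∀ᶠ n in atTop, ‖y n‖ * c < e := fun c _ e he => by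
    have := hyn.mul_const c
    rw [zero_mul] at this
    exact this.eventually (gt_mem_nhds he)
  by_cases hT : Tendsto (fun n : ℕ => vX H u (psi φ u (-(n:ℝ)) q)) atTop (nhds 0)
  · obtain ⟨z, hz0, htr⟩ := trap h hcrit hT
    obtain ⟨n0, hn0⟩ := htr (r z) (hr z hz0)
    obtain ⟨C, hC⟩ := hqz z hz0 n0 hqd hn0
    obtain ⟨n, hn1, hn2⟩ := (hC.and_eventually (hsm (|C| * ‖w‖) (by positivity) (‖w‖^2) (by positivity))).exists
    have h1 := hy n w
    rw [real_inner_self_eq_norm_sq] at h1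
    have h2 := real_inner_le_norm (y n) (fderiv ℝ (psi φ u (-(n:ℝ))) q w)
    have h3 : ‖fderiv ℝ (psi φ u (-(n:ℝ))) q w‖ ≤ |C| * ‖w‖ :=
      (ContinuousLinearMap.le_opNorm _ _).trans (by gcongr; exact hn1.trans (le_abs_self C))
    have h4 := mul_le_mul_of_nonneg_left h3 (norm_nonneg (y n))
    linarith
  · have hX0 : vX H u q ≠ 0 := fun h0 => hT (by simp only [psi_fix h h0, h0]; exact tendsto_const_nhds)
    obtain ⟨ε, hε, hfr⟩ : ∃ ε > 0, ∃ᶠ n : ℕ in atTop, ε ≤ ‖vX H u (psi φ u (-(n:ℝ)) q)‖ := by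
      by_contra! hcon
      refine hT (tendsto_zero_iff_norm_tendsto_zero.2 (Metric.tendsto_nhds.2 fun ε hε => ?_))
      have := hcon ε hε
      filter_upwards [this] with n hn
      simpa using hn
    obtain ⟨j, hj⟩ := exists_nat_one_div_lt (lt_min hε (norm_pos_iff.2 hX0))
    have hperp : ⟪w, vX H u q⟫ = 0 := by
      have h1 : ∀ n, |⟪w, vX H u q⟫| ≤ ‖y n‖ * Xm := fun n => by
        rw [← hy n, psi_vX h (psi_hasFDeriv h hqd _)]
        exact (abs_real_inner_le_norm _ _).trans (by gcongr; exact hXm _)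
      have h2 := hyn.mul_const Xm
      rw [zero_mul] at h2
      exact abs_nonpos_iff.1 (ge_of_tendsto' h2 h1)
    refine hqv j hqd (hj.le.trans (min_le_right _ _)) (hfr.mono fun n hn => (hj.le.trans (min_le_left _ _)).trans hn) ?_
    intro M
    filter_upwards [hsm (‖vX H u q‖ * M) (by positivity) (‖w‖ * (1 / ((j:ℝ) + 1))) (by positivity)] with n hn hnB
    by_contra! hlt
    have hp := planar (hy n) hperp
    rw [psi_vX h (psi_hasFDeriv h hqd _)] at hp
    have h1 : ‖w‖ * (1 / ((j:ℝ) + 1)) ≤ ‖w‖ * ‖vX H u (psi φ u (-(n:ℝ)) q)‖ :=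
      mul_le_mul_of_nonneg_left hnB hwp.le
    have h2 : ‖y n‖ * ‖vX H u q‖ * |(fderiv ℝ (psi φ u (-(n:ℝ))) q).det| ≤ ‖y n‖ * ‖vX H u q‖ * M := by gcongr
    nlinarith

end KAM

/-- **Proposition (two degrees of freedom).** Let `H` be a Tonelli Hamiltonian on `T^*𝕋²`
with a `C¹` weak K.A.M. solution `u` such that all the critical points of `H` contained in
the graph of `du` are hyperbolic fixed points of the Hamiltonian flow.  Then `u` is upper
Green regular. -/
theorem stmt_19 (H : Phase 2 → ℝ) (hH : TonelliHam H)
    (φ : ℝ → Phase 2 → Phase 2) (hφ : IsConformalFlow H 0 φ)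
    (u : Euc 2 → ℝ) (hu1 : ContDiff ℝ 1 u) (hup : PerFun u) (hKAM : IsWeakKAM H u)
    (hcrit : ∀ θ : Euc 2, hamVF H 0 (θ, gradient u θ) = 0 →
      IsHyperbolicFixedPt φ (θ, gradient u θ)) :
    UpperGreenRegular φ u := by
  have h : KAM.Std H φ u := ⟨hH, hφ, hu1, hup, hKAM⟩
  filter_upwards [KAM.good_ae h hcrit] with q hq
  have hA := hq.1.hasFDerivAt
  have hg := KAM.green h hA hq.2
  have ha := KAM.alexandrov hu1 hA
  exact ⟨gradient u q, _, ha.1, hg.1, hg.2, ha⟩
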